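/- arXiv:1812.05192 — 4 statements merged into one kernel-verified Lean document; each statement's English description precedes it below -/
import Mathlib

section
/- For a finite group G and a divisor m of |G|, the number of elements x in G satisfying x^m = 1 is divisible by m (Frobenius' theorem). -/
open Finset in
theorem frob_fib {α β : Type*} [DecidableEq β] (s : Finset α) (f : α → β) (d : ℕ)
    (h : ∀ x ∈ s, d ∣ #{z ∈ s | f z = f x}) : d ∣ #s := by
  classical
  rw [Finset.card_eq_sum_card_image f s]
  refine Finset.dvd_sum fun b hb => ?_
  obtain ⟨x, hx, rfl⟩ := Finset.mem_image.1 hb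
  exact h x hx

/-- Solutions of `x ^ r = 1` correspond modulo a central cyclic subgroup of coprime order. -/
theorem frob_quot {C : Type*} [Group C] [Finite C] (y : C) (hy : y ∈ Subgroup.center C) (r : ℕ)
    (co : (orderOf y).Coprime r) [(Subgroup.zpowers y).Normal] :
    Nat.card {z : C // z ^ r = 1} = Nat.card {h : C ⧸ Subgroup.zpowers y // h ^ r = 1} := by
  refine Nat.card_congr (Equiv.ofBijective
    (fun z => ⟨(z.1 : C ⧸ Subgroup.zpowers y), by rw [← QuotientGroup.mk_pow, z.2]; rfl⟩) ⟨?_, ?_⟩)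
  · rintro ⟨a, ha⟩ ⟨b, hb⟩ h
    simp only [Subtype.mk.injEq] at h ⊢
    rw [QuotientGroup.eq] at h
    have hc : a⁻¹ * b ∈ Subgroup.center C := (Subgroup.zpowers_le.2 hy) h
    have hcomm : Commute a (a⁻¹ * b) := (Subgroup.mem_center_iff.1 hc a)
    have h1 : (a⁻¹ * b) ^ r = 1 := by
      have := hcomm.mul_pow r
      rw [mul_inv_cancel_left, ha, hb, one_mul] at this
      exact this.symm
    have h2 : (a⁻¹ * b) ^ orderOf y = 1 := by
      obtain ⟨k, hk⟩ := h
      simp only at hk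
      rw [← hk, ← zpow_natCast, ← zpow_mul, mul_comm, zpow_mul, zpow_natCast, pow_orderOf_eq_one,
        one_zpow]
    have h3 : a⁻¹ * b = 1 := by
      have := Nat.dvd_gcd (orderOf_dvd_of_pow_eq_one h2) (orderOf_dvd_of_pow_eq_one h1)
      rw [co] at this
      exact orderOf_eq_one_iff.1 (Nat.dvd_one.1 this)
    exact (inv_mul_eq_one.1 h3)
  · rintro ⟨h, hh⟩
    obtain ⟨c, rfl⟩ := QuotientGroup.mk_surjective h
    obtain ⟨s, hs1, hs2⟩ := Nat.chineseRemainder co 0 1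
    rw [← QuotientGroup.mk_pow, QuotientGroup.eq_one_iff] at hh
    refine ⟨⟨c ^ s, ?_⟩, ?_⟩
    · obtain ⟨k, hk⟩ := hh
      simp only at hk
      obtain ⟨t, ht⟩ := (Nat.modEq_zero_iff_dvd.1 hs1)
      rw [← pow_mul, mul_comm, pow_mul, ← hk, ← zpow_natCast, ← zpow_mul, mul_comm, zpow_mul,
        zpow_natCast, ht, pow_mul, pow_orderOf_eq_one, one_pow, one_zpow]
    · ext
      simp only [QuotientGroup.mk_pow]
      have h1 : ((c : C ⧸ Subgroup.zpowers y)) ^ r = 1 := by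
        rw [← QuotientGroup.mk_pow, QuotientGroup.eq_one_iff]; exact hh
      have := pow_eq_pow_iff_modEq.2 (hs2.of_dvd (orderOf_dvd_of_pow_eq_one h1))
      rw [this, pow_one]

theorem frob_gcd {H : Type*} [Group H] [Finite H] (r : ℕ) :
    Nat.card {z : H // z ^ r = 1} = Nat.card {z : H // z ^ (r.gcd (Nat.card H)) = 1} := by
  refine Nat.card_congr (Equiv.subtypeEquivRight fun z => ?_)
  rw [← orderOf_dvd_iff_pow_eq_one, ← orderOf_dvd_iff_pow_eq_one, Nat.dvd_gcd_iff]
  simp [orderOf_dvd_natCard z]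

open Finset in
theorem frob_class {G : Type*} [Group G] [Fintype G] [DecidableEq G] (y : G) :
    #{z : G | ConjClasses.mk z = ConjClasses.mk y} * Nat.card (Subgroup.centralizer {y})
      = Nat.card G := by
  classical
  have := MulAction.card_orbit_mul_card_stabilizer_eq_card_group (ConjAct G) y
  rw [Subgroup.nat_card_centralizer_nat_card_stabilizer, Nat.card_eq_fintype_card,
    Nat.card_eq_fintype_card, ← ConjAct.card (G := G), ← this, ← Set.toFinset_card]
  refine congrArg₂ (· * ·) (congrArg Finset.card ?_) (Fintype.card_congr (Equiv.refl _))
  ext z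
  simp [ConjAct.mem_orbit_conjAct, ConjClasses.mk_eq_mk_iff_isConj]

open Finset Classical in
theorem frob_gen {G : Type*} [Group G] [Fintype G] (x : G) :
    #{z : G | Subgroup.zpowers z = Subgroup.zpowers x} = (orderOf x).totient := by
  classical
  rw [← IsCyclic.card_orderOf_eq_totient (α := Subgroup.zpowers x) (d := orderOf x)
    (by rw [Fintype.card_zpowers])]
  symm
  refine Finset.card_bij (fun z _ => z.1) ?_ ?_ ?_
  · intro z hz
    simp only [mem_filter, mem_univ, true_and] at hz ⊢
    apply Subgroup.eq_of_le_of_card_ge (Subgroup.zpowers_le.2 z.2)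
    rw [Nat.card_zpowers, Nat.card_zpowers, Subgroup.orderOf_coe, hz]
  · intro a _ b _ h
    exact Subtype.ext h
  · intro b hb
    simp only [mem_filter, mem_univ, true_and] at hb
    refine ⟨⟨b, hb ▸ Subgroup.mem_zpowers b⟩, ?_, rfl⟩
    simp only [mem_filter, mem_univ, true_and, Subgroup.orderOf_mk]
    rw [← Nat.card_zpowers, hb, Nat.card_zpowers]

open Finset in
/-- The `p`-part of the divisibility. -/
theorem frob_p {G : Type*} [Group G] [Fintype G] [DecidableEq G] (p a r : ℕ) (hp : p.Prime)
    (hr : p.Coprime r) :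
    p ^ a ∣ #{x : G | x ^ (p ^ (a+1) * r) = 1 ∧ x ^ (p ^ a * r) ≠ 1} := by
  classical
  refine frob_fib _ (fun x => Subgroup.zpowers x) _ fun x hx => ?_
  have key : ∀ n : ℕ, ∀ z w : G, Subgroup.zpowers z = Subgroup.zpowers w →
      (z ^ n = 1 ↔ w ^ n = 1) := by
    intro n z w h
    rw [← orderOf_dvd_iff_pow_eq_one, ← orderOf_dvd_iff_pow_eq_one, ← Nat.card_zpowers, h,
      Nat.card_zpowers]
  simp only [mem_filter, mem_univ, true_and] at hx
  have : ({z ∈ ({x : G | x ^ (p ^ (a+1) * r) = 1 ∧ x ^ (p ^ a * r) ≠ 1} : Finset G) |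
      Subgroup.zpowers z = Subgroup.zpowers x}) =
      ({z : G | Subgroup.zpowers z = Subgroup.zpowers x} : Finset G) := by
    ext z
    simp only [mem_filter, mem_univ, true_and, and_iff_right_iff_imp]
    intro h
    rw [key _ _ _ h, Ne, key _ _ _ h]
    exact hx
  rw [this, frob_gen]
  have hd : p ^ (a+1) ∣ orderOf x := by
    obtain ⟨h1, h2⟩ := hx
    rw [← orderOf_dvd_iff_pow_eq_one] at h1
    rw [Ne, ← orderOf_dvd_iff_pow_eq_one] at h2
    obtain ⟨u, v, hu, hv, huv⟩ := exists_dvd_and_dvd_of_dvd_mul h1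
    obtain ⟨k, hk, rfl⟩ := (Nat.dvd_prime_pow hp).1 hu
    rcases Nat.lt_or_ge k (a+1) with hlt | hge
    · exfalso
      apply h2
      rw [huv]
      exact mul_dvd_mul (pow_dvd_pow _ (by omega)) hv
    · rw [huv]
      exact (pow_dvd_pow _ hge).mul_right _
  have := Nat.totient_dvd_of_dvd hd
  rw [Nat.totient_prime_pow_succ hp] at this
  exact (Dvd.intro _ rfl).trans this

open Finset in
theorem frob_r {G : Type*} [Group G] [Fintype G] [DecidableEq G] (p a r : ℕ) (hp : p.Prime)
    (hr : p.Coprime r) (hdvd : r ∣ Nat.card G)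
    (hF : ∀ y : G, orderOf y = p ^ (a+1) →
      r.gcd (Nat.card (Subgroup.centralizer {y})) ∣ 
        Nat.card {z : Subgroup.centralizer {y} // z ^ r = 1}) :
    r ∣ #{x : G | x ^ (p ^ (a+1) * r) = 1 ∧ x ^ (p ^ a * r) ≠ 1} := by
  classical
  have co : (p ^ (a+1)).Coprime r := hr.pow_left _
  obtain ⟨e, he1, he2⟩ := Nat.chineseRemainder co 1 0
  have he2 := Nat.modEq_zero_iff_dvd.1 he2
  set S : Finset G := {x : G | x ^ (p ^ (a+1) * r) = 1 ∧ x ^ (p ^ a * r) ≠ 1} with hS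
  have hord : ∀ x ∈ S, orderOf (x ^ e) = p ^ (a+1) := by
    intro x hx
    simp only [hS, mem_filter, mem_univ, true_and] at hx
    have : Fact p.Prime := ⟨hp⟩
    refine orderOf_eq_prime_pow ?_ ?_
    · intro h
      apply hx.2
      have h1 : x ^ (p ^ a * r * e) = 1 := by
        rw [show p ^ a * r * e = e * p ^ a * r by ring, pow_mul, pow_mul, h, one_pow]
      have h2 : p ^ a * r * e ≡ p ^ a * r * 1 [MOD p ^ (a+1) * r] := by
        refine (he1.mul_left' (p ^ a * r)).of_dvd ⟨p ^ a, by ring⟩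
      have := pow_eq_pow_iff_modEq.2 (h2.of_dvd (orderOf_dvd_of_pow_eq_one hx.1))
      rw [mul_one] at this
      rw [← this, h1]
    · obtain ⟨t, rfl⟩ := he2
      rw [← pow_mul, show r * t * p ^ (a+1) = p ^ (a+1) * r * t by ring, pow_mul, hx.1, one_pow]
  -- the fibre over a single `y`
  have hfib : ∀ y : G, orderOf y = p ^ (a+1) →
      #{x ∈ S | x ^ e = y} = Nat.card {z : Subgroup.centralizer {y} // z ^ r = 1} := by
    intro y hy
    have hye : y ^ e = y := by
      have := pow_eq_pow_iff_modEq.2 (hy ▸ he1 : e ≡ 1 [MOD orderOf y])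
      rw [this, pow_one]
    rw [Nat.card_eq_fintype_card, ← Finset.card_univ]
    symm
    refine Finset.card_bij (fun z _ => z.1.1 * y) ?_ ?_ ?_
    · rintro ⟨⟨z, hz⟩, hzr⟩ -
      have hc : Commute z y := Subgroup.mem_centralizer_singleton_iff.1 hz
      have hzr : z ^ r = 1 := congrArg Subtype.val hzr
      simp only [hS, mem_filter, mem_univ, true_and, hc.mul_pow]
      have hz1 : ∀ t, z ^ (t * r) = 1 := fun t => by rw [mul_comm, pow_mul, hzr, one_pow]
      rw [hz1, hz1, hye]
      obtain ⟨t, ht⟩ := he2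
      have hze : z ^ e = 1 := by rw [ht, mul_comm, hz1]
      rw [hze, one_mul, one_mul, one_mul]
      refine ⟨⟨by rw [pow_mul, ← hy, pow_orderOf_eq_one, one_pow], fun h => ?_⟩, rfl⟩
      have h1 := orderOf_dvd_of_pow_eq_one h
      rw [hy] at h1
      have h2 := (Nat.pow_dvd_pow_iff_le_right hp.one_lt).1 (co.dvd_of_dvd_mul_right h1)
      omega
    · rintro ⟨⟨z, hz⟩, hzr⟩ - ⟨⟨w, hw⟩, hwr⟩ - h
      simpa using h
    · intro x hx
      simp only [hS, mem_filter, mem_univ, true_and] at hx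
      have hc : Commute x y := by rw [← hx.2]; exact (Commute.refl x).pow_right e
      have hz : x * y⁻¹ ∈ Subgroup.centralizer {y} :=
        Subgroup.mem_centralizer_singleton_iff.2
          (hc.mul_left (Commute.refl y).inv_left)
      refine ⟨⟨⟨x * y⁻¹, hz⟩, Subtype.ext ?_⟩, mem_univ _, by simp⟩
      change (x * y⁻¹) ^ r = 1
      rw [hc.inv_right.mul_pow, inv_pow, mul_inv_eq_one, ← hx.2, ← pow_mul]
      refine pow_eq_pow_iff_modEq.2 (Nat.ModEq.of_dvd (orderOf_dvd_of_pow_eq_one hx.1.1) ?_)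
      have := he1.symm.mul_left' r
      rwa [mul_one, mul_comm r e, mul_comm r (p ^ (a+1))] at this
  have hinv : ∀ y w : G, ConjClasses.mk w = ConjClasses.mk y →
      #{x ∈ S | x ^ e = w} = #{x ∈ S | x ^ e = y} := by
    intro y w h
    rw [ConjClasses.mk_eq_mk_iff_isConj, isConj_iff] at h
    obtain ⟨c, hc⟩ := h
    refine Finset.card_bij (fun z _ => c * z * c⁻¹) ?_ ?_ ?_
    · intro z hz
      simp only [hS, mem_filter, mem_univ, true_and, conj_pow, ne_eq, conj_eq_one_iff] at hz ⊢
      exact ⟨hz.1, by rw [hz.2, hc]⟩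
    · intro z _ z' _ h
      simpa using h
    · intro z hz
      refine ⟨c⁻¹ * z * c, ?_, by group⟩
      have h1 : ∀ n, (c⁻¹ * z * c) ^ n = c⁻¹ * z ^ n * c := fun n => by
        simpa using conj_pow (i := n) (a := c⁻¹) (b := z)
      simp only [hS, mem_filter, mem_univ, true_and, h1] at hz ⊢
      refine ⟨⟨by rw [hz.1.1]; group, fun h => hz.1.2 ?_⟩, by rw [hz.2, ← hc]; group⟩
      have : z ^ (p ^ a * r) = c * (c⁻¹ * z ^ (p ^ a * r) * c) * c⁻¹ := by group
      rw [this, h]; group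
  refine frob_fib _ (fun x => ConjClasses.mk (x ^ e)) _ fun x hx => ?_
  set y := x ^ e with hy
  have hyo := hord x hx
  have h1 : #{z ∈ S | ConjClasses.mk (z ^ e) = ConjClasses.mk y} =
      #{z : G | ConjClasses.mk z = ConjClasses.mk y} * #{x ∈ S | x ^ e = y} := by
    rw [Finset.card_eq_sum_card_fiberwise (f := fun z => z ^ e)
      (t := ({z : G | ConjClasses.mk z = ConjClasses.mk y} : Finset G))]
    · rw [← smul_eq_mul, ← Finset.sum_const]
      refine Finset.sum_congr rfl fun w hw => ?_
      simp only [mem_filter, mem_univ, true_and] at hw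
      rw [← hinv y w hw, Finset.filter_filter]
      congr 1
      ext z
      simp only [mem_filter]
      constructor
      · rintro ⟨h, -, h'⟩; exact ⟨h, h'⟩
      · rintro ⟨h, h'⟩; exact ⟨h, by rw [h', hw], h'⟩
    · intro z hz
      simpa using (mem_filter.1 hz).2
  rw [h1, hfib y hyo]
  refine dvd_trans ?_ (mul_dvd_mul_left _ (hF y hyo))
  rw [← Nat.gcd_mul_left, frob_class]
  exact Nat.dvd_gcd (Dvd.intro_left _ rfl) hdvd

universe u in
theorem frob_main (N : ℕ) : ∀ (G : Type u) [Group G] [Finite G], Nat.card G = N → ∀ k m : ℕ,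
    m * k = N → m ∣ Nat.card {x : G // x ^ m = 1} := by
  induction N using Nat.strong_induction_on with
  | _ N IH =>
  intro G _ _ hG k
  have hN : 0 < N := hG ▸ Nat.card_pos
  induction k using Nat.strong_induction_on with
  | _ k ih =>
  intro m hmk
  classical
  have := Fintype.ofFinite G
  rcases eq_or_ne k 1 with rfl | hk
  · have : ∀ x : G, x ^ m = 1 := fun x => by
      rw [show m = Nat.card G by omega]; exact pow_card_eq_one'
    rw [Nat.card_congr (Equiv.subtypeUnivEquiv this), hG]
    exact Dvd.intro _ hmk
  obtain ⟨p, hp, k', rfl⟩ := Nat.exists_prime_and_dvd hk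
  have hm0 : m ≠ 0 := by rintro rfl; omega
  have hk0 : 0 < k' := Nat.pos_of_ne_zero (by rintro rfl; omega)
  have h1 := ih k' (by nlinarith [hp.two_le]) (m * p) (by rw [← hmk]; ring)
  obtain ⟨a, r, hr, rfl⟩ := Nat.exists_eq_pow_mul_and_not_dvd hm0 p hp.ne_one
  have hr' : p.Coprime r := (Nat.Prime.coprime_iff_not_dvd hp).2 hr
  rw [show p ^ a * r * p = p ^ (a+1) * r by ring] at h1
  have hrG : r ∣ Nat.card G := ⟨p ^ a * (p * k'), by rw [hG, ← hmk]; ring⟩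
  have h2 := frob_p (G := G) p a r hp hr'
  have h3 := frob_r (G := G) p a r hp hr' hrG (by
    intro y hy
    set C := Subgroup.centralizer {y}
    let y' : C := ⟨y, Subgroup.mem_centralizer_singleton_iff.2 rfl⟩
    have hyo : orderOf y' = p ^ (a+1) := by rw [← hy]; exact Subgroup.orderOf_mk _ _
    have hyc : y' ∈ Subgroup.center C := by
      rw [Subgroup.mem_center_iff]
      intro g
      ext
      exact (Subgroup.mem_centralizer_singleton_iff.1 g.2)
    have hn : (Subgroup.zpowers y').Normal := 
      ⟨fun n hn g => by
        have hc := Subgroup.mem_center_iff.1 ((Subgroup.zpowers_le.2 hyc) hn) g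
        rw [hc, mul_inv_cancel_right]; exact hn⟩
    have hcard := Subgroup.card_eq_card_quotient_mul_card_subgroup (Subgroup.zpowers y')
    rw [Nat.card_zpowers, hyo] at hcard
    have hco : (p ^ (a+1)).Coprime r := hr'.pow_left _
    rw [frob_quot y' hyc r (by rw [hyo]; exact hco), frob_gcd, hcard,
      Nat.Coprime.gcd_mul_right_cancel_right _ hco]
    have hlt : Nat.card (C ⧸ Subgroup.zpowers y') < N := by
      have : Nat.card C ≤ N := hG ▸ Nat.card_le_card_of_injective _ Subtype.val_injective
      have h0 : 0 < Nat.card (C ⧸ Subgroup.zpowers y') := Nat.card_pos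
      have : 1 < p ^ (a+1) := Nat.one_lt_pow (by omega) hp.one_lt
      nlinarith
    obtain ⟨q, hq⟩ := Nat.gcd_dvd_right r (Nat.card (C ⧸ Subgroup.zpowers y'))
    exact IH _ hlt _ rfl q _ hq.symm)
  have h4 := (hr'.pow_left a).mul_dvd_of_dvd_of_dvd h2 h3
  rw [Nat.card_eq_fintype_card, Fintype.card_subtype] at h1 ⊢
  have h5 : (Finset.univ.filter fun x : G => x ^ (p ^ (a+1) * r) = 1).card =
    (Finset.univ.filter fun x : G => x ^ (p ^ a * r) = 1).card +
    (Finset.univ.filter fun x : G => x ^ (p ^ (a+1) * r) = 1 ∧ x ^ (p ^ a * r) ≠ 1).card := by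
    rw [← Finset.card_filter_add_card_filter_not (fun x : G => x ^ (p ^ a * r) = 1),
      Finset.filter_filter, Finset.filter_filter]
    congr 2
    ext x
    simp only [Finset.mem_filter, Finset.mem_univ, true_and, and_iff_right_iff_imp]
    intro h
    rw [show p ^ (a+1) * r = p ^ a * r * p by ring, pow_mul, h, one_pow]
  rw [h5] at h1
  refine (Nat.dvd_add_left h4).1 (dvd_trans ⟨p, by ring⟩ h1)

theorem frobenius_divisibility (G : Type*) [Group G] [Finite G]
    (m : ℕ) (hm : 0 < m) (hdvd : m ∣ Nat.card G) :
    m ∣ Nat.card {x : G // x ^ m = 1} := by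
  obtain ⟨k, hk⟩ := hdvd
  exact frob_main _ G rfl k m hk.symm
end

section
/- Every finite Q-group is solvable: if a finite group G satisfies |{x ∈ G : x^m = 1}| ≤ m² for all divisors m of exp(G), then G is solvable. -/
open Subgroup
open Subgroup

theorem QG.cyclic (p q : ℕ) [hp : Fact p.Prime] (hq : (q = p ∧ p ≠ 2) ∨ (q = 4 ∧ p = 2)) (n : ℕ) :
    ∀ (S : Type*) [Group S] [Finite S], Nat.card S = p ^ n →
    (∀ x y : S, x ^ p = 1 → x ≠ 1 → y ^ p = 1 → y ∈ zpowers x) →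
    (∀ x y : S, x ^ q = 1 → x * y = y * x) → IsCyclic S := by
  induction n with
  | zero =>
    intro S _ _ hc _ _
    have : Subsingleton S := (Nat.card_eq_one_iff_unique.mp (by simpa using hc)).1
    infer_instance
  | succ n ih =>
    intro S _ _ hc hu hz
    by_cases hn : n = 0
    · subst hn
      exact isCyclic_of_prime_card (p := p) (by simpa using hc)
    obtain ⟨M, hM⟩ := Sylow.exists_subgroup_card_pow_prime (G := S) p (n := n)
      (by rw [hc]; exact pow_dvd_pow _ (by omega))
    have hidx : M.index = p := by
      have := M.card_mul_index
      rw [hM, hc, pow_succ] at this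
      exact Nat.eq_of_mul_eq_mul_left (pow_pos hp.out.pos n) this
    have hN : M.Normal := by
      apply normal_of_index_eq_minFac_card
      rw [hidx, hc, Nat.Prime.pow_minFac hp.out (by omega)]
    have hMc : IsCyclic M := by
      apply ih M hM
      · intro x y hx hx1 hy
        have := hu (x : S) y (by exact_mod_cast hx) (by exact_mod_cast hx1) (by exact_mod_cast hy)
        obtain ⟨k, hk⟩ := mem_zpowers_iff.mp this
        exact mem_zpowers_iff.mpr ⟨k, Subtype.ext (by simpa using hk)⟩
      · intro x y hx
        exact Subtype.ext (hz x y (by exact_mod_cast hx))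
    obtain ⟨⟨b, hbM⟩, hb⟩ := hMc.exists_generator
    have hbm : ∀ x ∈ M, ∃ k : ℤ, b ^ k = x := by
      intro x hx
      obtain ⟨k, hk⟩ := mem_zpowers_iff.mp (hb ⟨x, hx⟩)
      exact ⟨k, by simpa using congrArg Subtype.val hk⟩
    have hob : orderOf b = p ^ n := by
      have h1 := orderOf_eq_card_of_forall_mem_zpowers hb
      rw [hM] at h1
      rw [← h1]
      exact Subgroup.orderOf_coe (⟨b, hbM⟩ : M)
    obtain ⟨y, hy⟩ : ∃ y, y ∉ M := by
      by_contra! h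
      have : M = ⊤ := by ext; simp [h]
      rw [this] at hidx
      simp at hidx
      exact hp.out.one_lt.ne hidx
    have hyp : y ^ p ∈ M := hidx ▸ M.pow_index_mem y
    obtain ⟨c, hcc⟩ := hbm _ hyp
    obtain ⟨u, hub, hqu⟩ : ∃ u : ℤ, y⁻¹ * b * y = b ^ u ∧ (q : ℤ) ∣ u - 1 := by
      obtain ⟨u, hu1⟩ := hbm (y⁻¹ * b * y) (by simpa using hN.conj_mem b hbM y⁻¹)
      by_cases hqn : q ∣ p ^ n
      · refine ⟨u, hu1.symm, ?_⟩
        obtain ⟨r, hr⟩ := hqn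
        have h1 : (b ^ r) ^ q = 1 := by
          rw [← pow_mul, mul_comm, ← hr, ← hob, pow_orderOf_eq_one]
        have h2 := hz _ y h1
        have h3 : (b ^ u) ^ r = b ^ r := by
          rw [hu1]
          have : (y⁻¹ * b * y) ^ r = y⁻¹ * b ^ r * y := by
            simpa using (conj_pow (a := y⁻¹) (b := b) (i := r))
          rw [this, mul_assoc, h2]; group
        have h4 : b ^ ((u - 1) * r) = 1 := by
          rw [sub_mul, zpow_sub, zpow_mul, zpow_natCast, h3]; simp
        have h5 := orderOf_dvd_iff_zpow_eq_one.mpr h4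
        rw [hob, hr] at h5
        push_cast at h5
        have hr0 : (r : ℤ) ≠ 0 := by
          rintro h0
          have : r = 0 := by exact_mod_cast h0
          rw [this] at hr
          exact (pow_pos hp.out.pos n).ne' (by simpa using hr)
        exact Int.dvd_of_mul_dvd_mul_right hr0 h5
      · refine ⟨1, ?_, by simp⟩
        have : b ^ q = 1 := by
          rw [← orderOf_dvd_iff_pow_eq_one, hob]
          rcases hq with ⟨rfl, _⟩ | ⟨rfl, rfl⟩
          · exact absurd (dvd_pow_self _ hn) hqn
          · have : n = 1 := by
              by_contra h
              exact hqn (by rw [show (4:ℕ) = 2^2 by norm_num]; exact pow_dvd_pow _ (by omega))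
            subst this; norm_num
        have h2 := hz _ y this
        rw [mul_assoc, h2]; simp
    have hform : ∀ (j : ℤ) (i : ℕ), (y * b ^ j) ^ i = y ^ i * b ^ (j * ∑ k ∈ Finset.range i, u ^ k) := by
      intro j i
      induction i with
      | zero => simp
      | succ i ih =>
        have hby : ∀ t : ℤ, b ^ t * y = y * b ^ (u * t) := by
          intro t
          rw [zpow_mul, ← hub]
          have : (y⁻¹ * b * y) ^ t = y⁻¹ * b ^ t * y := by
            simpa using (conj_zpow (a := y⁻¹) (b := b) (i := t))
          rw [this]; group
        rw [pow_succ, ih, pow_succ, ← mul_assoc, mul_assoc (y ^ i), hby, geom_sum_succ]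
        rw [mul_assoc, mul_assoc, mul_assoc, ← zpow_add]
        congr 3
        ring
    obtain ⟨w, hsw, hpw⟩ : ∃ w : ℤ, ∑ k ∈ Finset.range p, u ^ k = p * w ∧ IsCoprime w p := by
      obtain ⟨v, hv⟩ := hqu
      rcases hq with ⟨rfl, h2⟩ | ⟨rfl, rfl⟩
      · have h := odd_sq_dvd_geom_sum₂_sub (R := ℤ) 1 v (hp.out.odd_of_ne_two h2)
        have : u = 1 + q * v := by linarith
        rw [← this] at h
        simp only [one_pow, mul_one] at h
        obtain ⟨t, ht⟩ := h
        refine ⟨1 + q * t, by linarith [ht], 1, -t, by ring⟩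
      · refine ⟨1 + 2 * v, ?_, 1, -v, by push_cast; ring⟩
        simp [Finset.sum_range_succ]; push_cast at hv; linarith
    by_cases hpc : (p : ℤ) ∣ c
    · exfalso
      obtain ⟨c', rfl⟩ := hpc
      obtain ⟨w', t, ht⟩ : IsCoprime w ((p : ℤ) ^ n) := hpw.pow_right
      set j : ℤ := -c' * w' with hj
      have h1 : (y * b ^ j) ^ p = 1 := by
        rw [hform, ← hcc, ← zpow_add, hsw, ← orderOf_dvd_iff_zpow_eq_one, hob]
        push_cast
        refine ⟨p * c' * t, ?_⟩
        rw [hj]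
        linear_combination (-(p:ℤ) * c') * ht
      obtain ⟨m, rfl⟩ : ∃ m, n = m + 1 := ⟨n - 1, by omega⟩
      have h2 := hu (b ^ (p ^ m)) (y * b ^ j) (by rw [← pow_mul, ← pow_succ, ← hob, pow_orderOf_eq_one])
        (by
          intro h
          have := orderOf_dvd_of_pow_eq_one h
          rw [hob] at this
          have := (Nat.pow_dvd_pow_iff_le_right hp.out.one_lt).mp this
          omega) h1
      have h3 : y * b ^ j ∈ M := (zpowers_le.mpr (M.pow_mem hbM _)) h2
      exact hy (by simpa using M.mul_mem h3 (M.inv_mem (M.zpow_mem hbM j)))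
    · have hco : IsCoprime c ((p : ℤ) ^ n) :=
        ((Nat.prime_iff_prime_int.mp hp.out).coprime_iff_not_dvd.mpr hpc).symm.pow_right
      obtain ⟨d, t, ht⟩ := hco
      have hbz : b ∈ zpowers y := by
        refine mem_zpowers_iff.mpr ⟨p * d, ?_⟩
        rw [zpow_mul, zpow_natCast, ← hcc, ← zpow_mul]
        have : c * d = 1 - t * (p:ℤ)^n := by linarith
        rw [this, zpow_sub, mul_comm, zpow_mul]
        have : b ^ ((p:ℤ)^n) = 1 := by
          rw [← orderOf_dvd_iff_zpow_eq_one, hob]; simp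
        simp [this]
      have hle : M ≤ zpowers y := by
        intro x hx
        obtain ⟨k, rfl⟩ := hbm x hx
        exact zpow_mem hbz k
      have hcard : Nat.card (zpowers y) ∣ p ^ (n+1) := hc ▸ card_subgroup_dvd_card _
      obtain ⟨k, hk, hkc⟩ := (Nat.dvd_prime_pow hp.out).mp hcard
      have hlt : ¬ k ≤ n := by
        intro h
        have : M = zpowers y := by
          apply eq_of_le_of_card_ge hle
          rw [hkc, hM]; exact Nat.pow_le_pow_right hp.out.pos h
        exact hy (this ▸ mem_zpowers y)
      have htop : zpowers y = ⊤ := by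
        apply eq_top_of_card_eq
        rw [hkc, hc]; congr 1; omega
      exact ⟨y, fun x => (by rw [htop]; exact mem_top x : x ∈ zpowers y)⟩

def QG.Q (G : Type*) [Group G] : Prop :=
  ∀ m : ℕ, 0 < m → Nat.card {x : G // x ^ m = 1} ≤ m ^ 2

structure QG.Min (G : Type*) [Group G] : Prop where
  q : QG.Q G
  sub : ∀ K : Subgroup G, K ≠ ⊤ → Group.IsSolvable K
  quot : ∀ (N : Subgroup G) [N.Normal], N ≠ ⊥ → QG.Q (G ⧸ N) → Group.IsSolvable (G ⧸ N)
  ns : ¬ Group.IsSolvable G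

theorem QG.Min.triv {G : Type*} [Group G] (h : QG.Min G) {H : Type*} [Group H]
    [Group.IsSolvable H] (f : G →* H) (g : G) : f g = 1 := by
  by_contra hg
  have hk : f.ker ≠ ⊤ := fun hk => hg (MonoidHom.mem_ker.mp (hk ▸ mem_top g))
  have := h.sub _ hk
  exact h.ns (Group.isSolvable_of_ker_le_range f.ker.subtype f (by simp))

theorem QG.solvable_of_comm {H : Type*} [Group H] (hc : ∀ a b : H, a * b = b * a) :
    Group.IsSolvable H :=
  letI : CommGroup H := { (inferInstance : Group H) with mul_comm := hc }
  (inferInstance : Group.IsSolvable H)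

theorem QG.Min.quot_card {G : Type*} [Group G] [Finite G] (h : QG.Min G) (N : Subgroup G) [N.Normal]
    (p : ℕ) (hp : 0 < p) (hN : ∀ x ∈ N, x ^ p = 1) (m : ℕ) (hm : 0 < m) :
    Nat.card N * Nat.card {x : G ⧸ N // x ^ m = 1} ≤ (m * p) ^ 2 := by
  refine le_trans ?_ (h.q (m * p) (by positivity))
  have e := QuotientGroup.preimageMkEquivSubgroupProdSet N {x : G ⧸ N | x ^ m = 1}
  rw [show Nat.card {x : G ⧸ N // x ^ m = 1} = Nat.card ({x : G ⧸ N | x ^ m = 1} : Set (G ⧸ N)) from rfl,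
    ← Nat.card_prod, ← Nat.card_congr e]
  refine Nat.card_le_card_of_injective
    (fun x => ⟨x.1, ?_⟩) ?_
  · have := x.2
    simp only [Set.mem_preimage, Set.mem_ofPred_eq] at this
    rw [pow_mul]
    apply hN
    rw [← QuotientGroup.eq_one_iff]
    exact_mod_cast this
  · intro x y hxy
    exact Subtype.ext (by simpa using hxy)

theorem QG.Min.quot_ne {G : Type*} [Group G] [Finite G] (h : QG.Min G) (V : Subgroup G)
    (p : ℕ) [hp : Fact p.Prime] (hV : ∀ x ∈ V, x ^ p = 1) (hc : Nat.card V = p ^ 2) : False := by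
  have hall : ∀ x : G, x ^ p = 1 → x ∈ V := by
    have h1 := h.q p hp.out.pos
    have h2 : (V : Set G) ⊆ {x : G | x ^ p = 1} := hV
    have h3 := Set.eq_of_subset_of_ncard_le h2 (by
      rw [← Nat.card_coe_set_eq, ← Nat.card_coe_set_eq]
      exact h1.trans hc.ge) (Set.toFinite _)
    intro x hx
    have : x ∈ (V : Set G) := by rw [h3]; exact hx
    exact this
  have hn : V.Normal := ⟨fun x hx g => hall _ (by rw [conj_pow, hV x hx]; simp)⟩
  have hq : QG.Q (G ⧸ V) := by
    intro m hm
    have := h.quot_card V p hp.out.pos hV m hm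
    rw [hc, mul_pow, mul_comm] at this
    exact Nat.le_of_mul_le_mul_right this (pow_pos hp.out.pos 2)
  have hb : V ≠ ⊥ := by
    rintro rfl
    have := hp.out.one_lt
    simp at hc
    nlinarith
  have := h.quot V hb hq
  have hs : Group.IsSolvable V := by
    have hpV : IsPGroup p V := IsPGroup.of_card hc
    have := hpV.isNilpotent
    infer_instance
  exact h.ns (Group.isSolvable_of_ker_le_range V.subtype (QuotientGroup.mk' V) (by simp))

theorem QG.mem_pow_card {G : Type*} [Group G] {p : ℕ} {A : Subgroup G} (hA : Nat.card A = p) {x : G}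
    (hx : x ∈ A) : x ^ p = 1 := by
  have : (⟨x, hx⟩ : A) ^ p = 1 := hA ▸ pow_card_eq_one'
  simpa using congrArg Subtype.val this

theorem QG.zpowers_eq {G : Type*} [Group G] {p : ℕ} [hp : Fact p.Prime] {A : Subgroup G}
    (hA : Nat.card A = p) {x : G} (hx : x ∈ A) (hx1 : x ≠ 1) : zpowers x = A := by
  have : Finite A := Nat.finite_of_card_ne_zero (hA ▸ hp.out.ne_zero)
  apply eq_of_le_of_card_ge (zpowers_le.mpr hx)
  rw [Nat.card_zpowers, orderOf_eq_prime (mem_pow_card hA hx) hx1, hA]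

theorem QG.Min.nofix {G : Type*} [Group G] [Finite G] (h : QG.Min G) (p : ℕ) [hp : Fact p.Prime]
    (A B : Subgroup G) (hA : Nat.card A = p) (hB : Nat.card B = p)
    (hAB : A ≤ normalizer (B : Set G)) : A = B := by
  by_contra hne
  have hdis : Disjoint A B := by
    rw [disjoint_iff, eq_bot_iff]
    intro x hx
    by_contra hx1
    exact hne ((zpowers_eq hA hx.1 hx1).symm.trans (zpowers_eq hB hx.2 hx1))
  have hBc : IsCyclic B := isCyclic_of_prime_card hB
  have hcomm : ∀ (a : A) (b : B), Commute (A.subtype a) (B.subtype b) := by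
    intro a b
    have h1 : (B.normalizerMonoidHom ⟨a, hAB a.2⟩) = 1 := by
      rw [← orderOf_eq_one_iff]
      have hd1 : orderOf (B.normalizerMonoidHom ⟨a, hAB a.2⟩) ∣ p := by
        apply orderOf_dvd_of_pow_eq_one
        rw [← map_pow]
        have : (⟨a, hAB a.2⟩ : normalizer (B : Set G)) ^ p = 1 := by
          ext; simpa using mem_pow_card hA a.2
        rw [this, map_one]
      have hd2 : orderOf (B.normalizerMonoidHom ⟨a, hAB a.2⟩) ∣ p - 1 := by
        have := orderOf_dvd_natCard (B.normalizerMonoidHom ⟨a, hAB a.2⟩)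
        rwa [hBc.card_mulAut, hB, Nat.totient_prime hp.out] at this
      have : Nat.Coprime p (p - 1) := by
        have := hp.out.one_lt
        rw [Nat.coprime_self_sub_right (by omega)]; simp
      exact Nat.eq_one_of_dvd_coprimes this hd1 hd2
    have h2 : (a : G) * b * (a : G)⁻¹ = b := congrArg (fun f => ((f b : B) : G)) h1
    exact mul_inv_eq_iff_eq_mul.mp h2
  let f := MonoidHom.noncommCoprod A.subtype B.subtype hcomm
  have hf : Function.Injective f := by
    rw [MonoidHom.noncommCoprod_injective]
    refine ⟨A.subtype_injective, B.subtype_injective, ?_⟩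
    simpa using hdis
  refine h.quot_ne f.range p ?_ ?_
  · rintro _ ⟨⟨a, b⟩, rfl⟩
    rw [← map_pow]
    have : (a, b) ^ p = 1 := by
      ext
      · simpa using mem_pow_card hA a.2
      · simpa using mem_pow_card hB b.2
    rw [this, map_one]
  · rw [← Nat.card_congr (MonoidHom.ofInjective hf).toEquiv, Nat.card_prod, hA, hB, sq]

theorem QG.Min.central {G : Type*} [Group G] [Finite G] (h : QG.Min G) (p : ℕ) [hp : Fact p.Prime]
    (A : Subgroup G) (hA : Nat.card A = p) [A.Normal] {x : G} (hx : x ∈ A) (g : G) :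
    x * g = g * x := by
  have hc : IsCyclic A := isCyclic_of_prime_card hA
  have : Group.IsSolvable (MulAut A) :=
    Group.isSolvable_of_isSolvable_injective (f := (hc.mulAutMulEquiv A).toMonoidHom) (hc.mulAutMulEquiv A).injective
  have h1 := h.triv (MulAut.conjNormal (H := A)) g
  have h2 := congrArg (fun f => ((f ⟨x, hx⟩ : A) : G)) h1
  simp [MulAut.conjNormal_apply] at h2
  exact (mul_inv_eq_iff_eq_mul.mp h2).symm

open scoped IsMulCommutative in
theorem QG.Min.transfer {G : Type*} [Group G] [Finite G] (h : QG.Min G) (p : ℕ) [hp : Fact p.Prime]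
    (P : Sylow p G) (hP : IsCyclic P) (z : G) (hz : z ^ p = 1) (hz1 : z ≠ 1)
    (hzc : ∀ g, z * g = g * z) : False := by
  have : IsMulCommutative (P : Subgroup G) := inferInstance
  have key : ∀ (k : ℕ) (g₀ : G), g₀⁻¹ * z ^ k * g₀ ∈ (P : Subgroup G) →
      g₀⁻¹ * z ^ k * g₀ = z ^ k := by
    intro k g _
    have : Commute z g := hzc g
    rw [mul_assoc, (this.pow_left k).eq]; simp
  have h1 := MonoidHom.transfer_eq_pow (MonoidHom.id (P : Subgroup G)) z key
  rw [h.triv] at h1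
  have h2 : z ^ (P : Subgroup G).index = 1 := by simpa using (congrArg Subtype.val h1).symm
  have h3 := orderOf_dvd_of_pow_eq_one h2
  rw [orderOf_eq_prime hz hz1] at h3
  exact P.not_dvd_index h3

theorem QG.Min.nonormal {G : Type*} [Group G] [Finite G] (h : QG.Min G) (p q : ℕ)
    [hp : Fact p.Prime] (hq : (q = p ∧ p ≠ 2) ∨ (q = 4 ∧ p = 2))
    (A : Subgroup G) (hA : Nat.card A = p) [hn : A.Normal]
    (hcen : ∀ x y : G, x ^ q = 1 → x * y = y * x) : False := by
  have huniq : ∀ B : Subgroup G, Nat.card B = p → B = A := fun B hB =>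
    h.nofix p B A hB hA (by rw [normalizer_eq_top_iff.mpr hn]; exact le_top)
  obtain ⟨P⟩ : Nonempty (Sylow p G) := inferInstance
  obtain ⟨n, hPn⟩ := P.2.exists_card_eq
  have hnt : Nontrivial A := by
    rw [← Finite.one_lt_card_iff_nontrivial, hA]; exact hp.out.one_lt
  obtain ⟨⟨z, hz⟩, hz1⟩ := exists_ne (1 : A)
  have hz1' : z ≠ 1 := fun h => hz1 (Subtype.ext h)
  have hord : ∀ x : G, x ^ p = 1 → x ≠ 1 → zpowers x = A := fun x hx hx1 =>
    huniq _ (by rw [Nat.card_zpowers, orderOf_eq_prime hx hx1])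
  refine h.transfer p P ?_ z (mem_pow_card hA hz) hz1' (fun g => h.central p A hA hz g)
  refine QG.cyclic p q hq n P hPn ?_ ?_
  · intro x y hx hx1 hy
    by_cases hy1 : y = 1
    · subst hy1; exact one_mem _
    have e1 := hord x (by exact_mod_cast hx) (by exact_mod_cast hx1)
    have e2 := hord y (by exact_mod_cast hy) (by exact_mod_cast hy1)
    have : (y : G) ∈ zpowers (x : G) := by rw [e1, ← e2]; exact mem_zpowers _
    obtain ⟨k, hk⟩ := mem_zpowers_iff.mp this
    exact mem_zpowers_iff.mpr ⟨k, Subtype.ext (by simpa using hk)⟩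
  · intro x y hx
    exact Subtype.ext (hcen x y (by exact_mod_cast hx))

open scoped Pointwise in
instance QG.act (G : Type*) [Group G] (p : ℕ) : MulAction G {A : Subgroup G // Nat.card A = p} where
  smul g A := ⟨MulAut.conj g • A.1, by
    rw [← Nat.card_congr (Subgroup.equivSMul (MulAut.conj g) A.1).toEquiv, A.2]⟩
  one_smul A := Subtype.ext (by
    change MulAut.conj (1 : G) • A.1 = A.1
    rw [map_one, one_smul])
  mul_smul g k A := Subtype.ext (by
    change MulAut.conj (g * k) • A.1 = MulAut.conj g • (MulAut.conj k • A.1)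
    rw [map_mul, mul_smul])

open scoped Pointwise in
theorem QG.act_fix {G : Type*} [Group G] {p : ℕ} {A : {A : Subgroup G // Nat.card A = p}} {g : G} :
    g • A = A ↔ g ∈ normalizer (A.1 : Set G) := by
  have h0 : g • A = A ↔ MulAut.conj g • A.1 = A.1 := Subtype.ext_iff
  rw [h0, mem_normalizer_iff]
  constructor
  · intro h x
    have := Subgroup.smul_mem_pointwise_smul_iff (a := MulAut.conj g) (S := A.1) (x := x)
    rw [h] at this
    simpa using this.symm
  · intro h
    ext x
    rw [Subgroup.mem_pointwise_smul_iff_inv_smul_mem, h]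
    simp [← map_inv, mul_assoc]

theorem QG.Min.card_le {G : Type*} [Group G] [Finite G] (h : QG.Min G) (p : ℕ) [hp : Fact p.Prime] :
    Nat.card {A : Subgroup G // Nat.card A = p} ≤ p + 1 := by
  have h1 := h.q p hp.out.pos
  have hp1 := hp.out.one_lt
  let f : Option ((A : {A : Subgroup G // Nat.card A = p}) × {a : A.1 // a ≠ 1}) →
      {x : G // x ^ p = 1} := fun o => match o with
    | none => ⟨1, one_pow _⟩
    | some ⟨A, a⟩ => ⟨a.1.1, mem_pow_card A.2 a.1.2⟩
  have hf : Function.Injective f := by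
    intro o o' hoo
    rcases o with _ | ⟨A, a⟩ <;> rcases o' with _ | ⟨B, b⟩
    · rfl
    · exact absurd (Subtype.ext (congrArg Subtype.val hoo).symm : b.1 = 1) b.2
    · have e := congrArg Subtype.val hoo
      exact absurd (Subtype.ext e : a.1 = 1) a.2
    · have hab : a.1.1 = b.1.1 := congrArg Subtype.val hoo
      have e1 := zpowers_eq A.2 a.1.2 (fun h => a.2 (Subtype.ext h))
      have e2 := zpowers_eq B.2 b.1.2 (fun h => b.2 (Subtype.ext h))
      have : A = B := Subtype.ext (by rw [← e1, ← e2, hab])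
      subst this
      have : a = b := Subtype.ext (Subtype.ext hab)
      rw [this]
  have h2 := (Nat.card_le_card_of_injective f hf).trans h1
  have h3 : ∀ A : {A : Subgroup G // Nat.card A = p}, Nat.card {a : A.1 // a ≠ 1} = p - 1 := by
    intro A
    classical
    have := Fintype.ofFinite A.1
    rw [Nat.card_eq_fintype_card, Fintype.card_subtype_compl, Fintype.card_subtype_eq,
      ← Nat.card_eq_fintype_card, A.2]
  classical
  have := Fintype.ofFinite {A : Subgroup G // Nat.card A = p}
  rw [Finite.card_option, Nat.card_sigma, Finset.sum_congr rfl (fun A _ => h3 A), Finset.sum_const,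
    Finset.card_univ, ← Nat.card_eq_fintype_card, smul_eq_mul] at h2
  obtain ⟨k, rfl⟩ : ∃ k, p = k + 2 := ⟨p - 2, by omega⟩
  have h4 : k + 2 - 1 = k + 1 := by omega
  rw [h4] at h2
  by_contra hcon
  push Not at hcon
  nlinarith

theorem QG.Min.card_orbit {G : Type*} [Group G] [Finite G] (h : QG.Min G) (p : ℕ)
    [hp : Fact p.Prime] (A : {A : Subgroup G // Nat.card A = p}) (hn : ¬ A.1.Normal) :
    Nat.card (MulAction.orbit G A) = p + 1 := by
  have hpA : IsPGroup p A.1 := IsPGroup.of_card (n := 1) (by rw [A.2, pow_one])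
  have h1 := hpA.card_modEq_card_fixedPoints (MulAction.orbit G A)
  have h2 : Nat.card (MulAction.fixedPoints A.1 (MulAction.orbit G A)) = 1 := by
    rw [Nat.card_eq_one_iff_unique]
    have key : ∀ B : MulAction.fixedPoints A.1 (MulAction.orbit G A), B.1.1 = A := by
      intro B
      refine Subtype.ext (h.nofix p A.1 B.1.1.1 A.2 B.1.1.2 ?_).symm
      intro a ha
      rw [← act_fix]
      exact congrArg Subtype.val (B.2 ⟨a, ha⟩)
    refine ⟨⟨fun B C => Subtype.ext (Subtype.ext ((key B).trans (key C).symm))⟩,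
      ⟨⟨⟨A, MulAction.mem_orbit_self A⟩, ?_⟩⟩⟩
    intro a
    exact Subtype.ext (act_fix.mpr (le_normalizer a.2))
  rw [h2] at h1
  have h3 : Nat.card (MulAction.orbit G A) ≤ p + 1 :=
    (Nat.card_le_card_of_injective _ Subtype.val_injective).trans (h.card_le p)
  have h4 : Nat.card (MulAction.orbit G A) ≠ 1 := by
    intro h4
    have := (Nat.card_eq_one_iff_unique.mp h4).1
    apply hn
    rw [← normalizer_eq_top_iff, eq_top_iff]
    intro g _
    rw [← act_fix]
    exact congrArg Subtype.val (Subsingleton.elim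
      (⟨g • A, MulAction.mem_orbit A g⟩ : MulAction.orbit G A) ⟨A, MulAction.mem_orbit_self A⟩)
  have : Nonempty (MulAction.orbit G A) := ⟨⟨A, MulAction.mem_orbit_self A⟩⟩
  have h5 : 0 < Nat.card (MulAction.orbit G A) := Nat.card_pos
  have h6 := (Nat.modEq_iff_dvd' (by omega)).mp h1.symm
  obtain ⟨k, hk⟩ := h6
  have hp1 := hp.out.one_lt
  have : k ≠ 0 := by rintro rfl; omega
  have : k = 1 := by
    by_contra
    have : p * 2 ≤ p * k := Nat.mul_le_mul_left _ (by omega)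
    omega
  subst this
  omega

theorem QG.solv_mersenne (p k : ℕ) [hp : Fact p.Prime] (hk : p + 1 = 2 ^ k) (hp2 : p ≠ 2)
    (H : Type*) [Group H] [Finite H] (hc : Nat.card H ∣ p * 2 ^ k) : Group.IsSolvable H := by
  have h2 : Fact (Nat.Prime 2) := ⟨Nat.prime_two⟩
  have hcop : Nat.Coprime p 2 := (Nat.coprime_primes hp.out Nat.prime_two).mpr hp2
  have two_solv : ∀ (K : Type _) [Group K] [Finite K], Nat.card K ∣ 2 ^ k → Group.IsSolvable K := by
    intro K _ _ hK
    obtain ⟨j, _, hj⟩ := (Nat.dvd_prime_pow Nat.prime_two).mp hK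
    have := (IsPGroup.of_card hj).isNilpotent
    infer_instance
  by_cases hpd : p ∣ Nat.card H
  swap
  · apply two_solv
    exact Nat.Coprime.dvd_of_dvd_mul_left ((Nat.Prime.coprime_iff_not_dvd hp.out).mpr hpd).symm hc
  obtain ⟨P⟩ : Nonempty (Sylow p H) := inferInstance
  obtain ⟨n, hPn⟩ := P.2.exists_card_eq
  have hn : n = 1 := by
    have hle : n ≤ 1 := by
      have : p ^ n ∣ p * 2 ^ k := hPn ▸ (card_subgroup_dvd_card _).trans hc
      have := Nat.Coprime.dvd_of_dvd_mul_right (hcop.pow n k) this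
      exact (Nat.pow_dvd_pow_iff_le_right hp.out.one_lt).mp (by simpa using this)
    have : n ≠ 0 := by
      rintro rfl
      have := P.dvd_card_of_dvd_card hpd
      rw [hPn] at this
      exact hp.out.one_lt.ne' (by simpa using this)
    omega
  subst hn
  rw [pow_one] at hPn
  have hidx : (P : Subgroup H).index ∣ 2 ^ k := by
    have := (P : Subgroup H).card_mul_index
    rw [← this, hPn] at hc
    exact Nat.dvd_of_mul_dvd_mul_left hp.out.pos hc
  have hPcyc : IsCyclic P := isCyclic_of_prime_card hPn
  have hs1 := P.card_dvd_index
  have hs2 := card_sylow_modEq_one p H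
  have hPs : Group.IsSolvable P := by
    have := P.2.isNilpotent
    infer_instance
  by_cases h1 : Nat.card (Sylow p H) = 1
  · have hPn : (P : Subgroup H).Normal := by
      rw [P.card_eq_index_normalizer, index_eq_one] at h1
      exact normalizer_eq_top_iff.mp h1
    have : Group.IsSolvable (H ⧸ (P : Subgroup H)) := by
      apply two_solv
      exact hidx
    exact Group.isSolvable_of_ker_le_range (P : Subgroup H).subtype
      (QuotientGroup.mk' (P : Subgroup H)) (by simp)
  · have hge : p + 1 ≤ Nat.card (Sylow p H) := by
      have h5 : 0 < Nat.card (Sylow p H) := Nat.card_pos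
      obtain ⟨t, ht⟩ := (Nat.modEq_iff_dvd' (by omega)).mp hs2.symm
      have : t ≠ 0 := by rintro rfl; omega
      have : p * 1 ≤ p * t := Nat.mul_le_mul_left _ (by omega)
      omega
    have heq : (P : Subgroup H).index ≤ (normalizer ((P : Subgroup H) : Set H)).index := by
      have := Nat.le_of_dvd (by positivity) hidx
      have h7 := P.card_eq_index_normalizer
      rw [← hk] at this
      have : (P : Subgroup H).index ≤ Nat.card (Sylow p H) := this.trans hge
      rw [h7] at this
      exact this
    have hNP : (P : Subgroup H) = normalizer ((P : Subgroup H) : Set H) := by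
      apply eq_of_le_of_card_ge le_normalizer
      have e1 := (P : Subgroup H).card_mul_index
      have e2 := (normalizer ((P : Subgroup H) : Set H)).card_mul_index
      have e3 : 0 < (P : Subgroup H).index := Nat.pos_of_ne_zero index_ne_zero_of_finite
      by_contra hlt
      push Not at hlt
      have : Nat.card (P : Subgroup H) * (P : Subgroup H).index <
        Nat.card (normalizer ((P : Subgroup H) : Set H)) * (normalizer ((P : Subgroup H) : Set H)).index :=
        Nat.mul_lt_mul_of_lt_of_le hlt heq (by omega)
      omega
    have hNC : normalizer (P : Set H) ≤ centralizer (P : Set H) := by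
      intro x hx
      have hx' : x ∈ (P : Subgroup H) := by rw [hNP]; exact hx
      rw [mem_centralizer_iff]
      intro y hy
      have hcm : ∀ a b : P, a * b = b * a := fun a b => by
        let := hPcyc.commGroup
        exact mul_comm a b
      exact congrArg Subtype.val (hcm ⟨y, hy⟩ ⟨x, hx'⟩)
    have hcompl := MonoidHom.ker_transferSylow_isComplement' P hNC
    have : Group.IsSolvable (MonoidHom.transferSylow P hNC).ker := by
      apply two_solv
      have e1 := hcompl.card_mul_card
      have e2 := (P : Subgroup H).card_mul_index
      rw [← e2, mul_comm] at e1
      rw [Nat.eq_of_mul_eq_mul_left Nat.card_pos e1]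
      exact hidx
    exact Group.isSolvable_of_ker_le_range (MonoidHom.transferSylow P hNC).ker.subtype
      (MonoidHom.transferSylow P hNC) (by simp)

theorem QG.Min.perm {G : Type*} [Group G] [Finite G] (h : QG.Min G) (X : Type*) [Finite X]
    (f : G →* Equiv.Perm X) (p k : ℕ) [hp : Fact p.Prime] (hk : p + 1 = 2 ^ k) (hp2 : p ≠ 2)
    (hc : ∀ d, d ∣ Nat.card G → 2 * d ∣ (Nat.card X).factorial → d ∣ p * 2 ^ k) (g : G) : f g = 1 := by
  classical
  have := Fintype.ofFinite X
  by_cases hX : Nontrivial X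
  swap
  · rw [not_nontrivial_iff_subsingleton] at hX
    exact Subsingleton.elim _ _
  have hle : f.range ≤ alternatingGroup X := by
    rintro _ ⟨g, rfl⟩
    exact h.triv (Equiv.Perm.sign.comp f) g
  have hd : 2 * Nat.card f.range ∣ (Nat.card X).factorial := by
    have h1 := two_mul_nat_card_alternatingGroup (α := X)
    rw [← Nat.card_perm, ← h1]
    exact mul_dvd_mul_left _ (card_dvd_of_le hle)
  have hs := QG.solv_mersenne p k hk hp2 f.range (hc _ (card_range_dvd f) hd)
  have := h.triv f.rangeRestrict g
  exact congrArg Subtype.val this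

theorem QG.Min.orbit_nontriv {G : Type*} [Group G] (p : ℕ)
    (A : {A : Subgroup G // Nat.card A = p}) (hn : ¬ A.1.Normal)
    (hf : ∀ g : G, MulAction.toPermHom G (MulAction.orbit G A) g = 1) : False := by
  apply hn
  rw [← normalizer_eq_top_iff, eq_top_iff]
  intro g _
  rw [← QG.act_fix]
  have := congrArg (fun f => (f ⟨A, MulAction.mem_orbit_self A⟩).1) (hf g)
  exact this

theorem QG.Min.normal_of_two_three {G : Type*} [Group G] [Finite G] (h : QG.Min G) (p : ℕ)
    [hp : Fact p.Prime] (hp3 : p = 2 ∨ p = 3) (A : Subgroup G) (hA : Nat.card A = p) :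
    A.Normal := by
  by_contra hn
  have h3 : Fact (Nat.Prime 3) := ⟨Nat.prime_three⟩
  refine QG.Min.orbit_nontriv p ⟨A, hA⟩ hn
    (h.perm _ _ 3 2 (by norm_num) (by norm_num) ?_)
  intro d _ hd
  rw [h.card_orbit p ⟨A, hA⟩ hn] at hd
  apply Nat.dvd_of_mul_dvd_mul_left (k := 2) (by norm_num)
  refine hd.trans ?_
  rcases hp3 with rfl | rfl <;> decide

theorem QG.Min.mem_of_pow {G : Type*} [Group G] [Finite G] (h : QG.Min G) (p : ℕ)
    [hp : Fact p.Prime] (A : Subgroup G) (hA : Nat.card A = p) [hn : A.Normal] (x : G)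
    (hx : x ^ p = 1) : x ∈ A := by
  by_cases hx1 : x = 1
  · subst hx1; exact one_mem _
  have : zpowers x = A := h.nofix p _ A
    (by rw [Nat.card_zpowers, orderOf_eq_prime hx hx1]) hA
    (by rw [normalizer_eq_top_iff.mpr hn]; exact le_top)
  exact this ▸ mem_zpowers x

theorem QG.exists_card {G : Type*} [Group G] [Finite G] (p : ℕ)
    [hp : Fact p.Prime] (hd : p ∣ Nat.card G) : ∃ A : Subgroup G, Nat.card A = p := by
  obtain ⟨A, hA⟩ := Sylow.exists_subgroup_card_pow_prime (G := G) p (n := 1) (by simpa using hd)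
  exact ⟨A, by simpa using hA⟩

theorem QG.Min.not_normal_odd {G : Type*} [Group G] [Finite G] (h : QG.Min G) (p : ℕ)
    [hp : Fact p.Prime] (hp2 : p ≠ 2) (A : Subgroup G) (hA : Nat.card A = p) : ¬ A.Normal := by
  intro hn
  exact h.nonormal p p (Or.inl ⟨rfl, hp2⟩) A hA
    (fun x y hx => h.central p A hA (h.mem_of_pow p A hA x hx) y)

theorem QG.Min.dvd_odd {G : Type*} [Group G] [Finite G] (h : QG.Min G) (p : ℕ)
    [hp : Fact p.Prime] (hp2 : p ≠ 2) (hd : p ∣ Nat.card G) : p + 1 ∣ Nat.card G := by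
  obtain ⟨A, hA⟩ := QG.exists_card p hd
  have hn := h.not_normal_odd p hp2 A hA
  rw [← h.card_orbit p ⟨A, hA⟩ hn]
  rw [Nat.card_congr (MulAction.orbitEquivQuotientStabilizer G _)]
  exact (MulAction.stabilizer G (⟨A, hA⟩ : {A : Subgroup G // Nat.card A = p})).index_dvd_card

theorem QG.Min.not_three {G : Type*} [Group G] [Finite G] (h : QG.Min G) : ¬ 3 ∣ Nat.card G := by
  intro hd
  have h3 : Fact (Nat.Prime 3) := ⟨Nat.prime_three⟩
  obtain ⟨A, hA⟩ := QG.exists_card 3 hd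
  exact h.not_normal_odd 3 (by norm_num) A hA (h.normal_of_two_three 3 (Or.inr rfl) A hA)

theorem QG.Min.not_five {G : Type*} [Group G] [Finite G] (h : QG.Min G) : ¬ 5 ∣ Nat.card G := by
  intro hd
  have h5 : Fact (Nat.Prime 5) := ⟨Nat.prime_five⟩
  exact h.not_three (dvd_trans (by norm_num) (h.dvd_odd 5 (by norm_num) hd))

theorem QG.Min.two {G : Type*} [Group G] [Finite G] (h : QG.Min G) : 2 ∣ Nat.card G := by
  have h1 : Nat.card G ≠ 1 := by
    intro h1
    have := (Nat.card_eq_one_iff_unique.mp h1).1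
    exact h.ns inferInstance
  obtain ⟨r, hr, hd⟩ := Nat.exists_prime_and_dvd h1
  have : Fact r.Prime := ⟨hr⟩
  by_cases h2 : r = 2
  · exact h2 ▸ hd
  · refine dvd_trans ?_ (h.dvd_odd r h2 hd)
    exact ((hr.odd_of_ne_two h2).add_one).two_dvd

@[reducible]
def QG.act2 (H : Type*) [Group H] : MulAction H {x : H // x ≠ 1 ∧ x ^ 2 = 1} where
  smul g x := ⟨g * x.1 * g⁻¹, by
    constructor
    · simpa using x.2.1
    · rw [conj_pow, x.2.2]; simp⟩
  one_smul x := Subtype.ext (by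
    change 1 * x.1 * 1⁻¹ = x.1
    simp)
  mul_smul g k x := Subtype.ext (by
    change (g * k) * x.1 * (g * k)⁻¹ = g * (k * x.1 * k⁻¹) * g⁻¹
    group)

theorem QG.Min.false {G : Type*} [Group G] [Finite G] (h : QG.Min G) : False := by
  have h2 : Fact (Nat.Prime 2) := ⟨Nat.prime_two⟩
  have h7 : Fact (Nat.Prime 7) := ⟨by norm_num⟩
  obtain ⟨A, hA⟩ := QG.exists_card 2 h.two
  have hn := h.normal_of_two_three 2 (Or.inl rfl) A hA
  have hAc : ∀ x ∈ A, ∀ g, x * g = g * x := fun x hx g => h.central 2 A hA hx g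
  have hq := h.quot_card A 2 (by norm_num) (fun x hx => QG.mem_pow_card hA hx) 2 (by norm_num)
  rw [hA] at hq
  have hT : Nat.card {x : G ⧸ A // x ≠ 1 ∧ x ^ 2 = 1} ≤ 7 := by
    have : Nat.card (Option {x : G ⧸ A // x ≠ 1 ∧ x ^ 2 = 1}) ≤
        Nat.card {x : G ⧸ A // x ^ 2 = 1} := by
      refine Nat.card_le_card_of_injective (fun o => match o with
        | none => ⟨1, one_pow _⟩
        | some x => ⟨x.1, x.2.2⟩) ?_
      intro o o' hoo
      rcases o with _ | x <;> rcases o' with _ | y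
      · rfl
      · exact absurd (congrArg Subtype.val hoo).symm y.2.1
      · exact absurd (congrArg Subtype.val hoo) x.2.1
      · have e := congrArg Subtype.val hoo
        exact congrArg some (Subtype.ext e)
    rw [Finite.card_option] at this
    omega
  let := QG.act2 (G ⧸ A)
  have htriv := h.perm _ ((MulAction.toPermHom (G ⧸ A) {x : G ⧸ A // x ≠ 1 ∧ x ^ 2 = 1}).comp
    (QuotientGroup.mk' A)) 7 3 (by norm_num) (by norm_num) (by
      intro d hd hdf
      have h1 : 2 * d ∣ 2 * 2520 := hdf.trans (Nat.factorial_dvd_factorial hT)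
      have h3 : d ∣ 45 * 56 := Nat.dvd_of_mul_dvd_mul_left (by norm_num) h1
      refine Nat.Coprime.dvd_of_dvd_mul_left ?_ h3
      have c3 : Nat.Coprime d 3 := ((Nat.Prime.coprime_iff_not_dvd Nat.prime_three).mpr
        (fun h' => h.not_three (h'.trans hd))).symm
      have c5 : Nat.Coprime d 5 := ((Nat.Prime.coprime_iff_not_dvd Nat.prime_five).mpr
        (fun h' => h.not_five (h'.trans hd))).symm
      exact (c3.mul_right c3).mul_right c5)
  refine h.nonormal 2 4 (Or.inr ⟨rfl, rfl⟩) A hA ?_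
  intro x y hx
  by_cases hxA : x ∈ A
  · exact hAc x hxA y
  have hx2 : x ^ 2 ∈ A := h.mem_of_pow 2 A hA _ (by rw [← pow_mul]; exact hx)
  have hmem : ∀ g : G, g * x * g⁻¹ * x⁻¹ ∈ A := by
    intro g
    have h1 := congrArg (fun f => (f ⟨(x : G ⧸ A), by
      rwa [ne_eq, QuotientGroup.eq_one_iff], by
      rw [← QuotientGroup.mk_pow, QuotientGroup.eq_one_iff]; exact hx2⟩).1) (htriv g)
    have h3 : (g : G ⧸ A) * x * (g : G ⧸ A)⁻¹ = x := h1
    rw [← QuotientGroup.eq_one_iff]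
    change (g : G ⧸ A) * x * (g : G ⧸ A)⁻¹ * (x : G ⧸ A)⁻¹ = 1
    rw [h3]; simp
  have hAs : Group.IsSolvable A := QG.solvable_of_comm
    (fun a b => Subtype.ext (hAc a a.2 b))
  let φ : G →* A := MonoidHom.mk' (fun g => ⟨g * x * g⁻¹ * x⁻¹, hmem g⟩) (by
    intro g k
    apply Subtype.ext
    change (g * k) * x * (g * k)⁻¹ * x⁻¹ = (g * x * g⁻¹ * x⁻¹) * (k * x * k⁻¹ * x⁻¹)
    rw [← hAc _ (hmem k) (g * x * g⁻¹ * x⁻¹)]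
    have : (g * k) * x * (g * k)⁻¹ * x⁻¹ = g * (k * x * k⁻¹ * x⁻¹) * (x * g⁻¹ * x⁻¹) := by group
    rw [this, ← hAc _ (hmem k) g]
    group)
  have h1 : y * x * y⁻¹ * x⁻¹ = 1 := congrArg Subtype.val (h.triv φ y)
  rw [mul_inv_eq_one, mul_inv_eq_iff_eq_mul] at h1
  exact h1.symm

theorem QG.main (n : ℕ) : ∀ (G : Type*) [Group G] [Finite G], Nat.card G = n → QG.Q G →
    Group.IsSolvable G := by
  induction n using Nat.strong_induction_on with
  | _ n ih =>
    intro G _ _ hc hQ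
    by_contra hns
    refine QG.Min.false (G := G) ⟨hQ, ?_, ?_, hns⟩
    · intro K hK
      refine ih (Nat.card K) ?_ K rfl ?_
      · rw [← hc]
        refine lt_of_le_of_ne (Nat.le_of_dvd Nat.card_pos (card_subgroup_dvd_card K)) ?_
        exact fun e => hK (eq_top_of_card_eq K e)
      · intro m hm
        refine le_trans (Nat.card_le_card_of_injective
          (fun x => (⟨x.1.1, by exact_mod_cast x.2⟩ : {x : G // x ^ m = 1})) ?_) (hQ m hm)
        intro x y hxy
        have e := congrArg Subtype.val hxy
        exact Subtype.ext (Subtype.ext e)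
    · intro N _ hN hq
      refine ih (Nat.card (G ⧸ N)) ?_ _ rfl hq
      have e := N.card_mul_index
      have h1 : 1 < Nat.card N := by
        have : Nat.card N ≠ 1 := fun e => hN (card_eq_one.mp e)
        have : 0 < Nat.card N := Nat.card_pos
        omega
      have h3 : 0 < N.index := Nat.pos_of_ne_zero index_ne_zero_of_finite
      rw [← hc, ← e]
      change N.index < _
      nlinarith

theorem Q_group_solvable (G : Type*) [Group G] [Finite G]
    (h : ∀ m : ℕ, m ∣ Monoid.exponent G → Nat.card {x : G // x ^ m = 1} ≤ m ^ 2) :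
    IsSolvable G := by
  refine QG.main _ G rfl ?_
  intro m hm
  have h1 := h (Nat.gcd m (Monoid.exponent G)) (Nat.gcd_dvd_right _ _)
  refine le_trans ?_ (h1.trans (Nat.pow_le_pow_left (Nat.gcd_le_left _ hm) 2))
  refine Nat.card_le_card_of_injective (fun x => ⟨x.1, ?_⟩) ?_
  · rw [← orderOf_dvd_iff_pow_eq_one]
    exact Nat.dvd_gcd (orderOf_dvd_of_pow_eq_one x.2) (Monoid.order_dvd_exponent _)
  · intro x y hxy
    have e := congrArg Subtype.val hxy
    exact Subtype.ext e
end

section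
/- Every finite Q-group G has a 2-nilpotent normal subgroup M with index |G : M| equal to 1 or 3. -/
namespace QGrp

open Subgroup

/-- No nontrivial normal subgroup of odd order. -/
def NoOdd (G : Type*) [Group G] : Prop :=
  ∀ L : Subgroup G, L.Normal → Odd (Nat.card L) → L = ⊥

/-- The conclusion, with everything normal in the large group. -/
def Good (G : Type*) [Group G] : Prop :=
  ∃ K M : Subgroup G, K.Normal ∧ M.Normal ∧ K ≤ M ∧ Odd (Nat.card K) ∧
    (∃ j : ℕ, K.relIndex M = 2 ^ j) ∧ (M.index = 1 ∨ M.index = 3)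

theorem odd_of_no_inv {G : Type*} [Group G] [Finite G] (L : Subgroup G)
    (h : ∀ x ∈ L, x ^ 2 = 1 → x = 1) : Odd (Nat.card L) := by
  by_contra hc
  rw [Nat.not_odd_iff_even, even_iff_two_dvd] at hc
  have : Fact (Nat.Prime 2) := ⟨Nat.prime_two⟩
  obtain ⟨x, hx⟩ := exists_prime_orderOf_dvd_card' 2 hc
  have h1 : x ^ 2 = 1 := by rw [← hx]; exact pow_orderOf_eq_one x
  have h2 : (x : G) = 1 := h x x.2 (by exact_mod_cast congrArg Subtype.val h1)
  have h3 : x = 1 := Subtype.ext h2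
  rw [h3, orderOf_one] at hx
  omega

theorem eq_one_of_odd {G : Type*} [Group G] {x : G} {n k : ℕ} (hn : Odd n) (h1 : x ^ n = 1)
    (h2 : x ^ 2 ^ k = 1) : x = 1 := by
  have h := orderOf_dvd_of_pow_eq_one h1
  have h' := orderOf_dvd_of_pow_eq_one h2
  have hc : Nat.Coprime n (2 ^ k) := (Nat.Coprime.pow_right k (Nat.coprime_two_right.mpr hn))
  exact orderOf_eq_one_iff.mp (Nat.eq_one_of_dvd_coprimes hc h h')

theorem good_of_pgroup {G : Type*} [Group G] [Finite G] (M : Subgroup G) (hM : M.Normal)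
    (hp : IsPGroup 2 M) (hi : M.index = 1 ∨ M.index = 3) : Good G := by
  have : Fact (Nat.Prime 2) := ⟨Nat.prime_two⟩
  refine ⟨⊥, M, inferInstance, hM, bot_le, by simp, ?_, hi⟩
  rw [relIndex_bot_left]
  exact IsPGroup.iff_card.mp hp

theorem pgroup_of_complement {G : Type*} [Group G] [Finite G] (hO : NoOdd G) (N : Subgroup G)
    (hN : N.Normal) (K : Subgroup N) (hK : K.Normal) (hodd : Odd (Nat.card K)) (j : ℕ)
    (hj : K.index = 2 ^ j) : IsPGroup 2 N := by
  have key : ∀ x : G, x ∈ K.map N.subtype ↔ x ∈ N ∧ x ^ Nat.card K = 1 := by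
    intro x
    constructor
    · rintro ⟨y, hy, rfl⟩
      refine ⟨y.2, ?_⟩
      have : (⟨y, hy⟩ : K) ^ Nat.card K = 1 := pow_card_eq_one'
      have h2 := congrArg (fun t : K => ((t : N) : G)) this
      exact h2
    · rintro ⟨hx, hp⟩
      refine ⟨⟨x, hx⟩, ?_, rfl⟩
      have h1 : (QuotientGroup.mk (⟨x, hx⟩ : N) : N ⧸ K) ^ Nat.card K = 1 := by
        rw [← QuotientGroup.mk_pow]
        have : (⟨x, hx⟩ : N) ^ Nat.card K = 1 := Subtype.ext (by simpa using hp)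
        rw [this]; rfl
      have h2 : (QuotientGroup.mk (⟨x, hx⟩ : N) : N ⧸ K) ^ 2 ^ j = 1 := by
        rw [← hj, index_eq_card]; exact pow_card_eq_one'
      exact (QuotientGroup.eq_one_iff _).mp (eq_one_of_odd hodd h1 h2)
  have hnorm : (K.map N.subtype).Normal := by
    constructor
    intro x hx g
    rw [key] at hx ⊢
    refine ⟨hN.conj_mem _ hx.1 g, ?_⟩
    rw [conj_pow, hx.2]; simp
  have hb := hO _ hnorm (by
    rw [card_map_of_injective N.subtype_injective]; exact hodd)
  have hb' : K = ⊥ := by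
    rwa [map_eq_bot_iff_of_injective _ N.subtype_injective] at hb
  rw [hb', index_bot] at hj
  exact IsPGroup.of_card hj

theorem le_of_central {G : Type*} [Group G] [Finite G] (hO : NoOdd G) (N V : Subgroup G)
    (hN : N.Normal) (hVN : V ≤ N) (hcen : ∀ v ∈ V, ∀ x ∈ N, v * x = x * v)
    (hV : IsPGroup 2 V) (hodd : Odd (V.relIndex N)) : N ≤ V := by
  have : Fact (Nat.Prime 2) := ⟨Nat.prime_two⟩
  have hle : V.subgroupOf N ≤ center N := by
    intro v hv
    rw [mem_center_iff]
    intro x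
    exact Subtype.ext (hcen v (mem_subgroupOf.mp hv) x x.2).symm
  have hmodd : Odd (center N).index := by
    have : (center N).index ∣ V.relIndex N := index_dvd_of_le hle
    exact Odd.of_dvd_nat hodd this
  set m := (center N).index with hm
  have hmul : ∀ x y : N, (x * y) ^ m = x ^ m * y ^ m := by
    intro x y
    have := map_mul (MonoidHom.transferCenterPow N) x y
    exact congrArg Subtype.val this
  -- injectivity of the power map
  let K : Subgroup N := (MonoidHom.transferCenterPow N).ker
  have hKmem : ∀ x : N, x ∈ K ↔ x ^ m = 1 := by
    intro x
    rw [MonoidHom.mem_ker]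
    exact ⟨fun h => congrArg Subtype.val h, fun h => Subtype.ext h⟩
  have hKodd : Odd (Nat.card K) := by
    apply odd_of_no_inv
    intro x hx h2
    exact eq_one_of_odd (k := 1) hmodd ((hKmem x).mp hx) (by simpa using h2)
  have hKn : (K.map N.subtype).Normal := by
    constructor
    rintro _ ⟨x, hx, rfl⟩ g
    refine ⟨⟨g * x * g⁻¹, hN.conj_mem _ x.2 g⟩, ?_, rfl⟩
    have h1 := (hKmem x).mp hx
    refine (hKmem _).mpr (Subtype.ext ?_)
    have h2 : (x : G) ^ m = 1 := by exact_mod_cast congrArg Subtype.val h1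
    simp [conj_pow, h2]
  have hb := hO _ hKn (by rw [card_map_of_injective N.subtype_injective]; exact hKodd)
  have hb' : K = ⊥ := by
    rwa [map_eq_bot_iff_of_injective _ N.subtype_injective] at hb
  -- center is everything
  have hcomm : ∀ x y : N, x * y = y * x := by
    intro x y
    have hinj : Function.Injective (MonoidHom.transferCenterPow N) :=
      (MonoidHom.ker_eq_bot_iff _).mp hb'
    apply hinj
    rw [map_mul, map_mul]
    exact Subtype.ext ((mem_center_iff.mp (MonoidHom.transferCenterPow N y).2 _))
  have hodd' : ∀ x ∈ N, ∀ n, Odd n → x ^ n = 1 → x = 1 := by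
    intro x0 hx0 n hn hx
    let L : Subgroup G :=
      { carrier := {x | x ∈ N ∧ x ^ n = 1}
        one_mem' := ⟨N.one_mem, one_pow _⟩
        mul_mem' := by
          rintro a b ⟨ha, ha'⟩ ⟨hb, hb'⟩
          refine ⟨N.mul_mem ha hb, ?_⟩
          have : Commute a b := congrArg Subtype.val (hcomm ⟨a, ha⟩ ⟨b, hb⟩)
          rw [this.mul_pow, ha', hb', one_mul]
        inv_mem' := by
          rintro a ⟨ha, ha'⟩
          exact ⟨N.inv_mem ha, by rw [inv_pow, ha', inv_one]⟩ }
    have hL : L.Normal := by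
      constructor
      rintro x ⟨hx, hx'⟩ g
      exact ⟨hN.conj_mem _ hx g, by rw [conj_pow, hx']; simp⟩
    have hLo : Odd (Nat.card L) := by
      apply odd_of_no_inv
      intro x hx h2
      exact eq_one_of_odd (k := 1) hn hx.2 (by simpa using h2)
    have := hO L hL hLo
    have hmem : x0 ∈ L := ⟨hx0, hx⟩
    rw [this] at hmem
    exact mem_bot.mp hmem
  have hNp : IsPGroup 2 N := by
    obtain ⟨e, he⟩ := IsPGroup.iff_card.mp hV
    intro x
    refine ⟨e, Subtype.ext ?_⟩
    have hc : Nat.card N = V.relIndex N * 2 ^ e := by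
      rw [← he, mul_comm, ← relIndex_bot_left, ← relIndex_bot_left]
      exact (relIndex_mul_relIndex ⊥ V N bot_le hVN).symm
    have h1 : ((x : G) ^ 2 ^ e) ^ V.relIndex N = 1 := by
      rw [← pow_mul, mul_comm, ← hc]
      have : x ^ Nat.card N = 1 := pow_card_eq_one'
      exact_mod_cast congrArg Subtype.val this
    simpa using hodd' _ (N.pow_mem x.2 _) _ hodd h1
  obtain ⟨n, hn⟩ := IsPGroup.iff_card.mp hNp
  have hdvd : V.relIndex N ∣ 2 ^ n := hn ▸ relIndex_dvd_card V N
  rw [← relIndex_eq_one]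
  exact Nat.eq_one_of_dvd_coprimes (Nat.Coprime.pow_right n (Nat.coprime_two_right.mpr hodd))
    dvd_rfl hdvd

theorem cyclic_complement {C : Type*} [Group C] [Finite C] (P : Sylow 2 C) (hP : IsCyclic P) :
    ∃ K : Subgroup C, K.Normal ∧ Odd (Nat.card K) ∧ ∃ j : ℕ, K.index = 2 ^ j := by
  have : Fact (Nat.Prime 2) := ⟨Nat.prime_two⟩
  by_cases h2 : 2 ∣ Nat.card C
  · have hmin : (Nat.card C).minFac = 2 := (Nat.minFac_eq_two_iff _).mpr h2
    have hc := IsCyclic.isComplement' hmin hP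
    refine ⟨(MonoidHom.transferSylow P (hP.normalizer_le_centralizer hmin)).ker, MonoidHom.normal_ker _, ?_, ?_⟩
    · have := MonoidHom.not_dvd_card_ker_transferSylow P (hP.normalizer_le_centralizer hmin)
      rwa [← Nat.not_even_iff_odd, even_iff_two_dvd]
    · rw [hc.symm.index_eq_card]
      exact IsPGroup.iff_card.mp P.2
  · refine ⟨⊤, inferInstance, ?_, 0, by simp⟩
    rw [card_top]
    rwa [← Nat.not_even_iff_odd, even_iff_two_dvd]

end QGrp

namespace QGrp

open Subgroup

theorem cyclic_of_four {S : Type*} [Group S] [Finite S] (hS : IsPGroup 2 S) (y : S)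
    (hy : orderOf y = 4) (h : ∀ x : S, x ^ 4 = 1 → x ∈ zpowers y) : IsCyclic S := by
  have : Fact (Nat.Prime 2) := ⟨Nat.prime_two⟩
  obtain ⟨a, hya, hmax⟩ : ∃ a : S, y ∈ zpowers a ∧ ∀ b : S, y ∈ zpowers b →
      orderOf b ≤ orderOf a := by
    have := Set.exists_max_image {a : S | y ∈ zpowers a} orderOf (Set.toFinite _)
      ⟨y, mem_zpowers y⟩
    obtain ⟨a, ha, h2⟩ := this
    exact ⟨a, ha, h2⟩
  obtain ⟨n, hn⟩ := (IsPGroup.iff_orderOf.mp hS) a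
  by_contra hcyc
  have hA : zpowers a < ⊤ := by
    refine lt_top_iff_ne_top.mpr fun he => hcyc ⟨a, fun x => ?_⟩
    have hx : x ∈ zpowers a := by rw [he]; trivial
    exact hx
  have hnil : Group.IsNilpotent S := hS.isNilpotent
  have hlt := Group.normalizerCondition_of_isNilpotent (zpowers a) hA
  obtain ⟨s0, hs0, hs0'⟩ := SetLike.exists_of_lt hlt
  -- get s with s ^ 2 in A
  obtain ⟨s, hs, hsA, hs2⟩ : ∃ s ∈ normalizer (zpowers a : Set S), s ∉ zpowers a ∧ s ^ 2 ∈ zpowers a := by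
    classical
    have hex : ∃ k, s0 ^ 2 ^ k ∈ zpowers a := by
      obtain ⟨k, hk⟩ := hS s0
      exact ⟨k, by rw [hk]; exact one_mem _⟩
    have hk1 := Nat.find_spec hex
    have hk0 : Nat.find hex ≠ 0 := by
      intro h0
      rw [h0] at hk1
      exact hs0' (by simpa using hk1)
    obtain ⟨k, hk⟩ := Nat.exists_eq_succ_of_ne_zero hk0
    refine ⟨s0 ^ 2 ^ k, pow_mem hs0 _, Nat.find_min hex (by omega), ?_⟩
    rw [← pow_mul, ← pow_succ]
    rw [hk] at hk1
    exact hk1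
  have hconj : s * a * s⁻¹ ∈ zpowers a := (mem_normalizer_iff.mp hs a).mp (mem_zpowers a)
  obtain ⟨u, hu⟩ := mem_zpowers_iff.mp hconj
  obtain ⟨m, hm⟩ := mem_zpowers_iff.mp hs2
  have hconjz : ∀ j : ℤ, s * a ^ j * s⁻¹ = a ^ (u * j) := by
    intro j
    rw [← conj_zpow, ← hu, zpow_mul]
  have hn2 : 4 ∣ 2 ^ n := by
    rw [← hn, ← hy]; exact orderOf_dvd_of_mem_zpowers hya
  have hya' : zpowers y ≤ zpowers a := by rwa [zpowers_le]
  have hzero : ∀ j : ℤ, a ^ j = 1 ↔ ((2 ^ n : ℕ) : ℤ) ∣ j := by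
    intro j
    rw [← hn]; exact (orderOf_dvd_iff_zpow_eq_one).symm
  have hcop : ∀ j : ℤ, Odd j → IsCoprime j ((2 ^ n : ℕ) : ℤ) := by
    intro j hj
    push_cast
    apply IsCoprime.pow_right
    obtain ⟨q, rfl⟩ := hj
    exact ⟨1, -q, by ring⟩
  have hpos4 : ((4 : ℕ) : ℤ) ∣ ((2 ^ n : ℕ) : ℤ) := by exact_mod_cast hn2
  -- m even
  rcases Int.even_or_odd m with ⟨l, hl⟩ | hmodd
  swap
  · obtain ⟨c, d, hcd⟩ := hcop m hmodd
    have has : a ∈ zpowers s := by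
      have : a = (s ^ 2) ^ c := by
        rw [← hm, ← zpow_mul]
        have h1 : a ^ (d * ((2 ^ n : ℕ) : ℤ)) = 1 := (hzero _).mpr ⟨d, by ring⟩
        calc a = a ^ (c * m + d * ((2 ^ n : ℕ) : ℤ)) := by rw [hcd, zpow_one]
          _ = _ := by rw [zpow_add, h1, mul_one, mul_comm]
      rw [this]
      exact zpow_mem (pow_mem (mem_zpowers s) 2) c
    have hle : zpowers a ≤ zpowers s := by rwa [zpowers_le]
    have h1 := hmax s (hle hya)
    have h2 : Nat.card (zpowers s) ≤ Nat.card (zpowers a) := by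
      rwa [Nat.card_zpowers, Nat.card_zpowers]
    have h3 := Subgroup.eq_of_le_of_card_ge hle h2
    exact hsA (h3 ▸ mem_zpowers s)
  have huodd : Odd u := by
    by_contra hue
    rw [Int.not_odd_iff_even] at hue
    obtain ⟨q, hq⟩ := hue
    obtain ⟨w, hw⟩ := hpos4
    have h1 : s * a ^ (2 * w) * s⁻¹ = 1 := by
      rw [hconjz, hzero]
      exact ⟨q, by rw [hq, hw]; push_cast; ring⟩
    have h2 : a ^ (2 * w) = 1 := by
      have := congrArg (fun t => s⁻¹ * t * s) h1
      simpa [mul_assoc] using this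
    rw [hzero, hw] at h2
    obtain ⟨r, hr⟩ := h2
    have hw0 : w ≠ 0 := by
      rintro rfl
      have : (2 ^ n : ℕ) ≠ 0 := by positivity
      apply this
      exact_mod_cast (by simpa using hw : ((2 ^ n : ℕ) : ℤ) = 0)
    push_cast at hr
    have h5 : w * (2 - 4 * r) = 0 := by linarith
    rcases mul_eq_zero.mp h5 with h6 | h6
    · exact hw0 h6
    · omega
  have h14 : ∃ q : ℤ, u = 4 * q + 1 ∨ u = 4 * q + 3 := by
    obtain ⟨k, hk⟩ := huodd
    exact ⟨k / 2, by omega⟩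
  obtain ⟨q, hq | hq⟩ := h14
  · -- involution outside
    obtain ⟨c, d, hcd⟩ := hcop (2 * q + 1) ⟨q, rfl⟩
    have h1 : (s * a ^ (-(l * c))) ^ 2 = 1 := by
      have : (s * a ^ (-(l * c))) ^ 2 = (s * a ^ (-(l * c)) * s⁻¹) * s ^ 2 * a ^ (-(l * c)) := by
        rw [pow_two, pow_two]; group
      rw [this, hconjz, ← hm, ← zpow_add, ← zpow_add, hzero]
      refine ⟨2 * l * d, ?_⟩
      rw [hq, hl]
      linear_combination (-2 * l) * hcd
    have h2 : s * a ^ (-(l * c)) ∈ zpowers a := by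
      apply hya'
      apply h
      rw [show 4 = 2 * 2 from rfl, pow_mul, h1, one_pow]
    exact hsA ((mul_mem_cancel_right (zpow_mem (mem_zpowers a) _)).mp h2)
  · have h1 : s * a ^ m * s⁻¹ = a ^ m := by rw [hm]; group
    rw [hconjz] at h1
    have h2 : a ^ (u * m - m) = 1 := by rw [zpow_sub, h1, mul_inv_cancel]
    rw [hzero] at h2
    have h3 : ((2 ^ n : ℕ) : ℤ) ∣ 2 * m := by
      have h4 : u * m - m = (2 * q + 1) * (2 * m) := by rw [hq]; ring
      rw [h4] at h2
      exact ((hcop (2 * q + 1) ⟨q, rfl⟩).symm).dvd_of_dvd_mul_left h2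
    apply hsA
    apply hya'
    apply h
    rw [show 4 = 2 * 2 from rfl, pow_mul, ← hm, ← zpow_natCast, ← zpow_mul, hzero]
    rw [mul_comm]; exact h3

/-- In a four-element group of exponent two. -/
theorem four_cases {G : Type*} [Group G] [Finite G] (V : Subgroup G) (hV : Nat.card V = 4)
    (hsq : ∀ x ∈ V, x ^ 2 = 1) {v w : G} (hv : v ∈ V) (hw : w ∈ V) (hv1 : v ≠ 1) (hw1 : w ≠ 1)
    (hvw : v ≠ w) (x : G) (hx : x ∈ V) : x = 1 ∨ x = v ∨ x = w ∨ x = v * w := by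
  classical
  have hcard : (V : Set G).ncard = 4 := by rw [← hV]; rfl
  have hs : ({1, v, w, v * w} : Set G) ⊆ V := by
    intro t ht
    simp only [Set.mem_insert_iff, Set.mem_singleton_iff] at ht
    rcases ht with rfl | rfl | rfl | rfl
    · exact one_mem V
    · exact hv
    · exact hw
    · exact mul_mem hv hw
  have hv2 : v * v = 1 := by have := hsq v hv; rwa [pow_two] at this
  have h4 : ({1, v, w, v * w} : Set G).ncard = 4 := by
    have e : ({1, v, w, v * w} : Set G) = (({1, v, w, v * w} : Finset G) : Set G) := by
      push_cast; rfl
    have n1 : 1 ≠ v * w := by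
      intro h
      rw [← hv2] at h
      exact hvw (mul_left_cancel h)
    have n2 : v ≠ v * w := fun h => hw1 (by simpa using h)
    have n3 : w ≠ v * w := fun h => hv1 (by simpa using h)
    rw [e, Set.ncard_coe_finset, Finset.card_insert_of_notMem, Finset.card_insert_of_notMem,
      Finset.card_insert_of_notMem, Finset.card_singleton]
    · simpa using n3
    · simp only [Finset.mem_insert, Finset.mem_singleton, not_or]
      exact ⟨hvw, n2⟩
    · simp only [Finset.mem_insert, Finset.mem_singleton, not_or]
      exact ⟨hv1.symm, hw1.symm, n1⟩
  have := Set.eq_of_subset_of_ncard_le hs (by omega) (Set.toFinite _)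
  have hx' : x ∈ ({1, v, w, v * w} : Set G) := by rw [this]; exact hx
  simpa using hx'

theorem index_odd_of_frattini {G : Type*} [Group G] [Finite G] (V N : Subgroup G)
    (hVn : V.Normal) (hN : N.Normal)
    (hV : Nat.card V = 4) (hVm : ∀ x : G, x ∈ V ↔ x ^ 2 = 1) (hVN : V ≤ N)
    (h3 : V.relIndex N = 3) (hcen : ∀ x ∈ N, (∀ v ∈ V, x * v = v * x) → x ∈ V) :
    Odd V.index := by
  have : Fact (Nat.Prime 3) := ⟨Nat.prime_three⟩
  have hsq : ∀ x ∈ V, x ^ 2 = 1 := fun x hx => (hVm x).mp hx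
  have hcN : Nat.card N = 12 := by
    have := relIndex_mul_relIndex ⊥ V N bot_le hVN
    rw [relIndex_bot_left, relIndex_bot_left, hV, h3] at this
    omega
  obtain ⟨R⟩ : Nonempty (Sylow 3 N) := inferInstance
  have hR : Nat.card R = 3 := by
    rw [Sylow.card_eq_multiplicity, hcN]
    have : (12 : ℕ).factorization 3 = 1 := by
      rw [Nat.factorization_def _ Nat.prime_three]
      rw [show 12 = 3 * 4 from rfl, padicValNat.mul (by norm_num) (by norm_num)]
      rw [padicValNat.eq_zero_of_not_dvd (n := 4) (by norm_num)]
      simp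
    rw [this, pow_one]
  have hfr := Sylow.normalizer_sup_eq_top R
  set R' : Subgroup G := (R : Subgroup N).map N.subtype with hR'
  have hR'c : Nat.card R' = 3 := by
    rw [hR', card_map_of_injective N.subtype_injective]; exact hR
  have hdisj : V ⊓ R' = ⊥ := (disjoint_of_coprime_natCard (by rw [hV, hR'c]; norm_num)).eq_bot
  have hR'N : R' ≤ N := by rw [hR']; exact map_subtype_le _
  have hnodd : Odd (Nat.card (normalizer (R' : Set G))) := by
    apply odd_of_no_inv
    intro v hv hv2
    by_contra hv1
    have hvV : v ∈ V := (hVm v).mpr hv2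
    have hcomm : ∀ r ∈ R', v * r = r * v := by
      intro r hr
      have h1 : v * r * v⁻¹ * r⁻¹ ∈ V ⊓ R' := by
        refine ⟨?_, ?_⟩
        · have : v * (r * v⁻¹ * r⁻¹) ∈ V := mul_mem hvV (hVn.conj_mem _ (inv_mem hvV) r)
          simpa [mul_assoc] using this
        · exact R'.mul_mem ((mem_normalizer_iff.mp hv r).mp hr) (R'.inv_mem hr)
      rw [hdisj, mem_bot] at h1
      rw [mul_inv_eq_one, mul_inv_eq_iff_eq_mul] at h1
      exact h1
    have hR'bot : R' = ⊥ := by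
      rw [eq_bot_iff]
      intro r hr
      rw [← hdisj]
      refine ⟨hcen r (hR'N hr) ?_, hr⟩
      have hr3 : r ^ 3 = 1 := by
        have : (⟨r, hr⟩ : R') ^ Nat.card R' = 1 := pow_card_eq_one'
        rw [hR'c] at this
        exact congrArg Subtype.val this
      intro w hw
      by_cases hw1 : w = 1
      · rw [hw1]; simp
      by_cases hwv : v = w
      · rw [← hwv]; exact (hcomm r hr).symm
      have hrw : r * w * r⁻¹ ∈ V := hVn.conj_mem _ hw r
      have hvr : r * v * r⁻¹ = v := by rw [← hcomm r hr]; group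
      have hvv : v * v = 1 := by rw [← pow_two]; exact hv2
      rcases four_cases V hV hsq hvV hw hv1 hw1 hwv _ hrw with e | e | e | e
      · exact absurd (by simpa using e) hw1
      · have : w = v := by
          have h1 : r * w * r⁻¹ = r * v * r⁻¹ := by rw [e, hvr]
          simpa using h1
        exact absurd this.symm hwv
      · rw [mul_inv_eq_iff_eq_mul] at e
        exact e
      · exfalso
        have e2 : r ^ 3 * w * (r ^ 3)⁻¹ = v * w := by
          have : r ^ 3 * w * (r ^ 3)⁻¹ = r * (r * (r * w * r⁻¹) * r⁻¹) * r⁻¹ := by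
            simp [pow_succ, mul_assoc]
          rw [this, e]
          have : r * (v * w) * r⁻¹ = w := by
            have : r * (v * w) * r⁻¹ = (r * v * r⁻¹) * (r * w * r⁻¹) := by group
            rw [this, hvr, e, ← mul_assoc, hvv, one_mul]
          rw [this, e]
        rw [hr3] at e2
        apply hv1
        simpa using e2
    rw [hR'bot] at hR'c
    simp at hR'c
  have h5 : N.index ∣ Nat.card (normalizer (R' : Set G)) := by
    rw [← relIndex_top_right, ← hfr, relIndex_sup_right]
    exact relIndex_dvd_card _ _
  have h6 : Odd N.index := Odd.of_dvd_nat hnodd h5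
  rw [← relIndex_mul_index hVN, h3]
  exact Odd.mul (by decide) h6

end QGrp

namespace QGrp

open Subgroup

def Q2 (G : Type*) [Group G] : Prop :=
  ∀ k : ℕ, Nat.card {x : G // x ^ 2 ^ k = 1} ≤ 4 ^ k

theorem card_quot {G : Type*} [Group G] [Finite G] (V : Subgroup G) [V.Normal]
    (hVm : ∀ x : G, x ∈ V ↔ x ^ 2 = 1) (k : ℕ) :
    Nat.card {x : G ⧸ V // x ^ 2 ^ k = 1} * Nat.card V
      = Nat.card {x : G // x ^ 2 ^ (k + 1) = 1} := by
  have e := Nat.card_congr (QuotientGroup.preimageMkEquivSubgroupProdSet V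
    {x : G ⧸ V | x ^ 2 ^ k = 1})
  rw [Nat.card_prod] at e
  rw [mul_comm]
  refine Eq.trans e.symm (Nat.card_congr (Equiv.subtypeEquivRight fun x => ?_))
  show ((x : G ⧸ V) ^ 2 ^ k = 1) ↔ _
  rw [← QuotientGroup.mk_pow, QuotientGroup.eq_one_iff, hVm, ← pow_mul, pow_succ]

theorem Q2_quot_odd {G : Type*} [Group G] [Finite G] (hQ : Q2 G) (N : Subgroup G) [N.Normal]
    (hN : Odd (Nat.card N)) : Q2 (G ⧸ N) := by
  intro k
  refine le_trans ?_ (hQ k)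
  have hco : Nat.Coprime (Nat.card N) (2 ^ k) :=
    Nat.Coprime.pow_right k (Nat.coprime_two_right.mpr hN)
  refine Nat.card_le_card_of_surjective
    (fun x : {x : G // x ^ 2 ^ k = 1} =>
      (⟨(x.1 : G ⧸ N), by rw [← QuotientGroup.mk_pow, x.2]; rfl⟩ :
        {x : G ⧸ N // x ^ 2 ^ k = 1})) ?_
  rintro ⟨x, hx⟩
  induction x using QuotientGroup.induction_on with
  | H g =>
    obtain ⟨u, hu1, hu2⟩ := Nat.chineseRemainder hco 0 1
    have hxN : g ^ 2 ^ k ∈ N := by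
      rwa [← QuotientGroup.mk_pow, QuotientGroup.eq_one_iff] at hx
    refine ⟨⟨g ^ u, ?_⟩, ?_⟩
    · obtain ⟨d, hd⟩ := (Nat.modEq_zero_iff_dvd).mp hu1
      rw [← pow_mul, mul_comm, pow_mul, hd, pow_mul]
      have : (⟨_, hxN⟩ : N) ^ Nat.card N = 1 := pow_card_eq_one'
      have h2 : (g ^ 2 ^ k) ^ Nat.card N = 1 := congrArg Subtype.val this
      rw [h2, one_pow]
    · apply Subtype.ext
      show ((g ^ u : G) : G ⧸ N) = g
      rw [QuotientGroup.mk_pow]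
      have : (g : G ⧸ N) ^ u = (g : G ⧸ N) ^ 1 := by
        rw [pow_eq_pow_iff_modEq]
        exact hu2.of_dvd (orderOf_dvd_of_pow_eq_one hx)
      rw [this, pow_one]

theorem card_comap_mk {G : Type*} [Group G] [Finite G] (N : Subgroup G) [N.Normal]
    (K : Subgroup (G ⧸ N)) :
    Nat.card (K.comap (QuotientGroup.mk' N)) = Nat.card N * Nat.card K := by
  have e := Nat.card_congr (QuotientGroup.preimageMkEquivSubgroupProdSet N (K : Set (G ⧸ N)))
  rw [Nat.card_prod] at e
  exact e

theorem good_of_quot_odd {G : Type*} [Group G] [Finite G] (N : Subgroup G) [N.Normal]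
    (hN : Odd (Nat.card N)) (h : Good (G ⧸ N)) : Good G := by
  obtain ⟨K, M, hK, hM, hKM, hKo, ⟨j, hj⟩, hi⟩ := h
  refine ⟨K.comap (QuotientGroup.mk' N), M.comap (QuotientGroup.mk' N), hK.comap _, hM.comap _,
    comap_mono hKM, ?_, ⟨j, ?_⟩, ?_⟩
  · rw [card_comap_mk]; exact hN.mul hKo
  · rw [relIndex_comap, map_comap_eq_self_of_surjective (QuotientGroup.mk'_surjective N), hj]
  · rwa [index_comap_of_surjective _ (QuotientGroup.mk'_surjective N)]

/-- Conjugation action on an invariant set. -/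
def conjPerm {G : Type*} [Group G] (X : Set G) (hX : ∀ g : G, ∀ x ∈ X, g * x * g⁻¹ ∈ X) :
    G →* Equiv.Perm X where
  toFun g :=
    { toFun := fun x => ⟨g * x * g⁻¹, hX g x x.2⟩
      invFun := fun x => ⟨g⁻¹ * x * g, by simpa using hX g⁻¹ x x.2⟩
      left_inv := fun x => Subtype.ext (by simp [mul_assoc])
      right_inv := fun x => Subtype.ext (by simp [mul_assoc]) }
  map_one' := by ext x; simp
  map_mul' a b := by ext x; simp [mul_assoc]

theorem conjPerm_apply {G : Type*} [Group G] (X : Set G)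
    (hX : ∀ g : G, ∀ x ∈ X, g * x * g⁻¹ ∈ X) (g : G) (x : X) :
    (conjPerm X hX g x : G) = g * x * g⁻¹ := rfl

theorem conjPerm_eq_one {G : Type*} [Group G] (X : Set G)
    (hX : ∀ g : G, ∀ x ∈ X, g * x * g⁻¹ ∈ X) (g : G) :
    conjPerm X hX g = 1 ↔ ∀ x ∈ X, g * x = x * g := by
  constructor
  · intro h x hx
    have := congrArg (fun f : Equiv.Perm X => ((f ⟨x, hx⟩ : X) : G)) h
    simp only [conjPerm_apply, Equiv.Perm.coe_one, id_eq] at this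
    rwa [mul_inv_eq_iff_eq_mul] at this
  · intro h
    ext x
    rw [conjPerm_apply, Equiv.Perm.coe_one, id_eq, mul_inv_eq_iff_eq_mul]
    exact h x x.2

theorem perm_three {X : Type*} [Fintype X] [DecidableEq X] (hX : Fintype.card X = 3)
    (σ : Equiv.Perm X) (h2 : σ ^ 2 = 1) (hs : Equiv.Perm.sign σ = 1) : σ = 1 := by
  have key : ∀ τ : Equiv.Perm (Fin 3), τ * τ = 1 → Equiv.Perm.sign τ = 1 → τ = 1 := by decide
  let e := Fintype.equivFinOfCardEq hX
  have h1 : e.permCongrHom σ = 1 := by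
    apply key
    · rw [← map_mul, ← pow_two, h2, map_one]
    · have := Equiv.Perm.sign_permCongr e σ
      rw [hs] at this
      exact this
  exact (map_eq_one_iff _ e.permCongrHom.injective).mp h1

/-- The case of noncommuting involutions. -/
theorem good_of_noncomm {G : Type*} [Group G] [Finite G]
    (hQ : Nat.card {x : G // x ^ 2 = 1} ≤ 4) (a b : G) (ha : a ^ 2 = 1) (hb : b ^ 2 = 1)
    (hab : a * b ≠ b * a) : Good G := by
  classical
  have : Fact (Nat.Prime 2) := ⟨Nat.prime_two⟩
  have ha' : a * a = 1 := by rwa [pow_two] at ha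
  have hb' : b * b = 1 := by rwa [pow_two] at hb
  have hai : a⁻¹ = a := inv_eq_of_mul_eq_one_left ha'
  have hbi : b⁻¹ = b := inv_eq_of_mul_eq_one_left hb'
  set c := a * b * a with hc
  have hc2 : c ^ 2 = 1 := by
    rw [pow_two, hc]
    calc a * b * a * (a * b * a) = a * b * (a * a) * b * a := by group
      _ = 1 := by rw [ha', mul_one, mul_assoc a b b, hb', mul_one, ha']
  have n1 : (1 : G) ≠ a := by rintro rfl; simp at hab
  have n2 : (1 : G) ≠ b := by rintro rfl; simp at hab
  have n3 : a ≠ b := by rintro rfl; simp at hab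
  have hca : c ≠ a := by
    intro h
    have : a * (b * a) = a * 1 := by rw [← mul_assoc, ← hc, h, mul_one]
    have h2 := mul_left_cancel this
    apply hab
    have h3 : b = a := by rw [mul_eq_one_iff_eq_inv] at h2; rw [h2, hai]
    exact absurd h3.symm n3
  have hcb : c ≠ b := by
    intro h
    apply hab
    have h2 : a * b * a * a = b * a := by rw [← hc, h]
    rwa [mul_assoc, ha', mul_one] at h2
  have hc1 : (1 : G) ≠ c := by
    intro h
    have h2 : a * 1 * a = a * (a * b * a) * a := by rw [← hc, ← h]
    have h3 : a * (a * b * a) * a = (a * a) * b * (a * a) := by group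
    rw [h3, ha'] at h2
    simp [ha'] at h2
    exact n2 h2
  have hS4 : ({x : G | x ^ 2 = 1}).ncard ≤ 4 := hQ
  have h4 : ({1, a, b, c} : Finset G).card = 4 := by
    rw [Finset.card_insert_of_notMem, Finset.card_insert_of_notMem,
      Finset.card_insert_of_notMem, Finset.card_singleton]
    · simpa using hcb.symm
    · simp only [Finset.mem_insert, Finset.mem_singleton, not_or]
      exact ⟨n3, hca.symm⟩
    · simp only [Finset.mem_insert, Finset.mem_singleton, not_or]
      exact ⟨n1, n2, hc1⟩
  have hSeq : (({1, a, b, c} : Finset G) : Set G) = {x : G | x ^ 2 = 1} := by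
    apply Set.eq_of_subset_of_ncard_le _ _ (Set.toFinite _)
    · intro x hx
      simp only [Finset.coe_insert, Finset.coe_singleton, Set.mem_insert_iff,
        Set.mem_singleton_iff] at hx
      rcases hx with rfl | rfl | rfl | rfl
      · simp
      · exact ha
      · exact hb
      · exact hc2
    · rw [Set.ncard_coe_finset, h4]; exact hS4
  let X : Set G := {x | x ^ 2 = 1 ∧ x ≠ 1}
  have hX : ∀ g : G, ∀ x ∈ X, g * x * g⁻¹ ∈ X := by
    rintro g x ⟨h1, h2⟩
    refine ⟨by rw [conj_pow, h1]; simp, fun h => h2 (by simpa using h)⟩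
  have : Fintype X := Fintype.ofFinite X
  have hXc : Fintype.card X = 3 := by
    have h1 : X = (({a, b, c} : Finset G) : Set G) := by
      ext x
      have h2 : x ∈ (({1, a, b, c} : Finset G) : Set G) ↔ x ^ 2 = 1 := by rw [hSeq]; rfl
      simp only [Finset.coe_insert, Finset.coe_singleton, Set.mem_insert_iff,
        Set.mem_singleton_iff] at h2 ⊢
      constructor
      · rintro ⟨h3, h4⟩
        exact (h2.mpr h3).resolve_left h4
      · intro h3
        refine ⟨h2.mp (Or.inr h3), ?_⟩
        rintro rfl
        rcases h3 with h | h | h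
        · exact n1 h
        · exact n2 h
        · exact hc1 h
    rw [← Nat.card_eq_fintype_card]
    show X.ncard = 3
    rw [h1, Set.ncard_coe_finset, Finset.card_insert_of_notMem, Finset.card_insert_of_notMem,
      Finset.card_singleton]
    · simpa using hcb.symm
    · simp only [Finset.mem_insert, Finset.mem_singleton, not_or]
      exact ⟨n3, hca.symm⟩
  let ψ : G →* ℤˣ := Equiv.Perm.sign.comp (conjPerm X hX)
  refine ⟨ψ.ker, ⊤, inferInstance, inferInstance, le_top, ?_, ?_, Or.inl index_top⟩
  · apply odd_of_no_inv
    intro x hx h2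
    by_contra hx1
    have h3 : conjPerm X hX x = 1 := by
      apply perm_three hXc
      · rw [← map_pow, h2, map_one]
      · exact hx
    rw [conjPerm_eq_one] at h3
    have hxa := h3 a ⟨ha, n1.symm⟩
    have hxb := h3 b ⟨hb, n2.symm⟩
    have hmem : x ∈ (({1, a, b, c} : Finset G) : Set G) := by rw [hSeq]; exact h2
    simp only [Finset.coe_insert, Finset.coe_singleton, Set.mem_insert_iff,
        Set.mem_singleton_iff] at hmem
    rcases hmem with h | h | h | h
    · exact hx1 h
    · rw [h] at hxb; exact hab hxb
    · rw [h] at hxa; exact hab hxa.symm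
    · rw [h, hc] at hxa
      have h5 : a * b * (a * a) = (a * a) * b * a := by
        calc a * b * (a * a) = a * b * a * a := by group
          _ = a * (a * b * a) := hxa
          _ = _ := by group
      rw [ha'] at h5
      simp only [mul_one, one_mul] at h5
      exact hab h5
  · rw [relIndex_top_right, index_ker]
    have h1 : Nat.card ψ.range ∣ 2 ^ 1 := by
      have := card_subgroup_dvd_card ψ.range
      rwa [show Nat.card ℤˣ = 2 by simp] at this
    obtain ⟨j, _, hj⟩ := (Nat.dvd_prime_pow Nat.prime_two).mp h1
    exact ⟨j, hj⟩

theorem fours_perm {G : Type*} [Group G] [Finite G] (V : Subgroup G) (hVn : V.Normal)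
    (hV : Nat.card V = 4) : ∃ φ : G →* Equiv.Perm {x : G | x ∈ V ∧ x ≠ 1},
      φ.ker = centralizer (V : Set G) ∧ Nat.card {x : G | x ∈ V ∧ x ≠ 1} = 3 := by
  refine ⟨conjPerm _ ?_, ?_, ?_⟩
  · rintro g x ⟨h1, h2⟩
    exact ⟨hVn.conj_mem _ h1 g, fun h => h2 (by simpa using h)⟩
  · ext g
    rw [MonoidHom.mem_ker, conjPerm_eq_one, mem_centralizer_iff]
    constructor
    · intro h x hx
      by_cases hx1 : x = 1
      · simp [hx1]
      · exact (h x ⟨hx, hx1⟩).symm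
    · intro h x hx
      exact (h x hx.1).symm
  · show ({x : G | x ∈ V ∧ x ≠ 1}).ncard = 3
    have h1 : {x : G | x ∈ V ∧ x ≠ 1} = (V : Set G) \ {1} := by ext; simp
    have h2 : (V : Set G).ncard = 4 := hV
    rw [h1, Set.ncard_sdiff_singleton_of_mem (one_mem V), h2]

theorem cen_relIndex {G : Type*} [Group G] [Finite G] (V N : Subgroup G) (hVn : V.Normal)
    (hV : Nat.card V = 4) : (centralizer (V : Set G)).relIndex N ∣ 6 := by
  obtain ⟨φ, hφ, h3⟩ := fours_perm V hVn hV
  rw [← hφ, relIndex_ker]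
  have := card_subgroup_dvd_card (N.map φ)
  rwa [Nat.card_perm, h3] at this

theorem centralizer_normal {G : Type*} [Group G] (V : Subgroup G) (hVn : V.Normal) :
    (centralizer (V : Set G)).Normal := inferInstance

/-- Klein four group of involutions. -/
theorem good_of_klein {G : Type*} [Group G] [Finite G] (hO : NoOdd G) (V : Subgroup G)
    [hVn : V.Normal] (hV : Nat.card V = 4) (hVm : ∀ x : G, x ∈ V ↔ x ^ 2 = 1)
    (hVc : ∀ x ∈ V, ∀ y ∈ V, x * y = y * x)
    (hq : Good (G ⧸ V)) : Good G := by
  have : Fact (Nat.Prime 2) := ⟨Nat.prime_two⟩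
  have hVp : IsPGroup 2 V := IsPGroup.of_card (n := 2) (by rw [hV]; rfl)
  obtain ⟨K, M, hK, hM, hKM, hKo, ⟨j, hj⟩, hi⟩ := hq
  have hcn := centralizer_normal V hVn
  -- general claim
  have hVC : V ≤ centralizer (V : Set G) := fun x hx => mem_centralizer_iff.mpr
    fun y hy => hVc y hy x hx
  have claim : ∀ N : Subgroup G, N.Normal → V ≤ N → Odd (V.relIndex N) →
      N ⊓ centralizer (V : Set G) = V ∧ (V.relIndex N = 1 ∨ V.relIndex N = 3) := by
    intro N hN hVN hodd
    have hle : N ⊓ centralizer (V : Set G) ≤ V := by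
      apply le_of_central hO _ V inferInstance (le_inf hVN hVC) _ hVp
      · refine Odd.of_dvd_nat hodd ?_
        rw [← relIndex_mul_relIndex V _ N (le_inf hVN hVC) inf_le_left]
        exact dvd_mul_right _ _
      · rintro v hv x ⟨_, hx⟩
        exact mem_centralizer_iff.mp hx v hv
    have heq : N ⊓ centralizer (V : Set G) = V := le_antisymm hle (le_inf hVN hVC)
    refine ⟨heq, ?_⟩
    have h6 : V.relIndex N ∣ 6 := by
      have := cen_relIndex V N hVn hV
      rwa [← inf_relIndex_right, inf_comm, heq] at this
    have h7 : V.relIndex N ≤ 6 := Nat.le_of_dvd (by norm_num) h6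
    obtain ⟨d, hd⟩ := hodd
    rw [hd] at h6 h7 ⊢
    have : d ≤ 2 := by omega
    interval_cases d
    · left; rfl
    · right; rfl
    · norm_num at h6
  have hV_comap : ∀ L : Subgroup (G ⧸ V), V ≤ L.comap (QuotientGroup.mk' V) := by
    intro L x hx
    rw [mem_comap, QuotientGroup.mk'_apply, (QuotientGroup.eq_one_iff x).mpr hx]
    exact one_mem L
  have hrel : V.relIndex (K.comap (QuotientGroup.mk' V)) = Nat.card K := by
    have h1 := relIndex_mul_relIndex ⊥ V _ bot_le (hV_comap K)
    rw [relIndex_bot_left, relIndex_bot_left, card_comap_mk] at h1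
    exact Nat.eq_of_mul_eq_mul_left (by omega) h1
  obtain ⟨hNc, h13⟩ := claim (K.comap (QuotientGroup.mk' V)) (hK.comap _) (hV_comap K)
    (by rw [hrel]; exact hKo)
  rcases h13 with h1 | h3
  · rw [hrel, card_eq_one] at h1
    subst h1
    rw [relIndex_bot_left] at hj
    refine good_of_pgroup (M.comap (QuotientGroup.mk' V)) (hM.comap _) ?_ ?_
    · apply IsPGroup.of_card (n := 2 + j)
      rw [card_comap_mk, hV, hj, pow_add]; rfl
    · rwa [index_comap_of_surjective _ (QuotientGroup.mk'_surjective V)]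
  · have hodd := index_odd_of_frattini V _ hVn (hK.comap _) hV hVm (hV_comap K) h3 (by
      intro x hx hxc
      rw [← hNc]
      exact ⟨hx, mem_centralizer_iff.mpr fun v hv => (hxc v hv).symm⟩)
    obtain ⟨-, h5⟩ := claim ⊤ inferInstance le_top (by rwa [relIndex_top_right])
    rw [relIndex_top_right] at h5
    exact good_of_pgroup V hVn hVp h5

end QGrp

namespace QGrp

open Subgroup

theorem fin_mod {α : Type*} [DecidableEq α] (p : ℕ) [Fact p.Prime] (s : Finset α) (f : α → α)
    (hf : ∀ x ∈ s, f x ∈ s) (hp : ∀ x ∈ s, f^[p] x = x) :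
    s.card ≡ (s.filter (fun x => f x = x)).card [MOD p] := by
  let g : Function.End s := fun x => ⟨f x, hf x x.2⟩
  have hg : ∀ n : ℕ, ∀ x : s, (((g ^ n : Function.End s) x : s) : α) = f^[n] x := by
    intro n
    induction n with
    | zero => intro x; rfl
    | succ n ih =>
      intro x
      rw [pow_succ, Function.iterate_succ_apply]
      exact ih (g x)
  have h1 : g ^ p ^ 1 = 1 := by
    funext x
    apply Subtype.ext
    rw [pow_one, hg]
    exact hp x x.2
  have h2 := Equiv.Perm.card_fixedPoints_modEq h1
  rw [Fintype.card_coe] at h2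
  refine h2.trans ?_
  rw [← Fintype.card_coe]
  apply congrArg (fun n => n % p)
  refine Fintype.card_congr ⟨fun x => ⟨x.1.1, ?_⟩, fun x => ⟨⟨x.1, ?_⟩, ?_⟩, ?_, ?_⟩
  · rw [Finset.mem_filter]
    exact ⟨x.1.2, congrArg Subtype.val x.2⟩
  · exact (Finset.mem_filter.mp x.2).1
  · exact Subtype.ext (Finset.mem_filter.mp x.2).2
  · intro x; rfl
  · intro x; rfl

theorem involution_config {H : Type*} [Group H] [Fintype H] [DecidableEq H] (X : Finset H)
    (hX : ∀ x, x ∈ X ↔ x ^ 2 = 1 ∧ x ≠ 1) (hne : X.Nonempty) (h7 : X.card ≤ 7)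
    (star : ∀ i ∈ X, ∀ j ∈ X, ∀ k ∈ X, i ≠ j → i ≠ k → j ≠ k → i * j = j * i → i * k = k * i →
      j * k = k * j → k = i * j)
    (hpart : ∀ x ∈ X, ∃ y ∈ X, y ≠ x ∧ x * y = y * x)
    (hnc : ∀ x ∈ X, ∃ g, g * x ≠ x * g) :
    X.card = 3 ∧ ∀ x ∈ X, ∀ y ∈ X, x * y = y * x := by
  have : Fact (Nat.Prime 2) := ⟨Nat.prime_two⟩
  have : Fact (Nat.Prime 3) := ⟨Nat.prime_three⟩
  have hsq : ∀ x ∈ X, x * x = 1 := fun x hx => by rw [← pow_two]; exact ((hX x).mp hx).1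
  have hn1 : ∀ x ∈ X, x ≠ 1 := fun x hx => ((hX x).mp hx).2
  have hconj : ∀ g, ∀ x ∈ X, g * x * g⁻¹ ∈ X := by
    intro g x hx
    rw [hX] at hx ⊢
    refine ⟨by rw [conj_pow, hx.1]; simp, fun h => hx.2 (by simpa using h)⟩
  have hmulX : ∀ x ∈ X, ∀ y ∈ X, x ≠ y → x * y = y * x → x * y ∈ X := by
    intro x hx y hy hxy hc
    rw [hX]
    constructor
    · rw [(show Commute x y from hc).mul_pow, ((hX x).mp hx).1, ((hX y).mp hy).1, one_mul]
    · intro h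
      apply hxy
      have : x * y = x * x := by rw [h, hsq x hx]
      exact (mul_left_cancel this).symm
  let F : H → Finset H := fun x => X.filter (fun y => x * y = y * x)
  let c : H → ℕ := fun x => (F x).card
  have hxF : ∀ x ∈ X, x ∈ F x := fun x hx => Finset.mem_filter.mpr ⟨hx, rfl⟩
  have hcle : ∀ x, c x ≤ X.card := fun x => Finset.card_le_card (Finset.filter_subset _ _)
  have hce : ∀ x ∈ X, ((F x).erase x).card = c x - 1 := fun x hx =>
    Finset.card_erase_of_mem (hxF x hx)
  have hc1 : ∀ x ∈ X, 1 ≤ c x := fun x hx => Finset.card_pos.mpr ⟨x, hxF x hx⟩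
  have hmemE : ∀ x y, y ∈ (F x).erase x ↔ y ≠ x ∧ y ∈ X ∧ x * y = y * x := by
    intro x y
    rw [Finset.mem_erase, Finset.mem_filter]
  have hcodd : ∀ x ∈ X, c x % 2 = 1 := by
    intro x hx
    have h := fin_mod 2 ((F x).erase x) (fun y => x * y) (by
      intro y hy
      rw [hmemE] at hy ⊢
      refine ⟨?_, hmulX x hx y hy.2.1 hy.1.symm hy.2.2, ?_⟩
      · intro h
        exact hn1 y hy.2.1 (by simpa using h)
      · rw [hy.2.2, ← mul_assoc, hy.2.2]) (by
      intro y hy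
      show x * (x * y) = y
      rw [← mul_assoc, hsq x hx, one_mul])
    rw [Finset.filter_false_of_mem] at h
    · rw [hce x hx, Finset.card_empty] at h
      have h2 := hc1 x hx
      unfold Nat.ModEq at h
      omega
    · intro y hy h
      exact hn1 x hx (by simpa using h)
  have htodd : ∀ x ∈ X, X.card % 2 = c x % 2 := by
    intro x hx
    have h := fin_mod 2 X (fun y => x * y * x⁻¹) (fun y hy => hconj x y hy) (by
      intro y hy
      show x * (x * y * x⁻¹) * x⁻¹ = y
      calc x * (x * y * x⁻¹) * x⁻¹ = (x * x) * y * (x * x)⁻¹ := by group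
        _ = y := by rw [hsq x hx]; simp)
    have e : X.filter (fun y => x * y * x⁻¹ = y) = F x := by
      apply Finset.filter_congr
      intro y _
      rw [mul_inv_eq_iff_eq_mul]
    rw [e] at h
    exact h
  have hsum : (∑ x ∈ X, (c x - 1)) % 3 = 0 := by
    let s : Finset (Σ _ : H, H) := X.sigma (fun x => (F x).erase x)
    have hs : s.card = ∑ x ∈ X, (c x - 1) := by
      rw [Finset.card_sigma]
      exact Finset.sum_congr rfl hce
    have hms : ∀ p, p ∈ s ↔ p.1 ∈ X ∧ p.2 ≠ p.1 ∧ p.2 ∈ X ∧ p.1 * p.2 = p.2 * p.1 := by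
      intro p
      rw [Finset.mem_sigma, hmemE]
    have h := fin_mod 3 s (fun p => ⟨p.2, p.1 * p.2⟩) (by
      intro p hp
      rw [hms] at hp ⊢
      obtain ⟨h1, h2, h3, h4⟩ := hp
      refine ⟨h3, ?_, hmulX _ h1 _ h3 h2.symm h4, ?_⟩
      · intro h
        exact hn1 _ h1 (by simpa using h)
      · show p.2 * (p.1 * p.2) = p.1 * p.2 * p.2
        rw [← mul_assoc, h4]) (by
      intro p hp
      rw [hms] at hp
      obtain ⟨h1, h2, h3, h4⟩ := hp
      obtain ⟨a, b⟩ := p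
      simp only at h1 h2 h3 h4
      have e1 : b * (a * b) = a := by rw [h4, ← mul_assoc, hsq b h3, one_mul]
      have e2 : (a * b) * (b * (a * b)) = b := by
        rw [e1, h4, mul_assoc, hsq a h1, mul_one]
      show (⟨b * (a * b), (a * b) * (b * (a * b))⟩ : Σ _ : H, H) = ⟨a, b⟩
      rw [e2, e1])
    rw [Finset.filter_false_of_mem] at h
    · rw [hs, Finset.card_empty] at h
      exact h
    · intro p hp h
      rw [hms] at hp
      exact hp.2.1 (congrArg Sigma.fst h)
  -- small invariant sets
  have hsmall : ∀ W : Finset H, W ⊆ X → (∀ g, ∀ x ∈ W, g * x * g⁻¹ ∈ W) → W.card ≠ 1 ∧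
      W.card ≠ 2 := by
    intro W hWX hW
    constructor
    · intro h
      obtain ⟨x, rfl⟩ := Finset.card_eq_one.mp h
      obtain ⟨g, hg⟩ := hnc x (hWX (Finset.mem_singleton_self x))
      have := hW g x (Finset.mem_singleton_self x)
      rw [Finset.mem_singleton, mul_inv_eq_iff_eq_mul] at this
      exact hg this
    · intro h
      obtain ⟨x, y, hxy, rfl⟩ := Finset.card_eq_two.mp h
      have hx : x ∈ X := hWX (by simp)
      have hy : y ∈ X := hWX (by simp)
      have hc : x * y = y * x := by
        have := hW x y (by simp)
        simp only [Finset.mem_insert, Finset.mem_singleton] at this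
        rcases this with h | h
        · exfalso
          rw [mul_inv_eq_iff_eq_mul] at h
          exact hxy (mul_left_cancel h).symm
        · rwa [mul_inv_eq_iff_eq_mul] at h
      obtain ⟨g, hg⟩ := hnc _ (hmulX x hx y hy hxy hc)
      apply hg
      have h1 := hW g x (by simp)
      have h2 := hW g y (by simp)
      simp only [Finset.mem_insert, Finset.mem_singleton] at h1 h2
      have hinj : g * x * g⁻¹ ≠ g * y * g⁻¹ := fun h => hxy (by simpa using h)
      have h3 : g * (x * y) * g⁻¹ = (g * x * g⁻¹) * (g * y * g⁻¹) := by group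
      rw [← mul_inv_eq_iff_eq_mul, h3]
      rcases h1 with h1 | h1 <;> rcases h2 with h2 | h2
      · rw [h1, h2] at hinj; exact absurd rfl hinj
      · rw [h1, h2]
      · rw [h1, h2, hc]
      · rw [h1, h2] at hinj; exact absurd rfl hinj
  have hcconj : ∀ g, ∀ x, c (g * x * g⁻¹) = c x := by
    have hle : ∀ g, ∀ x, c x ≤ c (g * x * g⁻¹) := by
      intro g x
      refine Finset.card_le_card_of_injOn (fun y => g * y * g⁻¹) ?_ ?_
      · intro y hy
        have hy' := Finset.mem_filter.mp (Finset.mem_coe.mp hy)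
        apply Finset.mem_coe.mpr
        refine Finset.mem_filter.mpr ⟨hconj g y hy'.1, ?_⟩
        calc g * x * g⁻¹ * (g * y * g⁻¹) = g * (x * y) * g⁻¹ := by group
          _ = g * (y * x) * g⁻¹ := by rw [hy'.2]
          _ = _ := by group
      · intro y _ y' _ h
        simpa using h
    intro g x
    apply le_antisymm _ (hle g x)
    have := hle g⁻¹ (g * x * g⁻¹)
    have e : g⁻¹ * (g * x * g⁻¹) * g⁻¹⁻¹ = x := by group
    rwa [e] at this
  have hn : ∀ v, (X.filter (fun x => c x = v)).card ≠ 1 ∧ (X.filter (fun x => c x = v)).card ≠ 2 := by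
    intro v
    apply hsmall _ (Finset.filter_subset _ _)
    intro g x hx
    rw [Finset.mem_filter] at hx ⊢
    exact ⟨hconj g x hx.1, by rw [hcconj]; exact hx.2⟩
  have hval : ∀ x ∈ X, c x = 3 ∨ c x = 5 ∨ c x = 7 := by
    intro x hx
    obtain ⟨y, hy, hyx, hxy⟩ := hpart x hx
    have h2 : 1 ≤ ((F x).erase x).card := Finset.card_pos.mpr ⟨y, (hmemE x y).mpr ⟨hyx, hy, hxy⟩⟩
    rw [hce x hx] at h2
    have h3 := hcodd x hx
    have h4 := hcle x
    omega
  have ht : X.card = (X.filter (fun x => c x = 3)).card + (X.filter (fun x => c x = 5)).card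
      + (X.filter (fun x => c x = 7)).card := by
    rw [Finset.card_filter, Finset.card_filter, Finset.card_filter, ← Finset.sum_add_distrib,
      ← Finset.sum_add_distrib, Finset.card_eq_sum_ones]
    apply Finset.sum_congr rfl
    intro x hx
    rcases hval x hx with h | h | h <;> simp [h]
  have hS : ∑ x ∈ X, (c x - 1) = 2 * (X.filter (fun x => c x = 3)).card
      + 4 * (X.filter (fun x => c x = 5)).card + 6 * (X.filter (fun x => c x = 7)).card := by
    rw [Finset.card_filter, Finset.card_filter, Finset.card_filter, Finset.mul_sum, Finset.mul_sum,
      Finset.mul_sum, ← Finset.sum_add_distrib, ← Finset.sum_add_distrib]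
    apply Finset.sum_congr rfl
    intro x hx
    rcases hval x hx with h | h | h <;> simp [h]
  have hfull : ∀ x ∈ X, c x = X.card → ∀ y ∈ X, x * y = y * x := by
    intro x hx h y hy
    have : F x = X := Finset.eq_of_subset_of_card_le (Finset.filter_subset _ _) (le_of_eq h.symm)
    rw [← this] at hy
    exact (Finset.mem_filter.mp hy).2
  have hn7 : (X.filter (fun x => c x = 7)).card ≤ 1 := by
    by_contra hgt
    obtain ⟨x, hx, y, hy, hxy⟩ := Finset.one_lt_card.mp (by omega :
      1 < (X.filter (fun x => c x = 7)).card)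
    rw [Finset.mem_filter] at hx hy
    have h7' : X.card = 7 := by have := hcle x; omega
    have hxc := hfull x hx.1 (by omega)
    have hyc := hfull y hy.1 (by omega)
    have hsub : X ⊆ {x, y, x * y} := by
      intro k hk
      simp only [Finset.mem_insert, Finset.mem_singleton]
      by_cases hkx : k = x
      · exact Or.inl hkx
      by_cases hky : k = y
      · exact Or.inr (Or.inl hky)
      exact Or.inr (Or.inr (star x hx.1 y hy.1 k hk hxy (Ne.symm hkx) (Ne.symm hky)
        (hxc y hy.1) (hxc k hk) (hyc k hk)))
    have := (Finset.card_le_card hsub).trans Finset.card_le_three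
    omega
  have hn5 : (X.filter (fun x => c x = 5)).card = 0 ∨ 5 ≤ X.card := by
    rcases Finset.eq_empty_or_nonempty (X.filter (fun x => c x = 5)) with h | ⟨x, hx⟩
    · left; rw [h]; rfl
    · right
      rw [Finset.mem_filter] at hx
      have := hcle x
      omega
  have hto : X.card % 2 = 1 := by
    obtain ⟨x, hx⟩ := hne
    rw [htodd x hx, hcodd x hx]
  have a3 := hn 3
  have a5 := hn 5
  have a7 := hn 7
  rw [hS] at hsum
  have hX3 : X.card = 3 ∧ (X.filter (fun x => c x = 3)).card = 3 := by omega
  refine ⟨hX3.1, ?_⟩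
  intro x hx
  apply hfull x hx
  have : X.filter (fun x => c x = 3) = X :=
    Finset.eq_of_subset_of_card_le (Finset.filter_subset _ _) (by omega)
  rw [← this] at hx
  rw [(Finset.mem_filter.mp hx).2, hX3.1]

end QGrp

namespace QGrp

open Subgroup

/-- The group has a unique involution, generating the subgroup `Z`. -/
structure UI {G : Type*} [Group G] (Z : Subgroup G) (z : G) : Prop where
  ne : z ≠ 1
  mem : ∀ x, x ∈ Z ↔ x = 1 ∨ x = z
  sq : ∀ x : G, x * x = 1 ↔ x = 1 ∨ x = z
  cen : ∀ g, g * z = z * g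

section
variable {G : Type*} [Group G] {Z : Subgroup G} {z : G}

theorem UI.zz (h : UI Z z) : z * z = 1 := (h.sq z).mpr (Or.inr rfl)

theorem UI.mk_eq (h : UI Z z) (a b : G) : (a : G ⧸ Z) = (b : G ⧸ Z) ↔ b = a ∨ b = a * z := by
  rw [QuotientGroup.eq, h.mem, inv_mul_eq_one, inv_mul_eq_iff_eq_mul, eq_comm]

theorem UI.sqz [Z.Normal] (h : UI Z z) (a : G) (h2 : (a : G ⧸ Z) ^ 2 = 1) (h1 : (a : G ⧸ Z) ≠ 1) :
    a * a = z := by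
  rw [← QuotientGroup.mk_pow, QuotientGroup.eq_one_iff, h.mem, pow_two] at h2
  rcases h2 with h2 | h2
  · rw [h.sq, ← h.mem, ← QuotientGroup.eq_one_iff] at h2
    exact absurd h2 h1
  · exact h2

theorem UI.mk_sq [Z.Normal] (h : UI Z z) (a : G) (h2 : a * a = z) :
    (a : G ⧸ Z) ^ 2 = 1 ∧ (a : G ⧸ Z) ≠ 1 := by
  constructor
  · rw [← QuotientGroup.mk_pow, QuotientGroup.eq_one_iff, h.mem, pow_two]
    exact Or.inr h2
  · rw [Ne, QuotientGroup.eq_one_iff, h.mem, ← h.sq, h2]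
    exact h.ne

theorem UI.f2 (h : UI Z z) (a b : G) (ha : a * a = z) (hb : b * b = z) (hab : a * b = b * a) :
    (a : G ⧸ Z) = (b : G ⧸ Z) := by
  rw [QuotientGroup.eq, h.mem, ← h.sq]
  have : a⁻¹ * b = b * a⁻¹ := by
    rw [inv_mul_eq_iff_eq_mul, ← mul_assoc, hab, mul_inv_cancel_right]
  calc a⁻¹ * b * (a⁻¹ * b) = b * (a⁻¹ * a⁻¹) * b := by nth_rewrite 1 [this]; group
    _ = 1 := by
      rw [← mul_inv_rev, ha, ← hb]; group

theorem UI.comm [Z.Normal] (h : UI Z z) (a b : G) (hab : (a : G ⧸ Z) * b = b * a) :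
    b * a = a * b ∨ b * a = z * (a * b) := by
  rw [← QuotientGroup.mk_mul, ← QuotientGroup.mk_mul, h.mk_eq, h.cen] at hab
  exact hab

theorem UI.star [Z.Normal] (h : UI Z z) (i j k : G ⧸ Z) (hi : i ^ 2 = 1 ∧ i ≠ 1)
    (hj : j ^ 2 = 1 ∧ j ≠ 1) (hk : k ^ 2 = 1 ∧ k ≠ 1) (hij : i ≠ j) (hik : i ≠ k) (hjk : j ≠ k)
    (cij : i * j = j * i) (cik : i * k = k * i) (cjk : j * k = k * j) : k = i * j := by
  obtain ⟨a, rfl⟩ := QuotientGroup.mk_surjective i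
  obtain ⟨b, rfl⟩ := QuotientGroup.mk_surjective j
  obtain ⟨c, rfl⟩ := QuotientGroup.mk_surjective k
  have ha := h.sqz a hi.1 hi.2
  have hb := h.sqz b hj.1 hj.2
  have hc := h.sqz c hk.1 hk.2
  have hba := (h.comm a b cij).resolve_left fun e => hij (h.f2 a b ha hb e.symm)
  have hca := (h.comm a c cik).resolve_left fun e => hik (h.f2 a c ha hc e.symm)
  have hcb := (h.comm b c cjk).resolve_left fun e => hjk (h.f2 b c hb hc e.symm)
  have hba' : ∀ t, b * (a * t) = z * (a * (b * t)) := fun t => by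
    rw [← mul_assoc, hba]; simp only [mul_assoc]
  have hca' : ∀ t, c * (a * t) = z * (a * (c * t)) := fun t => by
    rw [← mul_assoc, hca]; simp only [mul_assoc]
  have hcb' : ∀ t, c * (b * t) = z * (b * (c * t)) := fun t => by
    rw [← mul_assoc, hcb]; simp only [mul_assoc]
  have hz' : ∀ s t, s * (z * t) = z * (s * t) := fun s t => by
    rw [← mul_assoc, h.cen]; simp only [mul_assoc]
  have haz : ∀ t, a * (a * t) = z * t := fun t => by rw [← mul_assoc, ha]
  have hbz : ∀ t, b * (b * t) = z * t := fun t => by rw [← mul_assoc, hb]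
  have hzz : ∀ t, z * (z * t) = t := fun t => by rw [← mul_assoc, h.zz, one_mul]
  have hab1 : (a * b * c) * (a * b * c) = 1 := by
    simp only [mul_assoc]
    rw [hca', hz' b, hz' a, hba', hz' a, hzz, haz, hcb', hz' b, hzz, hbz, hc, h.zz]
  rw [h.sq, ← h.mem, ← QuotientGroup.eq_one_iff, QuotientGroup.mk_mul, QuotientGroup.mk_mul,
    mul_eq_one_iff_eq_inv] at hab1
  rw [hab1]
  symm
  rw [inv_eq_iff_mul_eq_one, ← pow_two, hk.1]

theorem UI.order [Finite G] (h : UI Z z) (y : G) (hy : y * y = z) : orderOf y = 4 := by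
  have : Fact (Nat.Prime 2) := ⟨Nat.prime_two⟩
  have := orderOf_eq_prime_pow (p := 2) (n := 1) (x := y)
    (by rw [pow_one, pow_two, hy]; exact h.ne)
    (by
      have : y ^ 2 ^ (1 + 1) = (y * y) * (y * y) := by simp only [← pow_two, ← pow_mul]
      rw [this, hy, h.zz])
  rw [this]; rfl

theorem UI.mem_zp [Z.Normal] (h : UI Z z) (y : G) (hy : y * y = z) (x : G)
    (hx : (x : G ⧸ Z) = 1 ∨ (x : G ⧸ Z) = y) : x ∈ zpowers y := by
  have hzy : z ∈ zpowers y := by rw [← hy]; exact mul_mem (mem_zpowers y) (mem_zpowers y)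
  rcases hx with hx | hx
  · rw [QuotientGroup.eq_one_iff, h.mem] at hx
    rcases hx with rfl | rfl
    · exact one_mem _
    · exact hzy
  · rw [eq_comm, h.mk_eq] at hx
    rcases hx with rfl | rfl
    · exact Subgroup.mem_zpowers _
    · exact mul_mem (Subgroup.mem_zpowers _) hzy

theorem UI.sq_of_four [Z.Normal] (h : UI Z z) (x : G) (hx : x ^ 4 = 1) : 
    (x : G ⧸ Z) ^ 2 = 1 := by
  have : (x * x) * (x * x) = 1 := by rw [← hx]; simp only [← pow_two, ← pow_mul]; norm_num
  rw [h.sq, ← h.mem, ← QuotientGroup.eq_one_iff] at this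
  rw [← this, pow_two]; rfl

/-- A2 -/
theorem UI.pgroup_of_central [Finite G] [Z.Normal] (h : UI Z z) (hO : NoOdd G) (y : G)
    (hy : y * y = z) (hc : ∀ g : G ⧸ Z, g * y = y * g) : IsPGroup 2 G := by
  have : Fact (Nat.Prime 2) := ⟨Nat.prime_two⟩
  have hg : ∀ g : G, g * y = y * g ∨ g * y = z * (y * g) := fun g => h.comm y g (hc g).symm
  have hN : (centralizer ({y} : Set G)).Normal := by
    constructor
    intro x hx g
    rw [mem_centralizer_singleton_iff] at hx ⊢
    rcases hg g⁻¹ with h1 | h1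
    · have h2 : y * g = g * y := by
        calc y * g = g * (g⁻¹ * y) * g := by group
          _ = g * y := by rw [h1]; group
      calc g * x * g⁻¹ * y = g * x * (g⁻¹ * y) := by group
        _ = g * (x * y) * g⁻¹ := by rw [h1]; group
        _ = (g * y) * x * g⁻¹ := by rw [hx]; group
        _ = y * (g * x * g⁻¹) := by rw [← h2]; group
    · have h2 : y * g = z * (g * y) := by
        calc y * g = g * (g⁻¹ * y) * g := by group
          _ = (g * z) * y := by rw [h1]; group
          _ = z * (g * y) := by rw [h.cen]; group
      calc g * x * g⁻¹ * y = g * x * (g⁻¹ * y) := by group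
        _ = (g * x * z) * y * g⁻¹ := by rw [h1]; group
        _ = z * g * (x * y) * g⁻¹ := by rw [h.cen]; group
        _ = (z * (g * y)) * x * g⁻¹ := by rw [hx]; group
        _ = y * (g * x * g⁻¹) := by rw [← h2]; group
  let y' : centralizer ({y} : Set G) := ⟨y, mem_centralizer_singleton_iff.mpr rfl⟩
  have hyo : orderOf y' = 4 := by rw [← h.order y hy, ← orderOf_mk y]
  have hyp : IsPGroup 2 (zpowers y') := IsPGroup.of_card (n := 2) (by
    rw [Nat.card_zpowers, hyo]; rfl)
  obtain ⟨P, hP⟩ := hyp.exists_le_sylow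
  have hyP : y' ∈ P := hP (mem_zpowers y')
  have hcyc : IsCyclic P := by
    apply cyclic_of_four P.isPGroup' ⟨y', hyP⟩
    · rw [orderOf_mk, hyo]
    · rintro ⟨⟨x, hxC⟩, hxP⟩ hx4
      have hx4' : x ^ 4 = 1 := congrArg (fun t : P => (t : G)) hx4
      have hm : x ∈ zpowers y := by
        apply h.mem_zp y hy
        by_cases hx1 : (x : G ⧸ Z) = 1
        · exact Or.inl hx1
        · right
          exact h.f2 x y (h.sqz x (h.sq_of_four x hx4') hx1) hy
            (mem_centralizer_singleton_iff.mp hxC)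
      obtain ⟨k, hk⟩ := mem_zpowers_iff.mp hm
      refine mem_zpowers_iff.mpr ⟨k, ?_⟩
      apply Subtype.ext
      apply Subtype.ext
      exact hk
  obtain ⟨K, hK, hKo, j, hj⟩ := cyclic_complement P hcyc
  have hCp := pgroup_of_complement hO _ hN K hK hKo j hj
  intro g
  have hg2 : g ^ 2 ∈ centralizer ({y} : Set G) := by
    rw [mem_centralizer_singleton_iff, pow_two]
    rcases hg g with h1 | h1
    · rw [mul_assoc, h1, ← mul_assoc, h1, mul_assoc]
    · rw [mul_assoc, h1, ← mul_assoc, h.cen, mul_assoc, ← mul_assoc g y, h1, ← mul_assoc z,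
        ← mul_assoc z, h.zz, one_mul, mul_assoc]
  obtain ⟨k, hk⟩ := hCp ⟨g ^ 2, hg2⟩
  refine ⟨k + 1, ?_⟩
  have := congrArg Subtype.val hk
  rw [pow_succ', pow_mul]
  exact this

/-- A3 -/
theorem UI.pgroup_of_isolated [Finite G] [Z.Normal] (h : UI Z z) (hO : NoOdd G) (y : G)
    (hy : y * y = z) (hc : ∀ x : G ⧸ Z, x ^ 2 = 1 → x ≠ 1 → x * y = y * x → x = y) :
    IsPGroup 2 G := by
  have : Fact (Nat.Prime 2) := ⟨Nat.prime_two⟩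
  have hyo := h.order y hy
  have hyp : IsPGroup 2 (zpowers y) := IsPGroup.of_card (n := 2) (by
    rw [Nat.card_zpowers, hyo]; rfl)
  obtain ⟨P, hP⟩ := hyp.exists_le_sylow
  have hyP : y ∈ P := hP (mem_zpowers y)
  let R := (P : Subgroup G).map (QuotientGroup.mk' Z)
  have hR : IsPGroup 2 R := P.isPGroup'.map _
  have hyR : (y : G ⧸ Z) ∈ R := ⟨y, hyP, rfl⟩
  have hnt : Nontrivial R := ⟨⟨⟨y, hyR⟩, 1, fun e => (h.mk_sq y hy).2 (congrArg Subtype.val e)⟩⟩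
  have hcn := hR.center_nontrivial
  have hcp : IsPGroup 2 (center R) := hR.to_subgroup _
  obtain ⟨n, hn0, hn⟩ := hcp.nontrivial_iff_card.mp hcn
  obtain ⟨c, hc2⟩ := exists_prime_orderOf_dvd_card' (G := center R) 2 (by
    rw [hn]; exact dvd_pow_self 2 hn0.ne')
  have hcpow : c ^ 2 = 1 := by rw [← hc2]; exact pow_orderOf_eq_one c
  have hcne : c ≠ 1 := by rintro rfl; simp at hc2
  have hcR := mem_center_iff.mp c.2
  have hcy : ((c : R) : G ⧸ Z) = y := by
    apply hc
    · exact congrArg (fun t : center R => ((t : R) : G ⧸ Z)) hcpow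
    · intro e; exact hcne (Subtype.ext (Subtype.ext e))
    · exact (congrArg Subtype.val (hcR ⟨y, hyR⟩)).symm
  have hcyc : IsCyclic P := by
    apply cyclic_of_four P.isPGroup' ⟨y, hyP⟩
    · rw [orderOf_mk, hyo]
    · rintro ⟨x, hxP⟩ hx4
      have hx4' : x ^ 4 = 1 := congrArg (fun t : P => (t : G)) hx4
      have hm : x ∈ zpowers y := by
        apply h.mem_zp y hy
        by_cases hx1 : (x : G ⧸ Z) = 1
        · exact Or.inl hx1
        · right
          apply hc _ (h.sq_of_four x hx4') hx1
          rw [← hcy]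
          exact congrArg Subtype.val (hcR ⟨x, ⟨x, hxP, rfl⟩⟩)
      obtain ⟨k, hk⟩ := mem_zpowers_iff.mp hm
      refine mem_zpowers_iff.mpr ⟨k, ?_⟩
      apply Subtype.ext
      exact hk
  obtain ⟨K, hK, hKo, j, hj⟩ := cyclic_complement P hcyc
  rw [hO K hK hKo, index_bot] at hj
  exact IsPGroup.of_card hj

end

end QGrp

namespace QGrp

open Subgroup

theorem UI.isPGroup {G : Type*} [Group G] {Z : Subgroup G} {z : G} (h : UI Z z) :
    IsPGroup 2 Z := by
  rintro ⟨x, hx⟩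
  refine ⟨1, ?_⟩
  apply Subtype.ext
  show x ^ 2 ^ 1 = 1
  rw [pow_one, pow_two, h.sq, ← h.mem]
  exact hx

theorem UI.card {G : Type*} [Group G] {Z : Subgroup G} {z : G} (h : UI Z z) :
    Nat.card Z = 2 := by
  have : (Z : Set G) = {1, z} := by
    ext x
    simpa using h.mem x
  show (Z : Set G).ncard = 2
  rw [this, Set.ncard_pair h.ne.symm]

theorem UI.le_Z {G : Type*} [Group G] [Finite G] {Z : Subgroup G} [Z.Normal] {z : G} (h : UI Z z)
    (hO : NoOdd G) (N : Subgroup G) (hN : N.Normal) (hZN : Z ≤ N)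
    (hno : ∀ n ∈ N, (n : G ⧸ Z) ^ 2 = 1 → (n : G ⧸ Z) = 1) : N ≤ Z := by
  apply le_of_central hO N Z hN hZN _ h.isPGroup
  · have h1 : Odd (Nat.card (N.map (QuotientGroup.mk' Z))) := by
      apply odd_of_no_inv
      rintro _ ⟨n, hn, rfl⟩ h2
      exact hno n hn h2
    rwa [← relIndex_ker, QuotientGroup.ker_mk'] at h1
  · intro v hv x _
    rcases (h.mem v).mp hv with rfl | rfl
    · simp
    · exact (h.cen x).symm

theorem UI.cen_le {G : Type*} [Group G] [Finite G] {Z : Subgroup G} [Z.Normal] {z : G}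
    (h : UI Z z) (hO : NoOdd G) (W : Subgroup (G ⧸ Z)) (hWn : W.Normal) (hW : Nat.card W = 4)
    (hWm : ∀ x, x ∈ W ↔ x ^ 2 = 1) (hWc : ∀ x ∈ W, ∀ y ∈ W, x * y = y * x) :
    centralizer (W : Set (G ⧸ Z)) ≤ W := by
  obtain ⟨-, -, hX⟩ := fours_perm W hWn hW
  have hX' : 1 < ({x : G ⧸ Z | x ∈ W ∧ x ≠ 1}).ncard := by
    have : ({x : G ⧸ Z | x ∈ W ∧ x ≠ 1}).ncard = 3 := hX
    omega
  obtain ⟨v, w, ⟨hv, hv1⟩, ⟨hw, hw1⟩, hvw⟩ := (Set.one_lt_ncard_iff (Set.toFinite _)).mp hX'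
  obtain ⟨a, rfl⟩ := QuotientGroup.mk_surjective v
  obtain ⟨b, rfl⟩ := QuotientGroup.mk_surjective w
  have ha := h.sqz a ((hWm _).mp hv) hv1
  have hb := h.sqz b ((hWm _).mp hw) hw1
  have hba := (h.comm a b (hWc _ hv _ hw)).resolve_left fun e => hvw (h.f2 a b ha hb e.symm)
  have hz' : ∀ s t, s * (z * t) = z * (s * t) := fun s t => by
    rw [← mul_assoc, h.cen, mul_assoc]
  have hzz : ∀ t, z * (z * t) = t := fun t => by rw [← mul_assoc, h.zz, one_mul]
  let Q := W.comap (QuotientGroup.mk' Z)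
  have hQn : Q.Normal := hWn.comap _
  have haQ : a ∈ Q := hv
  have hbQ : b ∈ Q := hw
  have claim : ∀ g, g * a = a * g → g * b = b * g → g ∈ centralizer (Q : Set G) := by
    intro g hga hgb
    rw [mem_centralizer_iff]
    intro x hx
    have key : ∀ t, g * t = t * g → (x = t ∨ x = t * z) → x * g = g * x := by
      rintro t ht (rfl | rfl)
      · exact ht.symm
      · rw [mul_assoc, ← h.cen g, ← mul_assoc, ← mul_assoc, ht]
    rcases four_cases W hW (fun x hx => (hWm x).mp hx) hv hw hv1 hw1 hvw x hx with e | e | e | e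
    · exact key 1 (by simp) ((h.mk_eq 1 x).mp e.symm)
    · exact key a hga ((h.mk_eq a x).mp e.symm)
    · exact key b hgb ((h.mk_eq b x).mp e.symm)
    · exact key (a * b) (by rw [← mul_assoc, hga, mul_assoc, hgb, mul_assoc])
        ((h.mk_eq (a * b) x).mp e.symm)
  have hle : centralizer (Q : Set G) ≤ Z := by
    apply h.le_Z hO _ (centralizer_normal Q hQn)
    · intro x hx
      rcases (h.mem x).mp hx with rfl | rfl
      · exact one_mem _
      · exact claim _ (h.cen a).symm (h.cen b).symm
    · intro n hn h2
      by_contra h1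
      have hn2 := h.sqz n h2 h1
      rw [mem_centralizer_iff] at hn
      exact hvw ((h.f2 a n ha hn2 (hn a haQ)).trans (h.f2 b n hb hn2 (hn b hbQ)).symm)
  have claim2 : ∀ g, g * a = a * g → g * b = b * g → (g : G ⧸ Z) ∈ W := by
    intro g h1 h2
    rw [(QuotientGroup.eq_one_iff g).mpr (hle (claim g h1 h2))]
    exact one_mem _
  intro x hx
  obtain ⟨x, rfl⟩ := QuotientGroup.mk_surjective x
  rw [mem_centralizer_iff] at hx
  rcases h.comm a x (hx _ hv) with xa | xa <;> rcases h.comm b x (hx _ hw) with xb | xb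
  · exact claim2 x xa xb
  · have := claim2 (x * a) (by rw [xa, mul_assoc, xa]) (by
      calc x * a * b = z * (z * (x * (a * b))) := by rw [hzz, mul_assoc]
        _ = z * (x * b * a) := by rw [mul_assoc x b a, hba, hz' x]
        _ = b * (x * a) := by rw [xb, mul_assoc, hzz, mul_assoc])
    rwa [QuotientGroup.mk_mul, mul_mem_cancel_right hv] at this
  · have := claim2 (x * b) (by
      calc x * b * a = z * (x * a * b) := by rw [mul_assoc, hba, hz', mul_assoc]
        _ = a * (x * b) := by rw [xa, mul_assoc, hzz, mul_assoc]) (by rw [xb, mul_assoc, xb])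
    rwa [QuotientGroup.mk_mul, mul_mem_cancel_right hw] at this
  · have := claim2 (x * (a * b)) (by
      calc x * (a * b) * a = x * a * (b * a) := by group
        _ = z * (x * a * (a * b)) := by rw [hba, hz']
        _ = a * (x * (a * b)) := by rw [xa, mul_assoc, hzz, mul_assoc]) (by
      calc x * (a * b) * b = z * (x * (z * (a * b)) * b) := by rw [hz', mul_assoc z, hzz]
        _ = z * (x * b * (a * b)) := by rw [← hba]; group
        _ = b * (x * (a * b)) := by rw [xb, mul_assoc, hzz, mul_assoc])
    rwa [QuotientGroup.mk_mul, mul_mem_cancel_right (by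
      rw [QuotientGroup.mk_mul]; exact mul_mem hv hw)] at this

theorem UI.good_klein {G : Type*} [Group G] [Finite G] {Z : Subgroup G} [Z.Normal] {z : G}
    (h : UI Z z) (hO : NoOdd G) (W : Subgroup (G ⧸ Z)) (hWn : W.Normal) (hW : Nat.card W = 4)
    (hWm : ∀ x, x ∈ W ↔ x ^ 2 = 1) (hWc : ∀ x ∈ W, ∀ y ∈ W, x * y = y * x) : Good G := by
  classical
  have hle := h.cen_le hO W hWn hW hWm hWc
  have heq : centralizer (W : Set (G ⧸ Z)) = W := le_antisymm hle fun x hx =>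
    mem_centralizer_iff.mpr fun y hy => hWc y hy x hx
  have h6 := cen_relIndex W ⊤ hWn hW
  rw [heq, relIndex_top_right] at h6
  have hcard : Nat.card (W.comap (QuotientGroup.mk' Z)) = 8 := by
    rw [card_comap_mk, h.card, hW]
  have hidx : (W.comap (QuotientGroup.mk' Z)).index = W.index :=
    index_comap_of_surjective _ (QuotientGroup.mk'_surjective Z)
  have hp : IsPGroup 2 (W.comap (QuotientGroup.mk' Z)) := IsPGroup.of_card (n := 3) (by
    rw [hcard]; rfl)
  have hle6 : W.index ≤ 6 := Nat.le_of_dvd (by norm_num) h6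
  have hcases : W.index = 1 ∨ W.index = 2 ∨ W.index = 3 ∨ W.index = 6 := by
    generalize W.index = d at *
    interval_cases d <;> omega
  rcases hcases with h1 | h2 | h3 | h6'
  · exact good_of_pgroup _ (hWn.comap _) hp (by rw [hidx]; exact Or.inl h1)
  · refine good_of_pgroup ⊤ inferInstance ?_ (Or.inl index_top)
    apply IsPGroup.of_card (n := 4)
    rw [card_top, ← card_mul_index (W.comap (QuotientGroup.mk' Z)), hcard, hidx, h2]; rfl
  · exact good_of_pgroup _ (hWn.comap _) hp (by rw [hidx]; exact Or.inr h3)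
  · exfalso
    obtain ⟨φ, hφ, hX⟩ := fours_perm W hWn hW
    rw [heq] at hφ
    have := Fintype.ofFinite {x : G ⧸ Z | x ∈ W ∧ x ≠ 1}
    have hnt : Nontrivial {x : G ⧸ Z | x ∈ W ∧ x ≠ 1} := by
      rw [← Finite.one_lt_card_iff_nontrivial, hX]; norm_num
    have hsurj : Function.Surjective φ := by
      rw [← MonoidHom.range_eq_top]
      apply eq_top_of_card_eq
      rw [← index_ker, hφ, h6', Nat.card_perm, hX]; rfl
    have hs : Function.Surjective ((Equiv.Perm.sign (α := {x : G ⧸ Z | x ∈ W ∧ x ≠ 1})).comp φ) :=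
      (Equiv.Perm.sign_surjective _).comp hsurj
    have h2 : ((Equiv.Perm.sign (α := {x : G ⧸ Z | x ∈ W ∧ x ≠ 1})).comp φ).ker.index = 2 := by
      rw [index_ker, MonoidHom.range_eq_top.mpr hs, card_top, Nat.card_eq_fintype_card]; rfl
    have hWN : W ≤ ((Equiv.Perm.sign (α := {x : G ⧸ Z | x ∈ W ∧ x ≠ 1})).comp φ).ker := by
      intro x hx
      rw [← hφ, MonoidHom.mem_ker] at hx
      rw [MonoidHom.mem_ker, MonoidHom.comp_apply, hx, map_one]
    have h3 := relIndex_mul_index hWN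
    rw [h2, h6'] at h3
    have := index_odd_of_frattini W _ hWn inferInstance hW hWm hWN (by omega) (by
      intro x _ hx
      exact hle (mem_centralizer_iff.mpr fun v hv => (hx v hv).symm))
    rw [h6'] at this
    revert this
    decide

/-- The elements with trivial square, when they commute. -/
def omega (H : Type*) [Group H] (hc : ∀ x y : H, x ^ 2 = 1 → y ^ 2 = 1 → x * y = y * x) :
    Subgroup H where
  carrier := {x | x ^ 2 = 1}
  one_mem' := one_pow 2
  mul_mem' := by
    intro x y hx hy
    show (x * y) ^ 2 = 1
    have hx' : x ^ 2 = 1 := hx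
    have hy' : y ^ 2 = 1 := hy
    rw [(show Commute x y from hc x y hx hy).mul_pow, hx', hy', one_mul]
  inv_mem' := by
    intro x hx
    show x⁻¹ ^ 2 = 1
    have hx' : x ^ 2 = 1 := hx
    rw [inv_pow, hx', inv_one]

theorem mem_omega {H : Type*} [Group H] (hc) (x : H) : x ∈ omega H hc ↔ x ^ 2 = 1 := Iff.rfl

theorem omega_normal {H : Type*} [Group H] (hc) : (omega H hc).Normal := by
  constructor
  intro x hx g
  rw [mem_omega] at hx ⊢
  rw [conj_pow, hx, mul_one, mul_inv_cancel]

theorem UI.good {G : Type*} [Group G] [Finite G] {Z : Subgroup G} [Z.Normal] {z : G}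
    (h : UI Z z) (hO : NoOdd G) (hQ : Q2 G) : Good G := by
  classical
  have hpg : IsPGroup 2 G → Good G := fun hp => by
    apply good_of_pgroup ⊤ inferInstance _ (Or.inl index_top)
    exact hp.to_subgroup _
  have hZm : ∀ x : G, x ∈ Z ↔ x ^ 2 = 1 := fun x => by rw [h.mem, pow_two, h.sq]
  have := Fintype.ofFinite (G ⧸ Z)
  let X : Finset (G ⧸ Z) := Finset.univ.filter fun x => x ^ 2 = 1 ∧ x ≠ 1
  have hX : ∀ x, x ∈ X ↔ x ^ 2 = 1 ∧ x ≠ 1 := fun x => by simp [X]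
  have hXc : Nat.card {x : G ⧸ Z // x ^ 2 = 1} = X.card + 1 := by
    have h1 : (1 : G ⧸ Z) ∉ X := by simp [X]
    rw [← Finset.card_insert_of_notMem h1, Nat.subtype_card]
    intro x
    rw [Finset.mem_insert, hX]
    by_cases hx : x = 1 <;> simp [hx]
  have h7 : X.card ≤ 7 := by
    have h1 := card_quot Z hZm 1
    have h2 := hQ 2
    rw [pow_one, hXc, h.card] at h1
    have h3 : Nat.card {x : G // x ^ 2 ^ (1 + 1) = 1} ≤ 4 ^ 2 := h2
    omega
  by_cases hne : X.Nonempty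
  swap
  · rw [Finset.not_nonempty_iff_eq_empty] at hne
    apply hpg
    have : (⊤ : Subgroup G) ≤ Z := by
      apply h.le_Z hO _ inferInstance le_top
      intro n _ h2
      by_contra h1
      have := (hX n).mpr ⟨h2, h1⟩
      rw [hne] at this
      simp at this
    intro g
    exact ⟨1, by rw [pow_one]; exact (hZm g).mp (this (mem_top g))⟩
  by_cases hpart : ∀ x ∈ X, ∃ y ∈ X, y ≠ x ∧ x * y = y * x
  swap
  · push Not at hpart
    obtain ⟨x, hx, hxy⟩ := hpart
    obtain ⟨y, rfl⟩ := QuotientGroup.mk_surjective x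
    have hx' := (hX _).mp hx
    apply hpg
    apply h.pgroup_of_isolated hO y (h.sqz y hx'.1 hx'.2)
    intro u hu hu1 huy
    by_contra hc
    exact hxy u ((hX u).mpr ⟨hu, hu1⟩) hc huy.symm
  by_cases hnc : ∀ x ∈ X, ∃ g, g * x ≠ x * g
  swap
  · push Not at hnc
    obtain ⟨x, hx, hxy⟩ := hnc
    obtain ⟨y, rfl⟩ := QuotientGroup.mk_surjective x
    have hx' := (hX _).mp hx
    exact hpg (h.pgroup_of_central hO y (h.sqz y hx'.1 hx'.2) hxy)
  obtain ⟨h3, hcomm⟩ := involution_config X hX hne h7 (by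
    intro i hi j hj k hk h1 h2 h3 h4 h5 h6
    exact h.star i j k ((hX i).mp hi) ((hX j).mp hj) ((hX k).mp hk) h1 h2 h3 h4 h5 h6) hpart hnc
  have hc : ∀ x y : G ⧸ Z, x ^ 2 = 1 → y ^ 2 = 1 → x * y = y * x := by
    intro x y hx hy
    by_cases hx1 : x = 1
    · simp [hx1]
    by_cases hy1 : y = 1
    · simp [hy1]
    exact hcomm x ((hX x).mpr ⟨hx, hx1⟩) y ((hX y).mpr ⟨hy, hy1⟩)
  refine h.good_klein hO (omega _ hc) (omega_normal hc) ?_ (mem_omega hc)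
    (fun x hx y hy => hc x y hx hy)
  rw [h3] at hXc
  exact hXc

end QGrp

namespace QGrp

open Subgroup

universe u

theorem good_of_Q2 (n : ℕ) : ∀ (G : Type u) [Group G] [Finite G], Nat.card G = n → Q2 G →
    Good G := by
  induction n using Nat.strong_induction_on with
  | _ n ih =>
  intro G _ _ hn hQ
  have : Fact (Nat.Prime 2) := ⟨Nat.prime_two⟩
  have hlt : ∀ (L : Subgroup G), L ≠ ⊥ → Nat.card (G ⧸ L) < n := by
    intro L hL
    have h1 := card_eq_card_quotient_mul_card_subgroup L
    have h2 := one_lt_card_iff_ne_bot L |>.mpr hL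
    have h3 : 0 < Nat.card (G ⧸ L) := Nat.card_pos
    rw [← hn, h1]
    nlinarith
  by_cases hO : NoOdd G
  swap
  · unfold NoOdd at hO
    push Not at hO
    obtain ⟨L, hL, hodd, hne⟩ := hO
    exact good_of_quot_odd L hodd (ih _ (hlt L hne) (G ⧸ L) rfl (Q2_quot_odd hQ L hodd))
  have hQ1 : Nat.card {x : G // x ^ 2 = 1} ≤ 4 := hQ 1
  by_cases hc : ∀ x y : G, x ^ 2 = 1 → y ^ 2 = 1 → x * y = y * x
  swap
  · push Not at hc
    obtain ⟨a, b, ha, hb, hab⟩ := hc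
    exact good_of_noncomm hQ1 a b ha hb hab
  have hN : (omega G hc).Normal := omega_normal hc
  have hm := mem_omega hc
  have hp : IsPGroup 2 (omega G hc) := by
    rintro ⟨x, hx⟩
    exact ⟨1, Subtype.ext (by rw [pow_one]; exact hx)⟩
  have hle : Nat.card (omega G hc) ≤ 4 := hQ1
  obtain ⟨k, hk⟩ := IsPGroup.iff_card.mp hp
  have hk2 : k ≤ 2 := by
    by_contra hk3
    have : 2 ^ 3 ≤ 2 ^ k := Nat.pow_le_pow_right (by norm_num) (by omega)
    omega
  interval_cases k
  · have hb := card_eq_one.mp hk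
    have hodd : Odd (Nat.card (⊤ : Subgroup G)) := by
      apply odd_of_no_inv
      intro x _ hx
      rw [← hm, hb, mem_bot] at hx
      exact hx
    exact ⟨⊤, ⊤, inferInstance, inferInstance, le_rfl, hodd, ⟨0, by simp⟩, Or.inl index_top⟩
  · have hcard : ((omega G hc : Subgroup G) : Set G).ncard = 2 := hk
    obtain ⟨z, hz, hz1⟩ := (omega G hc).ne_bot_iff_exists_ne_one.mp (by
      intro e; rw [e] at hk; simp at hk) |> fun ⟨z, h⟩ => (⟨z.1, z.2, fun e => h (Subtype.ext e)⟩ :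
        ∃ z : G, z ∈ omega G hc ∧ z ≠ 1)
    have hset : ((omega G hc : Subgroup G) : Set G) = {1, z} := by
      symm
      apply Set.eq_of_subset_of_ncard_le
      · rintro x (rfl | rfl)
        · exact one_mem _
        · exact hz
      · rw [hcard, Set.ncard_pair hz1.symm]
      · exact Set.toFinite _
    have hmem : ∀ x, x ∈ omega G hc ↔ x = 1 ∨ x = z := by
      intro x
      rw [← SetLike.mem_coe, hset]; simp
    have hsq : ∀ x : G, x * x = 1 ↔ x = 1 ∨ x = z := by
      intro x; rw [← hmem, hm, pow_two]
    have hui : UI (omega G hc) z := by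
      refine ⟨hz1, hmem, hsq, fun g => ?_⟩
      rcases (hmem _).mp (hN.conj_mem z hz g) with e | e
      · exact absurd (by simpa using e) hz1
      · exact mul_inv_eq_iff_eq_mul.mp e
    exact hui.good hO hQ
  · have h4 : Nat.card (omega G hc) = 4 := hk
    refine good_of_klein hO (omega G hc) h4 hm (fun x hx y hy => hc x y hx hy) ?_
    refine ih _ (hlt _ ?_) _ rfl ?_
    · intro e; rw [e] at h4; simp at h4
    · intro k
      have h1 := card_quot (omega G hc) hm k
      have h2 := hQ (k + 1)
      rw [h4] at h1
      rw [pow_succ 4 k] at h2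
      omega

theorem Q2_of_hyp {G : Type*} [Group G] [Finite G]
    (h : ∀ m : ℕ, m ∣ Monoid.exponent G → Nat.card {x : G // x ^ m = 1} ≤ m ^ 2) : Q2 G := by
  intro k
  obtain ⟨i, hi, hi2⟩ := (Nat.dvd_prime_pow Nat.prime_two).mp
    (Nat.gcd_dvd_left (2 ^ k) (Monoid.exponent G))
  have h1 := h (2 ^ i) (hi2 ▸ Nat.gcd_dvd_right _ _)
  have h2 : Nat.card {x : G // x ^ 2 ^ k = 1} ≤ Nat.card {x : G // x ^ 2 ^ i = 1} := by
    apply Nat.card_le_card_of_injective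
      (fun x => (⟨x.1, by
        rw [← hi2]
        exact pow_gcd_eq_one.mpr ⟨x.2, Monoid.pow_exponent_eq_one _⟩⟩ : {x : G // x ^ 2 ^ i = 1}))
    intro x y hxy
    have h3 := Subtype.ext_iff.mp hxy
    exact Subtype.ext h3
  refine h2.trans (h1.trans ?_)
  rw [← pow_mul, mul_comm, pow_mul]
  exact Nat.pow_le_pow_right (by norm_num) hi

end QGrp

theorem Q_group_two_nilpotent_subgroup (G : Type*) [Group G] [Finite G]
    (h : ∀ m : ℕ, m ∣ Monoid.exponent G → Nat.card {x : G // x ^ m = 1} ≤ m ^ 2) :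
    ∃ M : Subgroup G, M.Normal ∧
      (∃ K : Subgroup ↥M, K.Normal ∧ Odd (Nat.card K) ∧ ∃ j : ℕ, K.index = 2 ^ j) ∧
      (M.index = 1 ∨ M.index = 3) := by
  obtain ⟨K, M, hK, hM, hKM, hodd, hj, hi⟩ := QGrp.good_of_Q2 _ G rfl (QGrp.Q2_of_hyp h)
  refine ⟨M, hM, ⟨K.subgroupOf M, hK.subgroupOf M, ?_, hj⟩, hi⟩
  rw [Nat.card_congr (Subgroup.subgroupOfEquivOfLe hKM).toEquiv]
  exact hodd
end

section
/- If p > 3 is a prime and G is a finite p-group that is a Q-group, then G is a product of two cyclic subgroups with trivial intersection. -/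
universe u

theorem QP_pow_formula {G : Type*} [Group G] (x c d e : G)
    (h1 : x⁻¹ * c * x = c * d) (h2 : x⁻¹ * d * x = d * e) (h3 : x⁻¹ * e * x = e)
    (hcd : Commute c d) (hce : Commute c e) (hde : Commute d e) (n : ℕ) :
    (x * c) ^ n = x ^ n * (c ^ n * d ^ (n.choose 2) * e ^ (n.choose 3)) := by
  induction n with
  | zero => simp
  | succ n ih =>
    have conj : ∀ a : G, ∀ k : ℕ, x⁻¹ * a ^ k * x = (x⁻¹ * a * x) ^ k := by
      intro a k
      have := conj_pow (i := k) (a := x⁻¹) (b := a)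
      simpa using this.symm
    have key : x⁻¹ * (c ^ n * d ^ (n.choose 2) * e ^ (n.choose 3)) * x * c =
        c ^ (n+1) * d ^ ((n+1).choose 2) * e ^ ((n+1).choose 3) := by
      have e1 : x⁻¹ * (c ^ n * d ^ (n.choose 2) * e ^ (n.choose 3)) * x =
          (x⁻¹ * c ^ n * x) * (x⁻¹ * d ^ (n.choose 2) * x) * (x⁻¹ * e ^ (n.choose 3) * x) := by
        group
      rw [e1, conj, conj, conj, h1, h2, h3, hcd.mul_pow, hde.mul_pow,
        Nat.choose_succ_succ' n 1, Nat.choose_succ_succ' n 2, Nat.choose_one_right,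
        pow_add d, pow_add e, pow_succ c]
      have c1 : Commute c (d ^ n) := hcd.pow_right _
      have c2 : Commute c (d ^ n.choose 2) := hcd.pow_right _
      have c3 : Commute c (e ^ n.choose 2) := hce.pow_right _
      have c4 : Commute c (e ^ n.choose 3) := hce.pow_right _
      have : Commute c (d ^ n * (d ^ n.choose 2 * e ^ n.choose 2) * e ^ n.choose 3) :=
        (c1.mul_right (c2.mul_right c3)).mul_right c4
      have t := this.eq
      calc _ = c ^ n * ((d ^ n * (d ^ n.choose 2 * e ^ n.choose 2) * e ^ n.choose 3) * c) := by
            simp only [mul_assoc]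
        _ = _ := by rw [← t]; simp only [mul_assoc]
    rw [pow_succ, ih, ← key, pow_succ]
    group

theorem QP_central {p : ℕ} [Fact p.Prime] {G : Type*} [Group G] [Finite G] (hG : IsPGroup p G)
    (K : Subgroup G) [K.Normal] (hK : K ≠ ⊥) :
    ∃ z ∈ K, z ∈ Subgroup.center G ∧ orderOf z = p := by
  have hdvd : p ∣ Nat.card K := by
    rcases (hG.to_subgroup K).card_eq_or_dvd with h | h
    · exact absurd (Subgroup.card_eq_one.mp h) hK
    · exact h
  have hC : IsPGroup p (ConjAct G) := hG.of_equiv ConjAct.toConjAct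
  obtain ⟨b, hb, hb1⟩ := hC.exists_fixed_point_of_prime_dvd_card_of_fixed_point K hdvd
    (a := (1 : K)) (by intro g; simp)
  have hbc : (b : G) ∈ Subgroup.center G := by
    rw [Subgroup.mem_center_iff]
    intro g
    have := congrArg (Subtype.val) (hb (ConjAct.toConjAct g))
    rw [ConjAct.Subgroup.val_conj_smul, ConjAct.toConjAct_smul] at this
    exact mul_inv_eq_iff_eq_mul.mp this
  have hb1' : (b : G) ≠ 1 := fun h => hb1 (Subtype.ext h.symm)
  obtain ⟨x, hx⟩ : ∃ x : (K ⊓ Subgroup.center G : Subgroup G), orderOf x = p := by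
    apply exists_prime_orderOf_dvd_card'
    rcases (hG.to_subgroup (K ⊓ Subgroup.center G)).card_eq_or_dvd with h | h
    · exact absurd ((Subgroup.eq_bot_iff_forall _).mp (Subgroup.card_eq_one.mp h) b ⟨b.2, hbc⟩) hb1'
    · exact h
  exact ⟨x, x.2.1, x.2.2, by rw [Subgroup.orderOf_coe, hx]⟩

theorem QP_card_comap {G : Type*} [Group G] (Z : Subgroup G) [Z.Normal]
    (H : Subgroup (G ⧸ Z)) :
    Nat.card (H.comap (QuotientGroup.mk' Z)) = Nat.card Z * Nat.card H := by
  rw [← Nat.card_prod]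
  exact Nat.card_congr (QuotientGroup.preimageMkEquivSubgroupProdSet Z (H : Set (G ⧸ Z)))

theorem QP_zpowers_normal {G : Type*} [Group G] {z : G} (hz : z ∈ Subgroup.center G) :
    (Subgroup.zpowers z).Normal := by
  refine ⟨fun n hn g => ?_⟩
  have : n ∈ Subgroup.center G := (Subgroup.zpowers_le.mpr hz) hn
  rw [Subgroup.mem_center_iff] at this
  rw [this g]; simpa using hn

theorem QP_normal_sq {p : ℕ} [hp : Fact p.Prime] {G : Type*} [Group G] [Finite G]
    (hG : IsPGroup p G) (K : Subgroup G) [K.Normal] (hK : p ^ 2 ∣ Nat.card K) :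
    ∃ (N : Subgroup G) (z : G), N.Normal ∧ N ≤ K ∧ Nat.card N = p ^ 2 ∧ z ∈ N ∧
      z ∈ Subgroup.center G ∧ orderOf z = p ∧
      ∀ n ∈ N, ∀ g : G, g * n * g⁻¹ * n⁻¹ ∈ Subgroup.zpowers z := by
  have hp1 : 1 < p := hp.out.one_lt
  have hle : p ^ 2 ≤ Nat.card K := Nat.le_of_dvd Nat.card_pos hK
  have hK0 : K ≠ ⊥ := by
    rintro rfl
    simp at hle; omega
  obtain ⟨z, hzK, hzc, hzp⟩ := QP_central hG K hK0
  set Z := Subgroup.zpowers z with hZ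
  have hZK : Z ≤ K := Subgroup.zpowers_le.mpr hzK
  have hZcard : Nat.card Z = p := by rw [hZ, Nat.card_zpowers, hzp]
  have : Z.Normal := QP_zpowers_normal hzc
  have : (K.map (QuotientGroup.mk' Z)).Normal :=
    Subgroup.Normal.map inferInstance _ (QuotientGroup.mk'_surjective Z)
  have hcm : (K.map (QuotientGroup.mk' Z)).comap (QuotientGroup.mk' Z) = K := by
    rw [Subgroup.comap_map_eq, QuotientGroup.ker_mk', sup_eq_left]; exact hZK
  have hKb : K.map (QuotientGroup.mk' Z) ≠ ⊥ := by
    intro h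
    have := QP_card_comap Z (K.map (QuotientGroup.mk' Z))
    rw [hcm, h, hZcard] at this
    simp at this
    nlinarith
  obtain ⟨y, hyK, hyc, hyp⟩ := QP_central (hG.to_quotient Z) _ hKb
  have : (Subgroup.zpowers y).Normal := QP_zpowers_normal hyc
  refine ⟨(Subgroup.zpowers y).comap (QuotientGroup.mk' Z), z, inferInstance, ?_, ?_, ?_, hzc, hzp, ?_⟩
  · rw [← hcm]
    exact Subgroup.comap_mono (Subgroup.zpowers_le.mpr hyK)
  · rw [QP_card_comap, hZcard, Nat.card_zpowers, hyp, sq]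
  · rw [Subgroup.mem_comap]
    have : QuotientGroup.mk' Z z = 1 := by
      rw [← MonoidHom.mem_ker, QuotientGroup.ker_mk']; exact Subgroup.mem_zpowers z
    rw [this]; exact one_mem _
  · intro n hn g
    have h1 : QuotientGroup.mk' Z n ∈ Subgroup.center (G ⧸ Z) :=
      (Subgroup.zpowers_le.mpr hyc) hn
    rw [Subgroup.mem_center_iff] at h1
    have : QuotientGroup.mk' Z (g * n * g⁻¹ * n⁻¹) = 1 := by
      simp only [map_mul, map_inv]
      rw [h1]; group
    rwa [← MonoidHom.mem_ker, QuotientGroup.ker_mk'] at this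

theorem QP_sq_dvd {p : ℕ} [hp : Fact p.Prime] {G : Type*} [Group G] [Finite G]
    (hG : IsPGroup p G) (K : Subgroup G) (hK : p < Nat.card K) : p ^ 2 ∣ Nat.card K := by
  obtain ⟨n, hn⟩ := (hG.to_subgroup K).exists_card_eq
  rw [hn] at hK ⊢
  apply pow_dvd_pow
  have : p ^ 1 < p ^ n := by simpa using hK
  have := (Nat.pow_lt_pow_iff_right hp.out.one_lt).mp this
  omega

theorem QP_exists_K {p : ℕ} [hp : Fact p.Prime] (hp2 : 2 < p) (n : ℕ) :
    ∀ (G : Type u) [Group G] [Finite G], Nat.card G = n → IsPGroup p G → ¬ IsCyclic G →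
    ∃ K : Subgroup G, K.Normal ∧ p ^ 2 ∣ Nat.card K ∧ ∀ x ∈ K, x ^ p = 1 := by
  induction n using Nat.strong_induction_on with
  | _ n IH =>
  intro G _ _ hn hG hcyc
  have hp1 : 1 < p := hp.out.one_lt
  have hnt : Nontrivial G := by
    by_contra h
    rw [not_nontrivial_iff_subsingleton] at h
    exact hcyc inferInstance
  obtain ⟨z, -, hzc, hzp⟩ := QP_central hG (⊤ : Subgroup G) top_ne_bot
  set Z := Subgroup.zpowers z with hZ
  have hZcard : Nat.card Z = p := by rw [hZ, Nat.card_zpowers, hzp]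
  have : Z.Normal := QP_zpowers_normal hzc
  have hZc : Z ≤ Subgroup.center G := Subgroup.zpowers_le.mpr hzc
  have hcard := Subgroup.card_eq_card_quotient_mul_card_subgroup Z
  rw [hZcard] at hcard
  have hZp : ∀ x ∈ Z, x ^ p = 1 := fun x hx => by
    have := pow_card_eq_one' (x := (⟨x, hx⟩ : Z))
    rw [hZcard] at this
    simpa using congrArg Subtype.val this
  by_cases hQ : IsCyclic (G ⧸ Z)
  · have hcomm : ∀ a b : G, a * b = b * a := by
      have := MonoidHom.isMulCommutative_of_isCyclic_of_ker_le_center (QuotientGroup.mk' Z)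
        (by rw [QuotientGroup.ker_mk']; exact hZc)
      exact fun a b => this.is_comm.comm a b
    obtain ⟨q, hq⟩ := hQ.exists_generator
    obtain ⟨a, rfl⟩ := QuotientGroup.mk'_surjective Z q
    have hqo : orderOf (QuotientGroup.mk' Z a) = Nat.card (G ⧸ Z) :=
      orderOf_eq_card_of_forall_mem_zpowers hq
    obtain ⟨r, hr⟩ := (hG.to_quotient Z).exists_card_eq
    have har : a ^ p ^ r ∈ Z := by
      rw [← QuotientGroup.ker_mk' Z, MonoidHom.mem_ker, map_pow, ← hr, ← hqo, pow_orderOf_eq_one]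
    have har1 : a ^ p ^ r = 1 := by
      by_contra hne
      have h2 : a ^ p ^ (r+1) = 1 := by rw [pow_succ, pow_mul]; exact hZp _ har
      apply hcyc
      apply isCyclic_of_orderOf_eq_card a
      rw [orderOf_eq_prime_pow hne h2, hcard, hr, pow_succ]
    have hr0 : r ≠ 0 := by
      rintro rfl
      apply hcyc
      apply isCyclic_of_orderOf_eq_card z
      rw [hzp, hcard, hr]; simp
    obtain ⟨s, rfl⟩ := Nat.exists_eq_succ_of_ne_zero hr0
    let K : Subgroup G :=
      { carrier := {x | x ^ p = 1}
        mul_mem' := by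
          intro x y hx hy
          simp only [Set.mem_ofPred_eq] at *
          rw [(show Commute x y from hcomm x y).mul_pow, hx, hy, one_mul]
        one_mem' := by simp
        inv_mem' := by
          intro x hx
          simp only [Set.mem_ofPred_eq] at *
          rw [inv_pow, hx, inv_one] }
    have hKN : K.Normal := ⟨fun x hx g => by rw [hcomm g x]; simpa using hx⟩
    refine ⟨K, hKN, ?_, fun x hx => hx⟩
    apply QP_sq_dvd hG
    have hZK : Z ≤ K := fun x hx => hZp x hx
    by_contra hlt
    have hEq := Subgroup.eq_of_le_of_card_ge hZK (by rw [hZcard]; omega)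
    have : a ^ p ^ s ∈ K := by
      change (a ^ p ^ s) ^ p = 1
      rw [← pow_mul, ← pow_succ]; exact har1
    rw [← hEq, ← QuotientGroup.ker_mk' Z, MonoidHom.mem_ker, map_pow] at this
    have := orderOf_dvd_of_pow_eq_one this
    rw [hqo, hr, Nat.pow_dvd_pow_iff_le_right hp1] at this
    omega
  · have hlt : Nat.card (G ⧸ Z) < n := by
      rw [← hn, hcard]
      have : 0 < Nat.card (G ⧸ Z) := Nat.card_pos
      nlinarith
    obtain ⟨K, hKn, hKd, hKp⟩ := IH _ hlt (G ⧸ Z) rfl (hG.to_quotient Z) hQ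
    obtain ⟨N, -, hN, hNK, hNc, -⟩ := QP_normal_sq (hG.to_quotient Z) K hKd
    have hNcomm : ∀ a ∈ N, ∀ b ∈ N, a * b = b * a := by
      have := IsPGroup.isMulCommutative_of_card_eq_prime_sq hNc
      intro a ha b hb
      exact congrArg Subtype.val (this.is_comm.comm (⟨a, ha⟩ : N) ⟨b, hb⟩)
    set E := N.comap (QuotientGroup.mk' Z) with hE
    have hEc : Nat.card E = p * p ^ 2 := by rw [hE, QP_card_comap, hZcard, hNc]
    have hEp : ∀ x ∈ E, x ^ p ∈ Z := by
      intro x hx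
      rw [← QuotientGroup.ker_mk' Z, MonoidHom.mem_ker, map_pow]
      exact hKp _ (hNK hx)
    have hmul : ∀ x ∈ E, ∀ y ∈ E, (x * y) ^ p = x ^ p * y ^ p := by
      intro x hx y hy
      have hd : y⁻¹ * x⁻¹ * y * x ∈ Z := by
        rw [← QuotientGroup.ker_mk' Z, MonoidHom.mem_ker]
        have := hNcomm _ hx _ hy
        simp only [map_mul, map_inv]
        rw [mul_assoc, ← this]; group
      have hdc := Subgroup.mem_center_iff.mp (hZc hd)
      have := QP_pow_formula x y (y⁻¹ * x⁻¹ * y * x) 1 (by group)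
        (by rw [mul_assoc, ← hdc x]; group) (by group) (hdc y) (Commute.one_right _)
        (Commute.one_right _) p
      rw [this]
      obtain ⟨k, hk⟩ : p ∣ p.choose 2 := hp.out.dvd_choose_self (by norm_num) hp2
      rw [hk, pow_mul, hZp _ hd]; simp
    let f : E →* Z :=
      { toFun := fun x => ⟨(x : G) ^ p, hEp x x.2⟩
        map_one' := by ext; simp
        map_mul' := fun x y => by ext; exact hmul x x.2 y y.2 }
    have hfk : ∀ x : E, x ∈ f.ker ↔ (x : G) ^ p = 1 := by
      intro x
      rw [MonoidHom.mem_ker, Subtype.ext_iff]; rfl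
    refine ⟨f.ker.map E.subtype, ⟨?_⟩, ?_, ?_⟩
    · rintro _ ⟨x, hx, rfl⟩ g
      have hEn : E.Normal := inferInstance
      refine ⟨⟨g * x * g⁻¹, hEn.conj_mem x x.2 g⟩, ?_, rfl⟩
      have := (hfk x).mp hx
      apply (hfk _).mpr
      simp [conj_pow, this]
    · rw [Subgroup.card_map_of_injective E.subtype_injective]
      have h1 : Nat.card f.ker * f.ker.index = Nat.card E := Subgroup.card_mul_index _
      have h2 : f.ker.index ∣ p := by
        rw [Subgroup.index_ker, ← hZcard]; exact Subgroup.card_subgroup_dvd_card _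
      obtain ⟨k, hk⟩ := h2
      have hi : 0 < f.ker.index := Nat.pos_of_ne_zero (by
        intro h; rw [h] at hk; simp at hk; omega)
      refine ⟨k, ?_⟩
      apply Nat.eq_of_mul_eq_mul_right hi
      rw [h1, hEc]
      nth_rw 1 [hk]; ring
    · rintro _ ⟨x, hx, rfl⟩
      exact (hfk x).mp hx

theorem QP_xc {p : ℕ} [hp : Fact p.Prime] (hp3 : 3 < p) {G : Type*} [Group G]
    (E : Subgroup G) (z : G) (hzE : z ∈ E) (hzc : z ∈ Subgroup.center G)
    (hEz : ∀ n ∈ E, ∀ g : G, g * n * g⁻¹ * n⁻¹ ∈ Subgroup.zpowers z)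
    (hEp : ∀ x ∈ E, x ^ p = 1) (x c : G) (hc : ∀ e ∈ E, c * e = e * c)
    (hxc : c⁻¹ * x⁻¹ * c * x ∈ E) : (x * c) ^ p = x ^ p * c ^ p := by
  set d := c⁻¹ * x⁻¹ * c * x with hd
  have he := hEz d hxc x⁻¹
  set e := x⁻¹ * d * x⁻¹⁻¹ * d⁻¹ with hedef
  have hecen := Subgroup.mem_center_iff.mp (Subgroup.zpowers_le.mpr hzc he)
  have heE : e ∈ E := Subgroup.zpowers_le.mpr hzE he
  have := QP_pow_formula x c d e (by rw [hd]; group) (by rw [hecen d, hedef]; group)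
    (by rw [mul_assoc, ← hecen x]; group) (hc d hxc) (hc e heE) (hecen d) p
  rw [this]
  obtain ⟨k, hk⟩ : p ∣ p.choose 2 := hp.out.dvd_choose_self (by norm_num) (by omega)
  obtain ⟨l, hl⟩ : p ∣ p.choose 3 := hp.out.dvd_choose_self (by norm_num) (by omega)
  rw [hk, hl, pow_mul, pow_mul, hEp _ hxc, hEp _ heE]; simp

theorem QP_inj_aux {p : ℕ} [hp : Fact p.Prime] (hp3 : 3 < p) {G : Type*} [Group G]
    (E : Subgroup G) [E.Normal] (z : G) (hzE : z ∈ E) (hzc : z ∈ Subgroup.center G)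
    (hEz : ∀ n ∈ E, ∀ g : G, g * n * g⁻¹ * n⁻¹ ∈ Subgroup.zpowers z)
    (hEp : ∀ x, x ∈ E ↔ x ^ p = 1) (u v : G)
    (huv : Commute (QuotientGroup.mk' E u) (QuotientGroup.mk' E v)) (i : ℤ)
    (hc : ∀ e ∈ E, (u ^ (-i) * v) * e = e * (u ^ (-i) * v))
    (hvu : v ^ p ∈ Subgroup.zpowers (u ^ p)) :
    QuotientGroup.mk' E v ∈ Subgroup.zpowers (QuotientGroup.mk' E u) := by
  obtain ⟨k, hk⟩ := hvu
  simp only at hk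
  set c := u ^ (-i) * v with hcdef
  have key : ∀ j : ℤ, (u ^ j * c) ^ p = (u ^ j) ^ p * c ^ p := by
    intro j
    apply QP_xc hp3 E z hzE hzc hEz (fun x hx => (hEp x).mp hx) _ _ hc
    rw [← QuotientGroup.ker_mk' E, MonoidHom.mem_ker, hcdef]
    have h1 : Commute (QuotientGroup.mk' E u ^ j)
        ((QuotientGroup.mk' E u) ^ (-i) * QuotientGroup.mk' E v) :=
      Commute.mul_right (Commute.zpow_zpow_self _ _ _) (huv.zpow_left j)
    simp only [map_mul, map_inv, map_zpow]
    rw [mul_assoc, ← h1.eq]; group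
  have hsw : ∀ j : ℤ, (u ^ j) ^ p = (u ^ p) ^ j := fun j => by
    rw [← zpow_natCast, ← zpow_natCast, zpow_comm]
  have h1 := key i
  have h2 := key (i - k)
  have hv : u ^ i * c = v := by rw [hcdef]; group
  rw [hv, ← hk, hsw] at h1
  rw [hsw, sub_eq_neg_add, zpow_add (u ^ p), mul_assoc, ← h1, ← zpow_add, neg_add_cancel,
    zpow_zero, ← hEp, zpow_add, mul_assoc, hv] at h2
  rw [← QuotientGroup.ker_mk' E, MonoidHom.mem_ker, map_mul, map_zpow] at h2
  refine ⟨k, ?_⟩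
  simp only
  rw [mul_eq_one_iff_inv_eq] at h2
  rw [← h2]; group

theorem QP_centralize {p : ℕ} [hp : Fact p.Prime] {G : Type*} [Group G] [Finite G]
    (E : Subgroup G) (hE : Nat.card E = p ^ 2) (z : G) (hzE : z ∈ E)
    (hzc : z ∈ Subgroup.center G) (hzp : orderOf z = p)
    (hEz : ∀ n ∈ E, ∀ g : G, g * n * g⁻¹ * n⁻¹ ∈ Subgroup.zpowers z) (u v : G) :
    (∃ i : ℤ, ∀ e ∈ E, (u ^ (-i) * v) * e = e * (u ^ (-i) * v)) ∨
    (∃ i : ℤ, ∀ e ∈ E, (v ^ (-i) * u) * e = e * (v ^ (-i) * u)) := by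
  have hp1 := hp.out.one_lt
  set Z := Subgroup.zpowers z with hZ
  have hZE : Z ≤ E := Subgroup.zpowers_le.mpr hzE
  have hZcard : Nat.card Z = p := by rw [hZ, Nat.card_zpowers, hzp]
  have hZc : Z ≤ Subgroup.center G := Subgroup.zpowers_le.mpr hzc
  obtain ⟨w, hwE, hwZ⟩ : ∃ w ∈ E, w ∉ Z := by
    by_contra! hcon
    have := Subgroup.card_le_of_le (show E ≤ Z from hcon)
    rw [hE, hZcard] at this
    nlinarith
  have hcen : ∀ c : G, c * w = w * c → ∀ e ∈ E, c * e = e * c := by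
    intro c hcw
    set H := E ⊓ Subgroup.centralizer {c} with hH
    have hEp : IsPGroup p E := IsPGroup.of_card hE
    have hHE : H ≤ E := inf_le_left
    obtain ⟨j, hj⟩ := (hEp.to_le hHE).exists_card_eq
    have hZH : Z ≤ H := by
      intro x hx
      refine Subgroup.mem_inf.mpr ⟨hZE hx, ?_⟩
      rw [Subgroup.mem_centralizer_singleton_iff]
      exact (Subgroup.mem_center_iff.mp (hZc hx) c).symm
    have hwH : w ∈ H := Subgroup.mem_inf.mpr ⟨hwE, by rw [Subgroup.mem_centralizer_singleton_iff]; exact hcw.symm⟩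
    have hj2 : 2 ≤ j := by
      by_contra hlt
      have : Nat.card H ≤ p := by
        rw [hj]
        calc p ^ j ≤ p ^ 1 := Nat.pow_le_pow_right (by omega) (by omega)
          _ = p := pow_one p
      have := Subgroup.eq_of_le_of_card_ge hZH (by rw [hZcard]; exact this)
      rw [← this] at hwH
      exact hwZ hwH
    have hHeq : H = E := Subgroup.eq_of_le_of_card_ge hHE (by
      rw [hE, hj]; exact Nat.pow_le_pow_right (by omega) hj2)
    intro e he
    rw [← hHeq] at he
    exact (Subgroup.mem_centralizer_singleton_iff.mp he.2).symm
  let φ : G →* Z :=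
    { toFun := fun g => ⟨g * w * g⁻¹ * w⁻¹, hEz w hwE g⟩
      map_one' := by ext; simp
      map_mul' := fun g h => by
        ext
        have := Subgroup.mem_center_iff.mp (hZc (hEz w hwE h)) g
        change g * h * w * (g * h)⁻¹ * w⁻¹ = g * w * g⁻¹ * w⁻¹ * (h * w * h⁻¹ * w⁻¹)
        have h2 := Subgroup.mem_center_iff.mp (hZc (hEz w hwE h)) (g * w * g⁻¹ * w⁻¹)
        rw [h2]
        calc _ = (g * (h * w * h⁻¹ * w⁻¹)) * (w * g⁻¹ * w⁻¹) := by group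
          _ = _ := by rw [this]; group }
  have hφ : ∀ g, φ g = 1 → ∀ e ∈ E, g * e = e * g := by
    intro g hg
    apply hcen
    have : g * w * g⁻¹ * w⁻¹ = 1 := congrArg Subtype.val hg
    rw [mul_inv_eq_one, mul_inv_eq_iff_eq_mul] at this
    exact this
  by_cases hu : φ u = 1
  · right
    refine ⟨0, ?_⟩
    simpa using hφ u hu
  · left
    obtain ⟨i, hi⟩ := mem_zpowers_of_prime_card hZcard hu (g' := φ v)
    refine ⟨i, hφ _ ?_⟩
    simp only at hi
    rw [map_mul, map_zpow, ← hi]; group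

theorem QP_order_lift {p : ℕ} [hp : Fact p.Prime] {G : Type*} [Group G] [Finite G]
    (hG : IsPGroup p G) (E : Subgroup G) [E.Normal] (hEp : ∀ x, x ∈ E ↔ x ^ p = 1) (a : G)
    (ha : QuotientGroup.mk' E a ≠ 1) :
    ∃ s : ℕ, orderOf (QuotientGroup.mk' E a) = p ^ (s + 1) ∧ orderOf a = p ^ (s + 2) := by
  obtain ⟨r, hr⟩ := (IsPGroup.iff_orderOf.mp (hG.to_quotient E)) (QuotientGroup.mk' E a)
  have hmem : ∀ k : ℕ, (QuotientGroup.mk' E a) ^ k = 1 ↔ a ^ (k * p) = 1 := by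
    intro k
    rw [← map_pow, ← MonoidHom.mem_ker, QuotientGroup.ker_mk', hEp, pow_mul]
  rcases r with _ | s
  · rw [pow_zero, orderOf_eq_one_iff] at hr
    exact absurd hr ha
  refine ⟨s, hr, orderOf_eq_prime_pow ?_ ?_⟩
  · rw [pow_succ, ← hmem]
    intro h
    have := orderOf_dvd_of_pow_eq_one h
    rw [hr, Nat.pow_dvd_pow_iff_le_right hp.out.one_lt] at this
    omega
  · rw [pow_succ, ← hmem, ← hr, pow_orderOf_eq_one]

theorem QP_mem_socle {p : ℕ} [hp : Fact p.Prime] {G : Type*} [Group G]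
    (a h : G) (s : ℕ) (ha : orderOf a = p ^ (s + 1)) (hh : h ∈ Subgroup.zpowers a)
    (hhp : h ^ p = 1) : h ∈ Subgroup.zpowers (a ^ p ^ s) := by
  obtain ⟨i, rfl⟩ := hh
  simp only at *
  rw [← zpow_natCast, ← zpow_mul, ← orderOf_dvd_iff_zpow_eq_one, ha] at hhp
  have hp0 : (p : ℤ) ≠ 0 := by exact_mod_cast hp.out.ne_zero
  have : ((p ^ s : ℕ) : ℤ) ∣ i := by
    rw [pow_succ] at hhp
    push_cast at hhp ⊢
    exact Int.dvd_of_mul_dvd_mul_right hp0 hhp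
  obtain ⟨k, rfl⟩ := this
  rw [zpow_mul, zpow_natCast]
  exact Subgroup.zpow_mem _ (Subgroup.mem_zpowers _) _

/-- Structure of noncyclic Q-groups at the bottom. -/
theorem QP_bottom {p : ℕ} [hp : Fact p.Prime] (hp3 : 3 < p) (G : Type u) [Group G] [Finite G]
    (hG : IsPGroup p G) (h : Nat.card {x : G // x ^ p = 1} ≤ p ^ 2) (hcyc : ¬ IsCyclic G) :
    ∃ (E : Subgroup G) (z : G), E.Normal ∧ Nat.card E = p ^ 2 ∧ z ∈ E ∧
      z ∈ Subgroup.center G ∧ orderOf z = p ∧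
      (∀ n ∈ E, ∀ g : G, g * n * g⁻¹ * n⁻¹ ∈ Subgroup.zpowers z) ∧
      ∀ x, x ∈ E ↔ x ^ p = 1 := by
  obtain ⟨K, hKn, hKd, hKp⟩ := QP_exists_K (by omega) _ G rfl hG hcyc
  obtain ⟨E, z, hE, hEK, hEc, hzE, hzc, hzp, hEz⟩ := QP_normal_sq hG K hKd
  refine ⟨E, z, hE, hEc, hzE, hzc, hzp, hEz, ?_⟩
  have hsub : (E : Set G) ⊆ {x : G | x ^ p = 1} := fun x hx => hKp x (hEK hx)
  have hEq : (E : Set G) = {x : G | x ^ p = 1} := by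
    apply Set.eq_of_subset_of_ncard_le hsub _ (Set.toFinite _)
    rw [← Nat.card_coe_set_eq, ← Nat.card_coe_set_eq]
    exact h.trans hEc.ge
  intro x
  rw [← SetLike.mem_coe, hEq]; rfl

theorem QP_main {p : ℕ} [hp : Fact p.Prime] (hp3 : 3 < p) (n : ℕ) :
    ∀ (G : Type u) [Group G] [Finite G], Nat.card G = n → IsPGroup p G →
    (∀ k : ℕ, Nat.card {x : G // x ^ p ^ k = 1} ≤ (p ^ k) ^ 2) →
    ∃ a b : G, orderOf a * orderOf b = Nat.card G ∧
      Subgroup.zpowers a ⊓ Subgroup.zpowers b = ⊥ := by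
  induction n using Nat.strong_induction_on with
  | _ n IH =>
  intro G _ _ hn hG hQ
  have hp1 : 1 < p := hp.out.one_lt
  by_cases hcyc : IsCyclic G
  · obtain ⟨a, ha⟩ := hcyc.exists_generator
    refine ⟨a, 1, ?_, ?_⟩
    · rw [orderOf_one, mul_one]; exact orderOf_eq_card_of_forall_mem_zpowers ha
    · simp
  obtain ⟨E, z, hEn, hEc, hzE, hzc, hzp, hEz, hEp⟩ :=
    QP_bottom hp3 G hG (by simpa using hQ 1) hcyc
  have hcard := Subgroup.card_eq_card_quotient_mul_card_subgroup E
  rw [hEc] at hcard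
  have hmk : ∀ x : G, QuotientGroup.mk' E x = 1 ↔ x ^ p = 1 := by
    intro x
    rw [← MonoidHom.mem_ker, QuotientGroup.ker_mk', hEp]
  by_cases hQc : IsCyclic (G ⧸ E)
  · obtain ⟨a, ha⟩ : ∃ a : G, orderOf a * p = Nat.card G := by
      obtain ⟨q, hq⟩ := hQc.exists_generator
      obtain ⟨a, rfl⟩ := QuotientGroup.mk'_surjective E q
      have hqo : orderOf (QuotientGroup.mk' E a) = Nat.card (G ⧸ E) :=
        orderOf_eq_card_of_forall_mem_zpowers hq
      by_cases ha1 : QuotientGroup.mk' E a = 1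
      · refine ⟨z, ?_⟩
        rw [ha1, orderOf_one] at hqo
        rw [hcard, ← hqo, hzp]; ring
      · obtain ⟨s, hs1, hs2⟩ := QP_order_lift hG E hEp a ha1
        refine ⟨a, ?_⟩
        rw [hcard, ← hqo, hs1, hs2]; ring
    obtain ⟨b, hbE, hba⟩ : ∃ b ∈ E, b ∉ Subgroup.zpowers a := by
      by_contra! hcon
      have hEa : E ≤ Subgroup.zpowers a := hcon
      have hEcyc : IsCyclic E := Subgroup.isCyclic_of_le hEa
      obtain ⟨g, hg⟩ := hEcyc.exists_generator
      have h1 := orderOf_eq_card_of_forall_mem_zpowers hg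
      have h2 : g ^ p = 1 := Subtype.ext ((hEp g).mp g.2)
      have h3 := Nat.le_of_dvd (by omega) (orderOf_dvd_of_pow_eq_one h2)
      rw [h1, hEc] at h3
      nlinarith
    have hbo : orderOf b = p := orderOf_eq_prime ((hEp b).mp hbE) (by
      rintro rfl; exact hba (one_mem _))
    refine ⟨a, b, by rw [hbo, ha], ?_⟩
    have hd : Nat.card (Subgroup.zpowers a ⊓ Subgroup.zpowers b : Subgroup G) ∣ p := by
      have := Subgroup.card_dvd_of_le
        (inf_le_right : Subgroup.zpowers a ⊓ Subgroup.zpowers b ≤ Subgroup.zpowers b)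
      rwa [Nat.card_zpowers, hbo] at this
    rcases (Nat.dvd_prime hp.out).mp hd with h1 | h1
    · exact Subgroup.card_eq_one.mp h1
    · exfalso
      have := Subgroup.eq_of_le_of_card_ge
        (inf_le_right : Subgroup.zpowers a ⊓ Subgroup.zpowers b ≤ Subgroup.zpowers b)
        (by rw [h1, Nat.card_zpowers, hbo])
      have hb := Subgroup.mem_zpowers b
      rw [← this] at hb
      exact hba (Subgroup.mem_inf.mp hb).1
  · have hlt : Nat.card (G ⧸ E) < n := by
      rw [← hn, hcard]
      have : 0 < Nat.card (G ⧸ E) := Nat.card_pos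
      exact lt_mul_of_one_lt_right this (one_lt_pow₀ hp1 (by norm_num))
    have hQQ : ∀ k : ℕ, Nat.card {x : G ⧸ E // x ^ p ^ k = 1} ≤ (p ^ k) ^ 2 := by
      intro k
      have h1 := Nat.card_congr
        (QuotientGroup.preimageMkEquivSubgroupProdSet E {x : G ⧸ E | x ^ p ^ k = 1})
      rw [Nat.card_prod, hEc] at h1
      have h2 : (QuotientGroup.mk ⁻¹' {x : G ⧸ E | x ^ p ^ k = 1} : Set G) =
          {x : G | x ^ p ^ (k + 1) = 1} := by
        ext x
        change (QuotientGroup.mk' E x) ^ p ^ k = 1 ↔ x ^ p ^ (k + 1) = 1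
        rw [← map_pow, hmk, ← pow_mul, ← pow_succ]
      rw [h2] at h1
      have h3 : p ^ 2 * Nat.card {x : G ⧸ E // x ^ p ^ k = 1} ≤ (p ^ (k + 1)) ^ 2 :=
        h1.symm.le.trans (hQ (k + 1))
      have h4 : (p ^ (k + 1)) ^ 2 = p ^ 2 * (p ^ k) ^ 2 := by ring
      rw [h4] at h3
      exact Nat.le_of_mul_le_mul_left h3 (by positivity)
    have hGq := hG.to_quotient E
    obtain ⟨qa, qb, hord, hinf⟩ := IH _ hlt (G ⧸ E) rfl hGq hQQ
    obtain ⟨a, rfl⟩ := QuotientGroup.mk'_surjective E qa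
    obtain ⟨b, rfl⟩ := QuotientGroup.mk'_surjective E qb
    have ha1 : QuotientGroup.mk' E a ≠ 1 := by
      intro h
      rw [h, orderOf_one, one_mul] at hord
      exact hQc (isCyclic_of_orderOf_eq_card _ hord)
    have hb1 : QuotientGroup.mk' E b ≠ 1 := by
      intro h
      rw [h, orderOf_one, mul_one] at hord
      exact hQc (isCyclic_of_orderOf_eq_card _ hord)
    obtain ⟨r, hr1, hr2⟩ := QP_order_lift hG E hEp a ha1
    obtain ⟨s, hs1, hs2⟩ := QP_order_lift hG E hEp b hb1
    refine ⟨a, b, ?_, ?_⟩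
    · rw [hcard, ← hord, hr1, hr2, hs1, hs2]; ring
    by_contra hne
    obtain ⟨⟨g, hgab⟩, hg⟩ :
        ∃ x : (Subgroup.zpowers a ⊓ Subgroup.zpowers b : Subgroup G), orderOf x = p := by
      apply exists_prime_orderOf_dvd_card'
      rcases (hG.to_subgroup (Subgroup.zpowers a ⊓ Subgroup.zpowers b)).card_eq_or_dvd with h | h
      · exact absurd (Subgroup.card_eq_one.mp h) hne
      · exact h
    rw [Subgroup.orderOf_mk] at hg
    obtain ⟨hga, hgb⟩ := Subgroup.mem_inf.mp hgab
    have hgp : g ^ p = 1 := by rw [← hg]; exact pow_orderOf_eq_one g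
    have hsoc : ∀ (x : G) (t : ℕ), orderOf x = p ^ (t + 2) → g ∈ Subgroup.zpowers x →
        Subgroup.zpowers g = Subgroup.zpowers ((x ^ p ^ t) ^ p) := by
      intro x t hx hgx
      rw [← pow_mul, ← pow_succ]
      apply Subgroup.eq_of_le_of_card_ge
      · exact Subgroup.zpowers_le.mpr (QP_mem_socle x g (t + 1) hx hgx hgp)
      · rw [Nat.card_zpowers, Nat.card_zpowers, hg,
          orderOf_pow_of_dvd (by positivity) (by rw [hx]; exact pow_dvd_pow _ (by omega)), hx,
          Nat.pow_div (by omega) (by omega)]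
        simp
    have hu := hsoc a r hr2 hga
    have hv := hsoc b s hs2 hgb
    set u := a ^ p ^ r with hudef
    set v := b ^ p ^ s with hvdef
    have hpow : ∀ (x : G) (t : ℕ), orderOf (QuotientGroup.mk' E x) = p ^ (t + 1) →
        (QuotientGroup.mk' E (x ^ p ^ t)) ^ p = 1 ∧ QuotientGroup.mk' E (x ^ p ^ t) ≠ 1 := by
      intro x t hx
      rw [map_pow]
      constructor
      · rw [← pow_mul, ← pow_succ, ← hx, pow_orderOf_eq_one]
      · intro h
        have := orderOf_dvd_of_pow_eq_one h
        rw [hx, Nat.pow_dvd_pow_iff_le_right hp1] at this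
        omega
    obtain ⟨hup, hu1⟩ := hpow a r hr1
    obtain ⟨hvp, hv1⟩ := hpow b s hs1
    have huv : Commute (QuotientGroup.mk' E u) (QuotientGroup.mk' E v) := by
      obtain ⟨F, -, -, hFc, -, -, -, -, hFp⟩ :=
        QP_bottom hp3 (G ⧸ E) hGq (by simpa using hQQ 1) hQc
      have := IsPGroup.isMulCommutative_of_card_eq_prime_sq hFc
      exact congrArg Subtype.val (this.is_comm.comm
        (⟨_, (hFp _).mpr hup⟩ : F) ⟨_, (hFp _).mpr hvp⟩)
    have hua : QuotientGroup.mk' E u ∈ Subgroup.zpowers (QuotientGroup.mk' E a) := by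
      rw [hudef, map_pow]; exact Subgroup.pow_mem _ (Subgroup.mem_zpowers _) _
    have hvb : QuotientGroup.mk' E v ∈ Subgroup.zpowers (QuotientGroup.mk' E b) := by
      rw [hvdef, map_pow]; exact Subgroup.pow_mem _ (Subgroup.mem_zpowers _) _
    rcases QP_centralize E hEc z hzE hzc hzp hEz u v with ⟨i, hi⟩ | ⟨i, hi⟩
    · have := QP_inj_aux hp3 E z hzE hzc hEz hEp u v huv i hi
        (by rw [← hu, hv]; exact Subgroup.mem_zpowers _)
      have hm := Subgroup.mem_inf.mpr ⟨(Subgroup.zpowers_le.mpr hua) this, hvb⟩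
      rw [hinf, Subgroup.mem_bot] at hm
      exact hv1 hm
    · have := QP_inj_aux hp3 E z hzE hzc hEz hEp v u huv.symm i hi
        (by rw [← hv, hu]; exact Subgroup.mem_zpowers _)
      have hm := Subgroup.mem_inf.mpr ⟨hua, (Subgroup.zpowers_le.mpr hvb) this⟩
      rw [hinf, Subgroup.mem_bot] at hm
      exact hu1 hm

theorem Q_pgroup_product_of_two_cyclic (p : ℕ) (hp : p.Prime) (hp3 : 3 < p)
    (G : Type*) [Group G] [Finite G] (hpG : IsPGroup p G)
    (h : ∀ m : ℕ, m ∣ Monoid.exponent G → Nat.card {x : G // x ^ m = 1} ≤ m ^ 2) :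
    ∃ A B : Subgroup G, IsCyclic A ∧ IsCyclic B ∧ A ⊓ B = ⊥ ∧
      ∀ g : G, ∃ a ∈ A, ∃ b ∈ B, g = a * b := by
  have : Fact p.Prime := ⟨hp⟩
  have hQ : ∀ k : ℕ, Nat.card {x : G // x ^ p ^ k = 1} ≤ (p ^ k) ^ 2 := by
    intro k
    obtain ⟨N, hN⟩ := isPGroup_iff_exponent_eq_pow.mp hpG
    rcases le_total k N with hk | hk
    · exact h _ (by rw [hN]; exact pow_dvd_pow _ hk)
    · have h1 := h (p ^ N) (by rw [hN])
      have h2 : Nat.card {x : G // x ^ p ^ k = 1} ≤ Nat.card {x : G // x ^ p ^ N = 1} := by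
        apply Nat.card_le_card_of_injective
          (fun x => (⟨x.1, by rw [← hN]; exact Monoid.pow_exponent_eq_one _⟩ :
            {x : G // x ^ p ^ N = 1}))
        intro x y hxy
        exact Subtype.ext (Subtype.mk.inj hxy)
      refine (h2.trans h1).trans ?_
      gcongr
      exact hp.one_lt.le
  obtain ⟨a, b, hab, hinf⟩ := QP_main hp3 _ G rfl hpG hQ
  refine ⟨Subgroup.zpowers a, Subgroup.zpowers b, inferInstance, inferInstance, hinf, ?_⟩
  have hcomp := Subgroup.isComplement'_of_card_mul_and_disjoint
    (H := Subgroup.zpowers a) (K := Subgroup.zpowers b)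
    (by rw [Nat.card_zpowers, Nat.card_zpowers, hab]) (disjoint_iff.mpr hinf)
  intro g
  obtain ⟨⟨x, y⟩, hxy⟩ := hcomp.2 g
  exact ⟨x, x.2, y, y.2, hxy.symm⟩
end
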